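/- Fix Ω₀ > 4/√π, set Ω(ε) = Ω₀/ε, R₀ = √(1 − 4/(√π Ω₀)), and T_ε = {x ∈ B₁ : |x| ≤ R₀ − ε^{1/3}}. There exist constants C = C(Ω₀) > 0, C′ = C′(Ω₀) > 0 and ε₀ > 0 such that for all 0 < ε < ε₀, every GP minimizer Ψ of E^GP_{ε,Ω(ε)}, and every x ∈ T_ε, |Ψ(x)|² ≤ C ε^{1/6} √(|log ε|) · exp(−C′ dist(x, ∂T_ε)² / ε^{2/3}); i.e., the density is exponentially small in the hole. -/

import Mathlib

open MeasureTheory Real Filter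

noncomputable section

/-- Points of the plane. -/
abbrev Pt : Type := EuclideanSpace ℝ (Fin 2)

/-- The open unit disc. -/
def B1 : Set Pt := Metric.ball 0 1

/-- First partial derivative of a complex-valued function. -/
def pd1 (Ψ : Pt → ℂ) (x : Pt) : ℂ := fderiv ℝ Ψ x (EuclideanSpace.single 0 1)

/-- Second partial derivative of a complex-valued function. -/
def pd2 (Ψ : Pt → ℂ) (x : Pt) : ℂ := fderiv ℝ Ψ x (EuclideanSpace.single 1 1)

/-- Angular momentum operator `L = -i (x₁ ∂₂ - x₂ ∂₁)`. -/
def angMom (Ψ : Pt → ℂ) (x : Pt) : ℂ :=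
  -Complex.I * ((x 0 : ℂ) * pd2 Ψ x - (x 1 : ℂ) * pd1 Ψ x)

/-- The Gross-Pitaevskii energy density `|∇Ψ|² - Ω conj(Ψ) LΨ + |Ψ|⁴/ε²`. -/
def gpDensity (ε Ω : ℝ) (Ψ : Pt → ℂ) (x : Pt) : ℝ :=
  ‖pd1 Ψ x‖ ^ 2 + ‖pd2 Ψ x‖ ^ 2
    - Ω * (starRingEnd ℂ (Ψ x) * angMom Ψ x).re
    + ‖Ψ x‖ ^ 4 / ε ^ 2

/-- The Gross-Pitaevskii functional on the unit disc. -/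
def gpEnergy (ε Ω : ℝ) (Ψ : Pt → ℂ) : ℝ := ∫ x in B1, gpDensity ε Ω Ψ x

/-- Admissible (H¹, normalized) wave functions. -/
def gpAdm (Ψ : Pt → ℂ) : Prop :=
  DifferentiableOn ℝ Ψ B1 ∧
  IntegrableOn (fun x => ‖Ψ x‖ ^ 2) B1 ∧
  IntegrableOn (fun x => ‖pd1 Ψ x‖ ^ 2 + ‖pd2 Ψ x‖ ^ 2) B1 ∧
  IntegrableOn (fun x => ‖Ψ x‖ ^ 4) B1 ∧
  IntegrableOn (fun x => (starRingEnd ℂ (Ψ x) * angMom Ψ x).re) B1 ∧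
  (∫ x in B1, ‖Ψ x‖ ^ 2) = 1

/-- The GP ground-state energy: infimum of the functional over normalized functions. -/
def gpGround (ε Ω : ℝ) : ℝ := sInf {E | ∃ Ψ : Pt → ℂ, gpAdm Ψ ∧ E = gpEnergy ε Ω Ψ}

/-- A GP minimizer: a normalized admissible function attaining the infimum. -/
def IsGPMinimizer (ε Ω : ℝ) (Ψ : Pt → ℂ) : Prop :=
  gpAdm Ψ ∧ gpEnergy ε Ω Ψ = gpGround ε Ω

/-- The Thomas-Fermi functional. -/
def tfEnergy (Ω₀ : ℝ) (ρ : Pt → ℝ) : ℝ :=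
  ∫ x in B1, ((ρ x) ^ 2 - Ω₀ ^ 2 * ‖x‖ ^ 2 * ρ x / 4)

/-- Admissible TF densities: nonnegative, in L²(B₁), of total mass one. -/
def tfAdm (ρ : Pt → ℝ) : Prop :=
  IntegrableOn ρ B1 ∧ IntegrableOn (fun x => (ρ x) ^ 2) B1 ∧
  (∀ᵐ x ∂(volume.restrict B1), 0 ≤ ρ x) ∧ (∫ x in B1, ρ x) = 1

/-- The TF ground-state energy. -/
def tfGround (Ω₀ : ℝ) : ℝ := sInf {E | ∃ ρ : Pt → ℝ, tfAdm ρ ∧ E = tfEnergy Ω₀ ρ}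

/-- Radius of the TF "hole". -/
def R0 (Ω₀ : ℝ) : ℝ := Real.sqrt (1 - 4 / (Real.sqrt π * Ω₀))

/-- The TF minimizer. -/
def rhoTF (Ω₀ : ℝ) (x : Pt) : ℝ :=
  if Ω₀ ≤ 4 / Real.sqrt π then 1 / π - Ω₀ ^ 2 / 16 * (1 - 2 * ‖x‖ ^ 2)
  else max 0 (Ω₀ ^ 2 / 8 * (‖x‖ ^ 2 - 1) + Ω₀ / (2 * Real.sqrt π))

/-! ### Basic facts -/

abbrev e0 : Pt := EuclideanSpace.single 0 1
abbrev e1 : Pt := EuclideanSpace.single 1 1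

/-- Covariant derivatives. -/
def Da (Ω : ℝ) (ψ : Pt → ℂ) (x : Pt) : ℂ := pd1 ψ x + Complex.I * ((Ω / 2 * x 1 : ℝ) : ℂ) * ψ x
def Db (Ω : ℝ) (ψ : Pt → ℂ) (x : Pt) : ℂ := pd2 ψ x - Complex.I * ((Ω / 2 * x 0 : ℝ) : ℂ) * ψ x
def kin (Ω : ℝ) (ψ : Pt → ℂ) (x : Pt) : ℝ := ‖Da Ω ψ x‖ ^ 2 + ‖Db Ω ψ x‖ ^ 2
def VV (Ω₀ : ℝ) (x : Pt) : ℝ := Ω₀ ^ 2 / 8 * (‖x‖ ^ 2 - R0 Ω₀ ^ 2)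

structure Pre (ψ : Pt → ℂ) : Prop where
  diff : DifferentiableOn ℝ ψ B1
  i2 : IntegrableOn (fun x => ‖ψ x‖ ^ 2) B1
  ig : IntegrableOn (fun x => ‖pd1 ψ x‖ ^ 2 + ‖pd2 ψ x‖ ^ 2) B1
  i4 : IntegrableOn (fun x => ‖ψ x‖ ^ 4) B1

lemma measB1 : MeasurableSet B1 := Metric.isOpen_ball.measurableSet

lemma isOpenB1 : IsOpen B1 := Metric.isOpen_ball

lemma mem_B1 {x : Pt} : x ∈ B1 ↔ ‖x‖ < 1 := by simp [B1]

lemma norm_sq_pt (x : Pt) : ‖x‖ ^ 2 = x 0 ^ 2 + x 1 ^ 2 := by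
  rw [EuclideanSpace.norm_sq_eq]; simp [Fin.sum_univ_two]

lemma aeB1 {p : Pt → Prop} (h : ∀ x ∈ B1, p x) : ∀ᵐ x ∂(volume.restrict B1), p x :=
  (ae_restrict_iff' measB1).2 (Eventually.of_forall h)

lemma volB1_real : volume.real B1 = π := by
  unfold B1 Measure.real
  rw [EuclideanSpace.volume_ball_fin_two]
  simp [ENNReal.toReal_ofReal Real.pi_pos.le]

lemma volB1 : volume B1 = ENNReal.ofReal π := by
  unfold B1
  rw [EuclideanSpace.volume_ball_fin_two]
  simp

instance finB1 : IsFiniteMeasure (volume.restrict B1) :=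
  ⟨by simp [volB1]⟩

lemma Pre.meas {ψ : Pt → ℂ} (h : Pre ψ) : AEStronglyMeasurable ψ (volume.restrict B1) :=
  h.diff.continuousOn.aestronglyMeasurable measB1

lemma meas_pd1 (ψ : Pt → ℂ) : Measurable (pd1 ψ) := measurable_fderiv_apply_const ℝ ψ _
lemma meas_pd2 (ψ : Pt → ℂ) : Measurable (pd2 ψ) := measurable_fderiv_apply_const ℝ ψ _

lemma meas_coord (i : Fin 2) : Measurable (fun x : Pt => x i) := by
  have : Continuous (fun x : Pt => x i) := by fun_prop
  exact this.measurable

lemma Da_meas {ψ : Pt → ℂ} (Ω : ℝ) (h : AEStronglyMeasurable ψ (volume.restrict B1)) :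
    AEStronglyMeasurable (Da Ω ψ) (volume.restrict B1) := by
  unfold Da
  refine (meas_pd1 ψ).aestronglyMeasurable.add (AEStronglyMeasurable.mul ?_ h)
  have : Continuous (fun x : Pt => Complex.I * ((Ω / 2 * x 1 : ℝ) : ℂ)) := by fun_prop
  exact this.aestronglyMeasurable

lemma Db_meas {ψ : Pt → ℂ} (Ω : ℝ) (h : AEStronglyMeasurable ψ (volume.restrict B1)) :
    AEStronglyMeasurable (Db Ω ψ) (volume.restrict B1) := by
  unfold Db
  refine (meas_pd2 ψ).aestronglyMeasurable.sub (AEStronglyMeasurable.mul ?_ h)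
  have : Continuous (fun x : Pt => Complex.I * ((Ω / 2 * x 0 : ℝ) : ℂ)) := by fun_prop
  exact this.aestronglyMeasurable

lemma kin_meas {ψ : Pt → ℂ} (Ω : ℝ) (h : AEStronglyMeasurable ψ (volume.restrict B1)) :
    AEStronglyMeasurable (kin Ω ψ) (volume.restrict B1) :=
  ((Da_meas Ω h).norm.pow 2).add ((Db_meas Ω h).norm.pow 2)

lemma norm_add_sq_le_two (a b : ℂ) : ‖a + b‖ ^ 2 ≤ 2 * ‖a‖ ^ 2 + 2 * ‖b‖ ^ 2 := by
  have h1 := norm_add_le a b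
  have h2 := norm_nonneg (a + b)
  nlinarith [sq_nonneg (‖a‖ - ‖b‖), norm_nonneg a, norm_nonneg b]

lemma coord_le {x : Pt} (hx : x ∈ B1) (i : Fin 2) : x i ^ 2 ≤ 1 := by
  have h1 := norm_sq_pt x
  have h2 := mem_B1.1 hx
  have h3 := norm_nonneg x
  fin_cases i
  · show x 0 ^ 2 ≤ 1
    nlinarith [sq_nonneg (x 0), sq_nonneg (x 1)]
  · show x 1 ^ 2 ≤ 1
    nlinarith [sq_nonneg (x 0), sq_nonneg (x 1)]

lemma norm_I_mul (r : ℝ) (z : ℂ) : ‖Complex.I * (r : ℂ) * z‖ ^ 2 = r ^ 2 * ‖z‖ ^ 2 := by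
  simp [mul_pow]

lemma kin_le {ψ : Pt → ℂ} (Ω : ℝ) {x : Pt} (hx : x ∈ B1) :
    kin Ω ψ x ≤ 2 * (‖pd1 ψ x‖ ^ 2 + ‖pd2 ψ x‖ ^ 2) + Ω ^ 2 * ‖ψ x‖ ^ 2 := by
  unfold kin Da Db
  have h1 := norm_add_sq_le_two (pd1 ψ x) (Complex.I * ((Ω / 2 * x 1 : ℝ) : ℂ) * ψ x)
  have h2 := norm_add_sq_le_two (pd2 ψ x) (-(Complex.I * ((Ω / 2 * x 0 : ℝ) : ℂ) * ψ x))
  rw [← sub_eq_add_neg, norm_neg, norm_I_mul] at h2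
  rw [norm_I_mul] at h1
  have h3 := coord_le hx 0
  have h4 := coord_le hx 1
  have h5 : 0 ≤ Ω ^ 2 * ‖ψ x‖ ^ 2 := by positivity
  have h6 : (Ω / 2 * x 1) ^ 2 * ‖ψ x‖ ^ 2 ≤ Ω ^ 2 * ‖ψ x‖ ^ 2 / 4 := by
    have := mul_le_mul_of_nonneg_left h4 h5
    nlinarith
  have h7 : (Ω / 2 * x 0) ^ 2 * ‖ψ x‖ ^ 2 ≤ Ω ^ 2 * ‖ψ x‖ ^ 2 / 4 := by
    have := mul_le_mul_of_nonneg_left h3 h5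
    nlinarith
  linarith

lemma grad_le {ψ : Pt → ℂ} (Ω : ℝ) {x : Pt} (hx : x ∈ B1) :
    (‖pd1 ψ x‖ ^ 2 + ‖pd2 ψ x‖ ^ 2) ≤ 2 * kin Ω ψ x + Ω ^ 2 * ‖ψ x‖ ^ 2 := by
  unfold kin
  have h1 := norm_add_sq_le_two (Da Ω ψ x) (-(Complex.I * ((Ω / 2 * x 1 : ℝ) : ℂ) * ψ x))
  have h2 := norm_add_sq_le_two (Db Ω ψ x) (Complex.I * ((Ω / 2 * x 0 : ℝ) : ℂ) * ψ x)
  rw [← sub_eq_add_neg, norm_neg, norm_I_mul] at h1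
  rw [norm_I_mul] at h2
  have e1 : Da Ω ψ x - Complex.I * ((Ω / 2 * x 1 : ℝ) : ℂ) * ψ x = pd1 ψ x := by
    unfold Da; ring
  have e2 : Db Ω ψ x + Complex.I * ((Ω / 2 * x 0 : ℝ) : ℂ) * ψ x = pd2 ψ x := by
    unfold Db; ring
  rw [e1] at h1
  rw [e2] at h2
  have h3 := coord_le hx 0
  have h4 := coord_le hx 1
  have h5 : 0 ≤ Ω ^ 2 * ‖ψ x‖ ^ 2 := by positivity
  have h6 : (Ω / 2 * x 1) ^ 2 * ‖ψ x‖ ^ 2 ≤ Ω ^ 2 * ‖ψ x‖ ^ 2 / 4 := by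
    have := mul_le_mul_of_nonneg_left h4 h5
    nlinarith
  have h7 : (Ω / 2 * x 0) ^ 2 * ‖ψ x‖ ^ 2 ≤ Ω ^ 2 * ‖ψ x‖ ^ 2 / 4 := by
    have := mul_le_mul_of_nonneg_left h3 h5
    nlinarith
  linarith

lemma kin_nonneg (Ω : ℝ) (ψ : Pt → ℂ) (x : Pt) : 0 ≤ kin Ω ψ x := by unfold kin; positivity

lemma Pre.ikin {ψ : Pt → ℂ} (h : Pre ψ) (Ω : ℝ) : IntegrableOn (kin Ω ψ) B1 := by
  refine Integrable.mono' ((h.ig.const_mul 2).add (h.i2.const_mul (Ω ^ 2))) (kin_meas Ω h.meas) ?_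
  refine aeB1 fun x hx => ?_
  rw [Real.norm_of_nonneg (kin_nonneg _ _ _)]
  exact kin_le Ω hx

lemma Pre.of_kin {ψ : Pt → ℂ} (Ω : ℝ) (hd : DifferentiableOn ℝ ψ B1)
    (i2 : IntegrableOn (fun x => ‖ψ x‖ ^ 2) B1) (i4 : IntegrableOn (fun x => ‖ψ x‖ ^ 4) B1)
    (ik : IntegrableOn (kin Ω ψ) B1) : Pre ψ := by
  refine ⟨hd, i2, ?_, i4⟩
  refine Integrable.mono' ((ik.const_mul 2).add (i2.const_mul (Ω ^ 2))) ?_ ?_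
  · exact (((meas_pd1 ψ).norm.pow_const 2).add ((meas_pd2 ψ).norm.pow_const 2)).aestronglyMeasurable
  · refine aeB1 fun x hx => ?_
    rw [Real.norm_of_nonneg (by positivity)]
    exact grad_le Ω hx

lemma Pre.iang {ψ : Pt → ℂ} (h : Pre ψ) :
    IntegrableOn (fun x => (starRingEnd ℂ (ψ x) * angMom ψ x).re) B1 := by
  refine Integrable.mono' (h.ig.add h.i2) ?_ ?_
  · have m1 : AEStronglyMeasurable (angMom ψ) (volume.restrict B1) := by
      unfold angMom
      have c0 : Continuous (fun x : Pt => ((x 0 : ℝ) : ℂ)) := by fun_prop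
      have c1 : Continuous (fun x : Pt => ((x 1 : ℝ) : ℂ)) := by fun_prop
      exact (((c0.measurable.mul (meas_pd2 ψ)).sub
        (c1.measurable.mul (meas_pd1 ψ))).const_mul _).aestronglyMeasurable
    have m2 : AEStronglyMeasurable (fun x => starRingEnd ℂ (ψ x)) (volume.restrict B1) :=
      Complex.continuous_conj.comp_aestronglyMeasurable h.meas
    exact Complex.continuous_re.comp_aestronglyMeasurable (m2.mul m1)
  · refine aeB1 fun x hx => ?_
    have h0 : ‖(starRingEnd ℂ (ψ x) * angMom ψ x).re‖ ≤ ‖ψ x‖ * ‖angMom ψ x‖ := by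
      refine (Complex.abs_re_le_norm _).trans ?_
      simp
    have h1 : ‖angMom ψ x‖ ≤ ‖pd1 ψ x‖ + ‖pd2 ψ x‖ := by
      unfold angMom
      rw [norm_mul]
      simp only [norm_neg, Complex.norm_I, one_mul]
      refine (norm_sub_le _ _).trans ?_
      rw [norm_mul, norm_mul, Complex.norm_real, Complex.norm_real, Real.norm_eq_abs, Real.norm_eq_abs]
      have a0 : |x 0| ≤ 1 := by rw [← sq_le_one_iff_abs_le_one]; exact coord_le hx 0
      have a1 : |x 1| ≤ 1 := by rw [← sq_le_one_iff_abs_le_one]; exact coord_le hx 1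
      nlinarith [norm_nonneg (pd1 ψ x), norm_nonneg (pd2 ψ x)]
    have h2 := mul_le_mul_of_nonneg_left h1 (norm_nonneg (ψ x))
    simp only [Pi.add_apply]
    nlinarith [sq_nonneg (‖pd1 ψ x‖ - ‖ψ x‖ / 2), sq_nonneg (‖pd2 ψ x‖ - ‖ψ x‖ / 2),
      sq_nonneg (‖ψ x‖)]

lemma gpAdm_iff {ψ : Pt → ℂ} : gpAdm ψ ↔ Pre ψ ∧ (∫ x in B1, ‖ψ x‖ ^ 2) = 1 := by
  constructor
  · rintro ⟨a, b, c, d, e, f⟩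
    exact ⟨⟨a, b, c, d⟩, f⟩
  · rintro ⟨h, f⟩
    exact ⟨h.diff, h.i2, h.ig, h.i4, h.iang, f⟩

lemma kin_expand (Ω : ℝ) (ψ : Pt → ℂ) (x : Pt) :
    kin Ω ψ x = ‖pd1 ψ x‖ ^ 2 + ‖pd2 ψ x‖ ^ 2 - Ω * (starRingEnd ℂ (ψ x) * angMom ψ x).re
      + Ω ^ 2 / 4 * ‖x‖ ^ 2 * ‖ψ x‖ ^ 2 := by
  unfold kin Da Db angMom
  rw [norm_sq_pt]
  simp only [← Complex.normSq_eq_norm_sq, Complex.normSq_apply]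
  simp
  ring

lemma dens_eq {ε : ℝ} (hε : ε ≠ 0) (Ω₀ : ℝ) (ψ : Pt → ℂ) (x : Pt) :
    ε ^ 2 * gpDensity ε (Ω₀ / ε) ψ x = ε ^ 2 * kin (Ω₀ / ε) ψ x - 2 * (VV Ω₀ x * ‖ψ x‖ ^ 2)
      + ‖ψ x‖ ^ 4 - Ω₀ ^ 2 * R0 Ω₀ ^ 2 / 4 * ‖ψ x‖ ^ 2 := by
  rw [kin_expand]
  unfold gpDensity VV
  field_simp
  ring

/-- bounded continuous factor -/
lemma int_mul_bdd {w f : Pt → ℝ} {M : ℝ} (hf : IntegrableOn f B1)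
    (hw : AEStronglyMeasurable w (volume.restrict B1)) (hb : ∀ x ∈ B1, |w x| ≤ M) :
    IntegrableOn (fun x => w x * f x) B1 :=
  Integrable.bdd_mul hf hw (aeB1 hb)

lemma VV_cont (Ω₀ : ℝ) : Continuous (VV Ω₀) := by unfold VV; fun_prop

def Qf (ε Ω₀ : ℝ) (ψ : Pt → ℂ) : ℝ :=
  ε ^ 2 * (∫ x in B1, kin (Ω₀ / ε) ψ x) - 2 * ∫ x in B1, VV Ω₀ x * ‖ψ x‖ ^ 2
def If (ψ : Pt → ℂ) : ℝ := ∫ x in B1, ‖ψ x‖ ^ 4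
def Nf (ψ : Pt → ℂ) : ℝ := ∫ x in B1, ‖ψ x‖ ^ 2

lemma R0_sq_le {Ω₀ : ℝ} (h : 4 / Real.sqrt π < Ω₀) :
    R0 Ω₀ ^ 2 = 1 - 4 / (Real.sqrt π * Ω₀) ∧ 0 < R0 Ω₀ ∧ R0 Ω₀ < 1 ∧ 0 < Ω₀ := by
  have hp : 0 < Real.sqrt π := Real.sqrt_pos.2 Real.pi_pos
  have h0 : 0 < Ω₀ := lt_trans (by positivity) h
  have h1 : 4 / (Real.sqrt π * Ω₀) < 1 := by
    rw [div_lt_iff₀ (by positivity)]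
    rw [div_lt_iff₀ hp] at h
    linarith
  have h2 : 0 < 4 / (Real.sqrt π * Ω₀) := by positivity
  refine ⟨?_, ?_, ?_, h0⟩
  · unfold R0; rw [Real.sq_sqrt (by linarith)]
  · unfold R0; exact Real.sqrt_pos.2 (by linarith)
  · unfold R0
    rw [Real.sqrt_lt' one_pos]; linarith

lemma VV_bdd {Ω₀ : ℝ} (h : 4 / Real.sqrt π < Ω₀) {x : Pt} (hx : x ∈ B1) :
    |VV Ω₀ x| ≤ Ω₀ ^ 2 / 8 := by
  obtain ⟨_, h1, h2, h3⟩ := R0_sq_le h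
  have h4 := mem_B1.1 hx
  unfold VV
  rw [abs_mul, abs_of_nonneg (by positivity : 0 ≤ Ω₀ ^ 2 / 8)]
  have : |‖x‖ ^ 2 - R0 Ω₀ ^ 2| ≤ 1 := by
    rw [abs_le]
    constructor <;> nlinarith [norm_nonneg x]
  nlinarith [sq_nonneg Ω₀]

lemma Pre.iV {ψ : Pt → ℂ} (hp : Pre ψ) {Ω₀ : ℝ} (h : 4 / Real.sqrt π < Ω₀) :
    IntegrableOn (fun x => VV Ω₀ x * ‖ψ x‖ ^ 2) B1 :=
  int_mul_bdd hp.i2 (VV_cont Ω₀).aestronglyMeasurable fun _ hx => VV_bdd h hx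

lemma energy_eq {ε Ω₀ : ℝ} (hε : ε ≠ 0) (h : 4 / Real.sqrt π < Ω₀) {ψ : Pt → ℂ} (hp : Pre ψ) :
    ε ^ 2 * gpEnergy ε (Ω₀ / ε) ψ = Qf ε Ω₀ ψ + If ψ - Ω₀ ^ 2 * R0 Ω₀ ^ 2 / 4 * Nf ψ := by
  unfold gpEnergy Qf If Nf
  rw [← integral_const_mul]
  simp_rw [dens_eq hε]
  have i1 := (hp.ikin (Ω₀ / ε)).const_mul (ε ^ 2)
  have i2 := (hp.iV h).const_mul 2
  rw [integral_sub, integral_add, integral_sub, integral_const_mul, integral_const_mul,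
    integral_const_mul]
  · exact i1
  · exact i2
  · exact i1.sub i2
  · exact hp.i4
  · exact (i1.sub i2).add hp.i4
  · exact hp.i2.const_mul _

lemma H_lower {ε Ω₀ : ℝ} (h : 4 / Real.sqrt π < Ω₀) {ψ : Pt → ℂ} (hp : gpAdm ψ) :
    -(Ω₀ ^ 2 / 4) ≤ Qf ε Ω₀ ψ + If ψ := by
  obtain ⟨hp, hm⟩ := gpAdm_iff.1 hp
  have h1 : 0 ≤ ∫ x in B1, kin (Ω₀ / ε) ψ x := integral_nonneg fun x => kin_nonneg _ _ _
  have h2 : 0 ≤ If ψ := integral_nonneg fun x => by positivity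
  have h3 : ∫ x in B1, VV Ω₀ x * ‖ψ x‖ ^ 2 ≤ ∫ x in B1, Ω₀ ^ 2 / 8 * ‖ψ x‖ ^ 2 := by
    refine setIntegral_mono_on (hp.iV h) (hp.i2.const_mul _) measB1 fun x hx => ?_
    exact mul_le_mul_of_nonneg_right ((le_abs_self _).trans (VV_bdd h hx)) (by positivity)
  rw [integral_const_mul, hm] at h3
  unfold Qf
  nlinarith [mul_nonneg (sq_nonneg ε) h1]

lemma min_le {ε Ω₀ : ℝ} (hε : 0 < ε) (h : 4 / Real.sqrt π < Ω₀) {Ψ ψ : Pt → ℂ}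
    (hΨ : IsGPMinimizer ε (Ω₀ / ε) Ψ) (hp : gpAdm ψ) :
    Qf ε Ω₀ Ψ + If Ψ ≤ Qf ε Ω₀ ψ + If ψ := by
  have e1 := energy_eq hε.ne' h (gpAdm_iff.1 hΨ.1).1
  have e2 := energy_eq hε.ne' h (gpAdm_iff.1 hp).1
  have n1 : Nf Ψ = 1 := (gpAdm_iff.1 hΨ.1).2
  have n2 : Nf ψ = 1 := (gpAdm_iff.1 hp).2
  have hle : gpGround ε (Ω₀ / ε) ≤ gpEnergy ε (Ω₀ / ε) ψ := by
    refine csInf_le ⟨(-(Ω₀ ^ 2 / 4) - Ω₀ ^ 2 * R0 Ω₀ ^ 2 / 4) / ε ^ 2, ?_⟩ ⟨ψ, hp, rfl⟩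
    rintro E ⟨φ, hφ, rfl⟩
    have e3 := energy_eq hε.ne' h (gpAdm_iff.1 hφ).1
    have n3 : Nf φ = 1 := (gpAdm_iff.1 hφ).2
    have := H_lower (ε := ε) h hφ
    rw [div_le_iff₀ (by positivity)]
    rw [n3] at e3
    linarith
  rw [← hΨ.2] at hle
  have := mul_le_mul_of_nonneg_left hle (sq_nonneg ε)
  rw [n1] at e1
  rw [n2] at e2
  linarith

/-! ### scaling -/

lemma pd1_smul {ψ : Pt → ℂ} {x : Pt} (hd : DifferentiableAt ℝ ψ x) {g : Pt → ℝ}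
    (hg : DifferentiableAt ℝ g x) :
    pd1 (fun y => (g y : ℂ) * ψ y) x = (g x : ℂ) * pd1 ψ x + (fderiv ℝ g x e0 : ℝ) * ψ x := by
  unfold pd1
  have h1 : HasFDerivAt (fun y => (g y : ℂ)) (Complex.ofRealCLM.comp (fderiv ℝ g x)) x :=
    Complex.ofRealCLM.hasFDerivAt.comp x hg.hasFDerivAt
  have h2 : HasFDerivAt (fun y => (g y : ℂ) * ψ y) _ x := h1.mul hd.hasFDerivAt
  rw [h2.fderiv]
  simp
  ring

lemma pd2_smul {ψ : Pt → ℂ} {x : Pt} (hd : DifferentiableAt ℝ ψ x) {g : Pt → ℝ}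
    (hg : DifferentiableAt ℝ g x) :
    pd2 (fun y => (g y : ℂ) * ψ y) x = (g x : ℂ) * pd2 ψ x + (fderiv ℝ g x e1 : ℝ) * ψ x := by
  unfold pd2
  have h1 : HasFDerivAt (fun y => (g y : ℂ)) (Complex.ofRealCLM.comp (fderiv ℝ g x)) x :=
    Complex.ofRealCLM.hasFDerivAt.comp x hg.hasFDerivAt
  have h2 : HasFDerivAt (fun y => (g y : ℂ) * ψ y) _ x := h1.mul hd.hasFDerivAt
  rw [h2.fderiv]
  simp
  ring

lemma Da_smul (Ω : ℝ) {ψ : Pt → ℂ} {x : Pt} (hd : DifferentiableAt ℝ ψ x) {g : Pt → ℝ}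
    (hg : DifferentiableAt ℝ g x) :
    Da Ω (fun y => (g y : ℂ) * ψ y) x = (g x : ℂ) * Da Ω ψ x + (fderiv ℝ g x e0 : ℝ) * ψ x := by
  unfold Da; rw [pd1_smul hd hg]; ring

lemma Db_smul (Ω : ℝ) {ψ : Pt → ℂ} {x : Pt} (hd : DifferentiableAt ℝ ψ x) {g : Pt → ℝ}
    (hg : DifferentiableAt ℝ g x) :
    Db Ω (fun y => (g y : ℂ) * ψ y) x = (g x : ℂ) * Db Ω ψ x + (fderiv ℝ g x e1 : ℝ) * ψ x := by
  unfold Db; rw [pd2_smul hd hg]; ring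

def Xa (Ω : ℝ) (ψ : Pt → ℂ) (x : Pt) : ℝ := (starRingEnd ℂ (ψ x) * Da Ω ψ x).re
def Xb (Ω : ℝ) (ψ : Pt → ℂ) (x : Pt) : ℝ := (starRingEnd ℂ (ψ x) * Db Ω ψ x).re

lemma normsq_lin (a b : ℝ) (z w : ℂ) : ‖(a : ℂ) * z + (b : ℂ) * w‖ ^ 2
    = a ^ 2 * ‖z‖ ^ 2 + 2 * a * b * (starRingEnd ℂ w * z).re + b ^ 2 * ‖w‖ ^ 2 := by
  simp only [← Complex.normSq_eq_norm_sq, Complex.normSq_apply]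
  simp
  ring

lemma kin_smul (Ω : ℝ) {ψ : Pt → ℂ} {x : Pt} (hd : DifferentiableAt ℝ ψ x) {g : Pt → ℝ}
    (hg : DifferentiableAt ℝ g x) :
    kin Ω (fun y => (g y : ℂ) * ψ y) x = g x ^ 2 * kin Ω ψ x
      + 2 * g x * (fderiv ℝ g x e0 * Xa Ω ψ x + fderiv ℝ g x e1 * Xb Ω ψ x)
      + (fderiv ℝ g x e0 ^ 2 + fderiv ℝ g x e1 ^ 2) * ‖ψ x‖ ^ 2 := by
  unfold kin Xa Xb
  rw [Da_smul Ω hd hg, Db_smul Ω hd hg, normsq_lin, normsq_lin]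
  ring

lemma diffAt {ψ : Pt → ℂ} (hd : DifferentiableOn ℝ ψ B1) {x : Pt} (hx : x ∈ B1) :
    DifferentiableAt ℝ ψ x := hd.differentiableAt (isOpenB1.mem_nhds hx)

lemma kin_const (Ω c : ℝ) {ψ : Pt → ℂ} {x : Pt} (hd : DifferentiableAt ℝ ψ x) :
    kin Ω (fun y => (c : ℂ) * ψ y) x = c ^ 2 * kin Ω ψ x := by
  have := kin_smul Ω hd (g := fun _ => c) (differentiableAt_const c)
  simpa using this

lemma scaled {ε Ω₀ : ℝ} {ψ : Pt → ℂ} (hp : Pre ψ) (c : ℝ) :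
    Pre (fun y => (c : ℂ) * ψ y) ∧ Qf ε Ω₀ (fun y => (c : ℂ) * ψ y) = c ^ 2 * Qf ε Ω₀ ψ ∧
    If (fun y => (c : ℂ) * ψ y) = c ^ 4 * If ψ ∧ Nf (fun y => (c : ℂ) * ψ y) = c ^ 2 * Nf ψ := by
  have e2 : ∀ x, ‖(c : ℂ) * ψ x‖ ^ 2 = c ^ 2 * ‖ψ x‖ ^ 2 := fun x => by
    rw [norm_mul, mul_pow]; simp
  have e4 : ∀ x, ‖(c : ℂ) * ψ x‖ ^ 4 = c ^ 4 * ‖ψ x‖ ^ 4 := fun x => by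
    rw [norm_mul, mul_pow, Complex.norm_real, Real.norm_eq_abs, ← abs_pow,
      abs_of_nonneg (by positivity : 0 ≤ c ^ 4)]
  have ek : ∀ x ∈ B1, kin (Ω₀ / ε) (fun y => (c : ℂ) * ψ y) x = c ^ 2 * kin (Ω₀ / ε) ψ x :=
    fun x hx => kin_const _ c (diffAt hp.diff hx)
  refine ⟨?_, ?_, ?_, ?_⟩
  · refine Pre.of_kin (Ω₀ / ε) (hp.diff.const_mul _) ?_ ?_ ?_
    · simp_rw [e2]; exact hp.i2.const_mul _
    · simp_rw [e4]; exact hp.i4.const_mul _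
    · exact IntegrableOn.congr_fun ((hp.ikin (Ω₀ / ε)).const_mul (c ^ 2)) (fun x hx => (ek x hx).symm) measB1
  · unfold Qf
    rw [setIntegral_congr_fun measB1 ek, integral_const_mul]
    simp_rw [e2]
    have : ∀ x, VV Ω₀ x * (c ^ 2 * ‖ψ x‖ ^ 2) = c ^ 2 * (VV Ω₀ x * ‖ψ x‖ ^ 2) := fun x => by ring
    simp_rw [this]
    rw [integral_const_mul]; ring
  · unfold If; simp_rw [e4]; rw [integral_const_mul]
  · unfold Nf; simp_rw [e2]; rw [integral_const_mul]

lemma min_scaled {ε Ω₀ : ℝ} (hε : 0 < ε) (h : 4 / Real.sqrt π < Ω₀) {Ψ ψ : Pt → ℂ}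
    (hΨ : IsGPMinimizer ε (Ω₀ / ε) Ψ) (hp : Pre ψ) (hN : 0 < Nf ψ) :
    (Qf ε Ω₀ Ψ + If Ψ) * Nf ψ ^ 2 ≤ Qf ε Ω₀ ψ * Nf ψ + If ψ := by
  obtain ⟨h1, h2, h3, h4⟩ := scaled (ε := ε) (Ω₀ := Ω₀) hp (1 / Real.sqrt (Nf ψ))
  have hs : (1 / Real.sqrt (Nf ψ)) ^ 2 = 1 / Nf ψ := by
    rw [div_pow, Real.sq_sqrt hN.le]; simp
  have hs4 : (1 / Real.sqrt (Nf ψ)) ^ 4 = 1 / Nf ψ ^ 2 := by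
    have : (1 / Real.sqrt (Nf ψ)) ^ 4 = ((1 / Real.sqrt (Nf ψ)) ^ 2) ^ 2 := by ring
    rw [this, hs]; simp
  rw [hs] at h2 h4
  rw [hs4] at h3
  have := min_le hε h hΨ (gpAdm_iff.2 ⟨h1, by
    have : Nf (fun y => ((1 / Real.sqrt (Nf ψ) : ℝ) : ℂ) * ψ y) = 1 := by
      rw [h4]; field_simp
    exact this⟩)
  rw [h2, h3] at this
  have h5 := mul_le_mul_of_nonneg_right this (sq_nonneg (Nf ψ))
  have h6 : (1 / Nf ψ * Qf ε Ω₀ ψ + 1 / Nf ψ ^ 2 * If ψ) * Nf ψ ^ 2 = Qf ε Ω₀ ψ * Nf ψ + If ψ := by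
    field_simp
  linarith


/-! ### Euler-Lagrange -/

lemma Xa_meas {ψ : Pt → ℂ} (Ω : ℝ) (h : AEStronglyMeasurable ψ (volume.restrict B1)) :
    AEStronglyMeasurable (Xa Ω ψ) (volume.restrict B1) :=
  Complex.continuous_re.comp_aestronglyMeasurable
    ((Complex.continuous_conj.comp_aestronglyMeasurable h).mul (Da_meas Ω h))

lemma Xb_meas {ψ : Pt → ℂ} (Ω : ℝ) (h : AEStronglyMeasurable ψ (volume.restrict B1)) :
    AEStronglyMeasurable (Xb Ω ψ) (volume.restrict B1) :=
  Complex.continuous_re.comp_aestronglyMeasurable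
    ((Complex.continuous_conj.comp_aestronglyMeasurable h).mul (Db_meas Ω h))

lemma re_conj_le (z w : ℂ) : |(starRingEnd ℂ z * w).re| ≤ ‖z‖ * ‖w‖ := by
  refine (Complex.abs_re_le_norm _).trans ?_
  simp

lemma Pre.iXa {ψ : Pt → ℂ} (h : Pre ψ) (Ω : ℝ) : IntegrableOn (Xa Ω ψ) B1 := by
  refine Integrable.mono' ((h.ikin Ω).add h.i2) (Xa_meas Ω h.meas) ?_
  refine aeB1 fun x hx => ?_
  have := re_conj_le (ψ x) (Da Ω ψ x)
  rw [Real.norm_eq_abs]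
  simp only [Pi.add_apply]
  unfold Xa kin
  nlinarith [sq_nonneg (‖ψ x‖ - ‖Da Ω ψ x‖), sq_nonneg (‖ψ x‖), sq_nonneg (‖Da Ω ψ x‖), sq_nonneg (‖Db Ω ψ x‖)]

lemma Pre.iXb {ψ : Pt → ℂ} (h : Pre ψ) (Ω : ℝ) : IntegrableOn (Xb Ω ψ) B1 := by
  refine Integrable.mono' ((h.ikin Ω).add h.i2) (Xb_meas Ω h.meas) ?_
  refine aeB1 fun x hx => ?_
  have := re_conj_le (ψ x) (Db Ω ψ x)
  rw [Real.norm_eq_abs]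
  simp only [Pi.add_apply]
  unfold Xb kin
  nlinarith [sq_nonneg (‖ψ x‖ - ‖Db Ω ψ x‖), sq_nonneg (‖ψ x‖), sq_nonneg (‖Da Ω ψ x‖), sq_nonneg (‖Db Ω ψ x‖)]

lemma int_lin3 {a b c : Pt → ℝ} (ha : IntegrableOn a B1) (hb : IntegrableOn b B1)
    (hc : IntegrableOn c B1) (s t : ℝ) : ∫ x in B1, (a x + s * b x + t * c x)
      = (∫ x in B1, a x) + s * (∫ x in B1, b x) + t * ∫ x in B1, c x := by
  have h1 : IntegrableOn (fun x => a x + s * b x) B1 := ha.add (hb.const_mul s)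
  rw [integral_add h1 (hc.const_mul t), integral_add ha (hb.const_mul s), integral_const_mul,
    integral_const_mul]

lemma int_lin5 {a b c d e : Pt → ℝ} (ha : IntegrableOn a B1) (hb : IntegrableOn b B1)
    (hc : IntegrableOn c B1) (hd : IntegrableOn d B1) (he : IntegrableOn e B1) (s t u v : ℝ) :
    ∫ x in B1, (a x + s * b x + t * c x + u * d x + v * e x)
      = (∫ x in B1, a x) + s * (∫ x in B1, b x) + t * (∫ x in B1, c x) + u * (∫ x in B1, d x)
        + v * ∫ x in B1, e x := by
  have h1 : IntegrableOn (fun x => a x + s * b x + t * c x) B1 :=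
    (ha.add (hb.const_mul s)).add (hc.const_mul t)
  rw [int_lin3 h1 hd he u v, int_lin3 ha hb hc]

lemma hasDerivAt_poly4 (a b c d e : ℝ) :
    HasDerivAt (fun s : ℝ => a + s * b + s ^ 2 * c + s ^ 3 * d + s ^ 4 * e) b 0 := by
  have : HasDerivAt (fun s : ℝ => a + s * b + s ^ 2 * c + s ^ 3 * d + s ^ 4 * e) _ 0 :=
    (((((hasDerivAt_id (0:ℝ)).mul_const b).const_add a).add
      (((hasDerivAt_id (0:ℝ)).pow 2).mul_const c)).add
      (((hasDerivAt_id (0:ℝ)).pow 3).mul_const d)).add (((hasDerivAt_id (0:ℝ)).pow 4).mul_const e)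
  convert this using 1
  simp

lemma poly_lin (q q1 q2 n1 n2 i i1 i2 i3 i4 : ℝ)
    (h : ∀ᶠ s in nhds (0:ℝ), (q + i) * (1 + s * n1 + s ^ 2 * n2) ^ 2 ≤
      (q + s * q1 + s ^ 2 * q2) * (1 + s * n1 + s ^ 2 * n2)
        + (i + s * i1 + s ^ 2 * i2 + s ^ 3 * i3 + s ^ 4 * i4)) :
    q1 + i1 = (q + 2 * i) * n1 := by
  let P : ℝ → ℝ := fun s => (q + s * q1 + s ^ 2 * q2) * (1 + s * n1 + s ^ 2 * n2)
        + (i + s * i1 + s ^ 2 * i2 + s ^ 3 * i3 + s ^ 4 * i4) - (q + i) * (1 + s * n1 + s ^ 2 * n2) ^ 2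
  have hmin : IsLocalMin P 0 := by
    filter_upwards [h] with s hs
    simp only [P]
    linarith
  have hN : HasDerivAt (fun s : ℝ => 1 + s * n1 + s ^ 2 * n2) n1 0 := by
    have := hasDerivAt_poly4 1 n1 n2 0 0
    simpa using this
  have hQ : HasDerivAt (fun s : ℝ => q + s * q1 + s ^ 2 * q2) q1 0 := by
    have := hasDerivAt_poly4 q q1 q2 0 0
    simpa using this
  have hI := hasDerivAt_poly4 i i1 i2 i3 i4
  have hP := ((hQ.mul hN).add hI).sub ((hN.pow 2).const_mul (q + i))
  have := IsLocalMin.hasDerivAt_eq_zero (f := P) hmin hP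
  simp at this
  linarith

structure TestFn (g : Pt → ℝ) : Prop where
  diff : Differentiable ℝ g
  bdd : ∃ M, ∀ x ∈ B1, |g x| ≤ M
  bdd0 : ∃ M, ∀ x ∈ B1, |fderiv ℝ g x e0| ≤ M
  bdd1 : ∃ M, ∀ x ∈ B1, |fderiv ℝ g x e1| ≤ M

lemma TestFn.meas {g : Pt → ℝ} (h : TestFn g) : AEStronglyMeasurable g (volume.restrict B1) :=
  h.diff.continuous.aestronglyMeasurable
lemma TestFn.meas0 {g : Pt → ℝ} (_h : TestFn g) :
    AEStronglyMeasurable (fun x => fderiv ℝ g x e0) (volume.restrict B1) :=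
  (measurable_fderiv_apply_const ℝ g _).aestronglyMeasurable
lemma TestFn.meas1 {g : Pt → ℝ} (_h : TestFn g) :
    AEStronglyMeasurable (fun x => fderiv ℝ g x e1) (volume.restrict B1) :=
  (measurable_fderiv_apply_const ℝ g _).aestronglyMeasurable

lemma TestFn.mul {g : Pt → ℝ} (h : TestFn g) {f : Pt → ℝ} (hf : IntegrableOn f B1) :
    IntegrableOn (fun x => g x * f x) B1 := by
  obtain ⟨M, hM⟩ := h.bdd
  exact int_mul_bdd hf h.meas hM
lemma TestFn.mul0 {g : Pt → ℝ} (h : TestFn g) {f : Pt → ℝ} (hf : IntegrableOn f B1) :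
    IntegrableOn (fun x => fderiv ℝ g x e0 * f x) B1 := by
  obtain ⟨M, hM⟩ := h.bdd0
  exact int_mul_bdd hf h.meas0 hM
lemma TestFn.mul1 {g : Pt → ℝ} (h : TestFn g) {f : Pt → ℝ} (hf : IntegrableOn f B1) :
    IntegrableOn (fun x => fderiv ℝ g x e1 * f x) B1 := by
  obtain ⟨M, hM⟩ := h.bdd1
  exact int_mul_bdd hf h.meas1 hM

lemma EL {ε Ω₀ : ℝ} (hε : 0 < ε) (h : 4 / Real.sqrt π < Ω₀) {Ψ : Pt → ℂ}
    (hΨ : IsGPMinimizer ε (Ω₀ / ε) Ψ) {g : Pt → ℝ} (hg : TestFn g) :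
    ε ^ 2 * (∫ x in B1, (g x * kin (Ω₀ / ε) Ψ x
        + (fderiv ℝ g x e0 * Xa (Ω₀ / ε) Ψ x + fderiv ℝ g x e1 * Xb (Ω₀ / ε) Ψ x)))
      + 2 * ((∫ x in B1, g x * ‖Ψ x‖ ^ 4) - ∫ x in B1, g x * (VV Ω₀ x * ‖Ψ x‖ ^ 2))
      = (Qf ε Ω₀ Ψ + 2 * If Ψ) * ∫ x in B1, g x * ‖Ψ x‖ ^ 2 := by
  obtain ⟨hp, hm⟩ := gpAdm_iff.1 hΨ.1
  set Ω := Ω₀ / ε with hΩ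
  let Y : Pt → ℝ := fun x => fderiv ℝ g x e0 * Xa Ω Ψ x + fderiv ℝ g x e1 * Xb Ω Ψ x
  have iY : IntegrableOn Y B1 := (hg.mul0 (hp.iXa Ω)).add (hg.mul1 (hp.iXb Ω))
  have iG : IntegrableOn (fun x => fderiv ℝ g x e0 * (fderiv ℝ g x e0 * ‖Ψ x‖ ^ 2)
      + fderiv ℝ g x e1 * (fderiv ℝ g x e1 * ‖Ψ x‖ ^ 2)) B1 :=
    (hg.mul0 (hg.mul0 hp.i2)).add (hg.mul1 (hg.mul1 hp.i2))
  have ik := hp.ikin Ω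
  have ik1 : IntegrableOn (fun x => g x * kin Ω Ψ x + Y x) B1 := (hg.mul ik).add iY
  have ik2 : IntegrableOn (fun x => g x * (g x * kin Ω Ψ x) + 2 * (g x * Y x)
    + (fderiv ℝ g x e0 * (fderiv ℝ g x e0 * ‖Ψ x‖ ^ 2)
      + fderiv ℝ g x e1 * (fderiv ℝ g x e1 * ‖Ψ x‖ ^ 2))) B1 :=
    ((hg.mul (hg.mul ik)).add ((hg.mul iY).const_mul 2)).add iG
  have iv := hp.iV h
  have iv1 := hg.mul iv
  have iv2 := hg.mul iv1
  have in1 := hg.mul hp.i2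
  have in2 := hg.mul in1
  have ii1 := hg.mul hp.i4
  have ii2 := hg.mul ii1
  have ii3 := hg.mul ii2
  have ii4 := hg.mul ii3
  let ψ : ℝ → Pt → ℂ := fun s y => ((1 + s * g y : ℝ) : ℂ) * Ψ y
  have n2 : ∀ s x, ‖ψ s x‖ ^ 2 = ‖Ψ x‖ ^ 2 + s * (2 * (g x * ‖Ψ x‖ ^ 2))
      + s ^ 2 * (g x * (g x * ‖Ψ x‖ ^ 2)) := by
    intro s x
    simp only [ψ]
    rw [norm_mul, mul_pow, Complex.norm_real, Real.norm_eq_abs, sq_abs]; ring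
  have n4 : ∀ s x, ‖ψ s x‖ ^ 4 = ‖Ψ x‖ ^ 4 + s * (4 * (g x * ‖Ψ x‖ ^ 4))
      + s ^ 2 * (6 * (g x * (g x * ‖Ψ x‖ ^ 4))) + s ^ 3 * (4 * (g x * (g x * (g x * ‖Ψ x‖ ^ 4))))
      + s ^ 4 * (g x * (g x * (g x * (g x * ‖Ψ x‖ ^ 4)))) := by
    intro s x
    have : ‖ψ s x‖ ^ 4 = (‖ψ s x‖ ^ 2) ^ 2 := by ring
    rw [this, n2]; ring
  have nk : ∀ s, ∀ x ∈ B1, kin Ω (ψ s) x = kin Ω Ψ x + s * (2 * (g x * kin Ω Ψ x + Y x))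
      + s ^ 2 * (g x * (g x * kin Ω Ψ x) + 2 * (g x * Y x)
    + (fderiv ℝ g x e0 * (fderiv ℝ g x e0 * ‖Ψ x‖ ^ 2)
      + fderiv ℝ g x e1 * (fderiv ℝ g x e1 * ‖Ψ x‖ ^ 2))) := by
    intro s x hx
    have hd : HasFDerivAt (fun y => 1 + s * g y) (s • fderiv ℝ g x) x :=
      ((hg.diff x).hasFDerivAt.const_mul s).const_add 1
    simp only [ψ]
    rw [kin_smul Ω (diffAt hp.diff hx) (g := fun y => 1 + s * g y) hd.differentiableAt, hd.fderiv]
    simp [Y]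
    ring
  have hN : ∀ s, Nf (ψ s) = 1 + s * (2 * ∫ x in B1, g x * ‖Ψ x‖ ^ 2)
      + s ^ 2 * ∫ x in B1, g x * (g x * ‖Ψ x‖ ^ 2) := by
    intro s
    unfold Nf
    simp_rw [n2]
    rw [int_lin3 hp.i2 (in1.const_mul 2) in2, hm, integral_const_mul]
  have hI : ∀ s, If (ψ s) = If Ψ + s * (4 * ∫ x in B1, g x * ‖Ψ x‖ ^ 4)
      + s ^ 2 * (6 * ∫ x in B1, g x * (g x * ‖Ψ x‖ ^ 4))
      + s ^ 3 * (4 * ∫ x in B1, g x * (g x * (g x * ‖Ψ x‖ ^ 4)))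
      + s ^ 4 * (∫ x in B1, g x * (g x * (g x * (g x * ‖Ψ x‖ ^ 4)))) := by
    intro s
    unfold If
    simp_rw [n4]
    rw [int_lin5 hp.i4 (ii1.const_mul 4) (ii2.const_mul 6) (ii3.const_mul 4) ii4]
    simp_rw [integral_const_mul]
  have hK : ∀ s, ∫ x in B1, kin Ω (ψ s) x = (∫ x in B1, kin Ω Ψ x)
      + s * (2 * ∫ x in B1, (g x * kin Ω Ψ x + Y x))
      + s ^ 2 * ∫ x in B1, (g x * (g x * kin Ω Ψ x) + 2 * (g x * Y x)
    + (fderiv ℝ g x e0 * (fderiv ℝ g x e0 * ‖Ψ x‖ ^ 2)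
      + fderiv ℝ g x e1 * (fderiv ℝ g x e1 * ‖Ψ x‖ ^ 2))) := by
    intro s
    rw [setIntegral_congr_fun measB1 (nk s)]
    rw [int_lin3 ik (ik1.const_mul 2) ik2, integral_const_mul]
  have hV : ∀ s, ∫ x in B1, VV Ω₀ x * ‖ψ s x‖ ^ 2 = (∫ x in B1, VV Ω₀ x * ‖Ψ x‖ ^ 2)
      + s * (2 * ∫ x in B1, g x * (VV Ω₀ x * ‖Ψ x‖ ^ 2))
      + s ^ 2 * ∫ x in B1, g x * (g x * (VV Ω₀ x * ‖Ψ x‖ ^ 2)) := by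
    intro s
    have : ∀ x, VV Ω₀ x * ‖ψ s x‖ ^ 2 = VV Ω₀ x * ‖Ψ x‖ ^ 2 + s * (2 * (g x * (VV Ω₀ x * ‖Ψ x‖ ^ 2)))
      + s ^ 2 * (g x * (g x * (VV Ω₀ x * ‖Ψ x‖ ^ 2))) := by
      intro x; rw [n2]; ring
    simp_rw [this]
    rw [int_lin3 iv (iv1.const_mul 2) iv2, integral_const_mul]
  have hpre : ∀ s, Pre (ψ s) := by
    intro s
    refine Pre.of_kin Ω ?_ ?_ ?_ ?_
    · refine DifferentiableOn.mul ?_ hp.diff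
      have : Differentiable ℝ (fun y => 1 + s * g y) := (hg.diff.const_mul s).const_add 1
      exact (Complex.ofRealCLM.differentiable.comp this).differentiableOn
    · simp_rw [n2]
      exact (hp.i2.add ((in1.const_mul 2).const_mul s)).add (in2.const_mul _)
    · simp_rw [n4]
      exact (((hp.i4.add ((ii1.const_mul 4).const_mul s)).add ((ii2.const_mul 6).const_mul (s ^ 2))).add
        ((ii3.const_mul 4).const_mul (s ^ 3))).add (ii4.const_mul (s ^ 4))
    · exact IntegrableOn.congr_fun ((ik.add ((ik1.const_mul 2).const_mul s)).add (ik2.const_mul (s ^ 2)))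
        (fun x hx => (nk s x hx).symm) measB1
  have hpos : ∀ᶠ s in nhds (0:ℝ), 0 < Nf (ψ s) := by
    have hc : ContinuousAt (fun s : ℝ => 1 + s * (2 * ∫ x in B1, g x * ‖Ψ x‖ ^ 2)
      + s ^ 2 * ∫ x in B1, g x * (g x * ‖Ψ x‖ ^ 2)) 0 := by fun_prop
    have := hc.eventually (lt_mem_nhds (a := 0) (by simp))
    filter_upwards [this] with s hs
    rw [hN]; exact hs
  have key := poly_lin (Qf ε Ω₀ Ψ)
    (ε ^ 2 * (2 * ∫ x in B1, (g x * kin Ω Ψ x + Y x)) - 2 * (2 * ∫ x in B1, g x * (VV Ω₀ x * ‖Ψ x‖ ^ 2)))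
    (ε ^ 2 * (∫ x in B1, (g x * (g x * kin Ω Ψ x) + 2 * (g x * Y x)
    + (fderiv ℝ g x e0 * (fderiv ℝ g x e0 * ‖Ψ x‖ ^ 2)
      + fderiv ℝ g x e1 * (fderiv ℝ g x e1 * ‖Ψ x‖ ^ 2))))
      - 2 * ∫ x in B1, g x * (g x * (VV Ω₀ x * ‖Ψ x‖ ^ 2)))
    (2 * ∫ x in B1, g x * ‖Ψ x‖ ^ 2) (∫ x in B1, g x * (g x * ‖Ψ x‖ ^ 2))
    (If Ψ) (4 * ∫ x in B1, g x * ‖Ψ x‖ ^ 4) (6 * ∫ x in B1, g x * (g x * ‖Ψ x‖ ^ 4))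
    (4 * ∫ x in B1, g x * (g x * (g x * ‖Ψ x‖ ^ 4)))
    (∫ x in B1, g x * (g x * (g x * (g x * ‖Ψ x‖ ^ 4)))) (by
      filter_upwards [hpos] with s hs
      have := min_scaled hε h hΨ (hpre s) hs
      rw [hI, hN] at this
      have hq : Qf ε Ω₀ (ψ s) = Qf ε Ω₀ Ψ + s * (ε ^ 2 * (2 * ∫ x in B1, (g x * kin Ω Ψ x + Y x)) - 2 * (2 * ∫ x in B1, g x * (VV Ω₀ x * ‖Ψ x‖ ^ 2))) + s ^ 2 * (ε ^ 2 * (∫ x in B1, (g x * (g x * kin Ω Ψ x) + 2 * (g x * Y x)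
    + (fderiv ℝ g x e0 * (fderiv ℝ g x e0 * ‖Ψ x‖ ^ 2)
      + fderiv ℝ g x e1 * (fderiv ℝ g x e1 * ‖Ψ x‖ ^ 2))))
      - 2 * ∫ x in B1, g x * (g x * (VV Ω₀ x * ‖Ψ x‖ ^ 2))) := by
        unfold Qf
        rw [← hΩ, hK, hV]
        ring
      rw [hq] at this
      exact this)
  linarith

/-! ### Radial test functions -/

lemma hasDerivAt_pos2 (t : ℝ) : HasDerivAt (fun t : ℝ => (max t 0) ^ 2) (2 * max t 0) t := by
  rcases lt_trichotomy t 0 with h | h | h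
  · have : (fun t : ℝ => (max t 0) ^ 2) =ᶠ[nhds t] fun _ => 0 := by
      filter_upwards [gt_mem_nhds h] with y hy
      rw [max_eq_right hy.le]; simp
    rw [max_eq_right h.le, mul_zero]
    exact (hasDerivAt_const t (0:ℝ)).congr_of_eventuallyEq this
  · subst h
    rw [max_self, mul_zero]
    rw [hasDerivAt_iff_isLittleO_nhds_zero]
    have h1 : (fun h : ℝ => (max (0 + h) 0) ^ 2 - (max (0:ℝ) 0) ^ 2 - h • (0:ℝ)) =O[nhds 0] fun h : ℝ => h ^ 2 := by
      refine Asymptotics.IsBigO.of_bound 1 (Eventually.of_forall fun h => ?_)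
      simp only [zero_add, max_self, smul_eq_mul, mul_zero, sub_zero, Real.norm_eq_abs, one_mul]
      rw [zero_pow two_ne_zero, sub_zero, abs_of_nonneg (sq_nonneg (max h 0)), abs_of_nonneg (sq_nonneg h)]
      rcases le_total h 0 with h' | h'
      · rw [max_eq_right h']; nlinarith [sq_nonneg h]
      · rw [max_eq_left h']
    refine h1.trans_isLittleO ?_
    simpa using Asymptotics.isLittleO_pow_pow (𝕜 := ℝ) (m := 1) (n := 2) (by norm_num)
  · have : (fun t : ℝ => (max t 0) ^ 2) =ᶠ[nhds t] fun t => t ^ 2 := by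
      filter_upwards [lt_mem_nhds h] with y hy
      rw [max_eq_left hy.le]
    rw [max_eq_left h.le]
    have h2 : HasDerivAt (fun t : ℝ => t ^ 2) (2 * t) t := by simpa using hasDerivAt_pow 2 t
    exact h2.congr_of_eventuallyEq this

lemma mul_pos_part (t : ℝ) : t * max t 0 = (max t 0) ^ 2 := by
  rcases le_total t 0 with h | h
  · rw [max_eq_right h]; simp
  · rw [max_eq_left h]; ring

lemma hasDerivAt_pos3 (t : ℝ) : HasDerivAt (fun t : ℝ => (max t 0) ^ 3) (3 * (max t 0) ^ 2) t := by
  have h1 : HasDerivAt (fun t : ℝ => t * (max t 0) ^ 2) _ t := (hasDerivAt_id t).mul (hasDerivAt_pos2 t)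
  have h2 : (fun t : ℝ => t * (max t 0) ^ 2) = fun t : ℝ => (max t 0) ^ 3 := by
    funext t
    have := mul_pos_part t
    calc t * (max t 0) ^ 2 = (t * max t 0) * max t 0 := by ring
      _ = _ := by rw [this]; ring
  rw [h2] at h1
  convert h1 using 1
  have := mul_pos_part t
  simp only [id]
  linear_combination -2 * this

lemma hasFDerivAt_q (s : ℝ) (c x : Pt) :
    HasFDerivAt (fun y : Pt => s - ‖y - c‖ ^ 2) (-(2 • innerSL ℝ (x - c))) x := by
  have h0 : HasFDerivAt (fun y : Pt => y - c) (ContinuousLinearMap.id ℝ Pt) x :=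
    (hasFDerivAt_id x).sub_const c
  have h1 : HasFDerivAt (fun y : Pt => ‖y - c‖ ^ 2) (2 • innerSL ℝ (x - c)) x := by
    have := h0.norm_sq
    rw [ContinuousLinearMap.comp_id] at this
    exact this
  exact h1.const_sub s

lemma rad {G G' : ℝ → ℝ} (hG : ∀ t, HasDerivAt G (G' t) t) (s : ℝ) (c x : Pt) :
    DifferentiableAt ℝ (fun y : Pt => G (s - ‖y - c‖ ^ 2)) x ∧
    fderiv ℝ (fun y : Pt => G (s - ‖y - c‖ ^ 2)) x e0 = G' (s - ‖x - c‖ ^ 2) * (-2 * (x 0 - c 0)) ∧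
    fderiv ℝ (fun y : Pt => G (s - ‖y - c‖ ^ 2)) x e1 = G' (s - ‖x - c‖ ^ 2) * (-2 * (x 1 - c 1)) := by
  have h := (hG (s - ‖x - c‖ ^ 2)).comp_hasFDerivAt x (hasFDerivAt_q s c x)
  have h' : HasFDerivAt (fun y : Pt => G (s - ‖y - c‖ ^ 2)) _ x := h
  refine ⟨h'.differentiableAt, ?_, ?_⟩
  · rw [h'.fderiv]
    simp [EuclideanSpace.inner_single_right]
  · rw [h'.fderiv]
    simp [EuclideanSpace.inner_single_right]

lemma cont_bdd {f : Pt → ℝ} (hf : Continuous f) : ∃ M, ∀ x ∈ B1, |f x| ≤ M := by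
  obtain ⟨M, hM⟩ := (isCompact_closedBall (0:Pt) 1).exists_bound_of_continuousOn hf.continuousOn
  exact ⟨M, fun x hx => hM x (Metric.ball_subset_closedBall hx)⟩

lemma radTest {G G' : ℝ → ℝ} (hG : ∀ t, HasDerivAt G (G' t) t) (hc : Continuous G') (s : ℝ) (c : Pt) :
    TestFn (fun y : Pt => G (s - ‖y - c‖ ^ 2)) := by
  have d : Differentiable ℝ (fun y : Pt => G (s - ‖y - c‖ ^ 2)) := fun x => (rad hG s c x).1
  refine ⟨d, cont_bdd d.continuous, ?_, ?_⟩
  · simp_rw [(rad hG s c _).2.1]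
    exact cont_bdd (by fun_prop)
  · simp_rw [(rad hG s c _).2.2]
    exact cont_bdd (by fun_prop)

/-! ### Agmon estimate -/

def tau (ε Ω₀ : ℝ) (Ψ : Pt → ℂ) : ℝ := Qf ε Ω₀ Ψ + 2 * If Ψ

lemma normsq_lin_nonneg (a b : ℝ) (z w : ℂ) :
    0 ≤ a ^ 2 * ‖z‖ ^ 2 + 2 * a * b * (starRingEnd ℂ w * z).re + b ^ 2 * ‖w‖ ^ 2 := by
  rw [← normsq_lin]; positivity

def agG (Γ t : ℝ) : ℝ := (max t 0) ^ 2 * Real.exp (2 * Γ * t)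
def agG' (Γ t : ℝ) : ℝ := (2 * max t 0 + 2 * Γ * (max t 0) ^ 2) * Real.exp (2 * Γ * t)

lemma agG_deriv (Γ t : ℝ) : HasDerivAt (agG Γ) (agG' Γ t) t := by
  have h1 : HasDerivAt (fun t => Real.exp (2 * Γ * t)) (Real.exp (2 * Γ * t) * (2 * Γ)) t := by
    have := ((hasDerivAt_id t).const_mul (2 * Γ)).exp
    simpa using this
  have h2 : HasDerivAt (agG Γ) _ t := (hasDerivAt_pos2 t).mul h1
  convert h2 using 1
  unfold agG'; ring

lemma agG'_cont (Γ : ℝ) : Continuous (agG' Γ) := by unfold agG'; fun_prop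

lemma ag_pointwise {Γ s : ℝ} (hΓ : 0 ≤ Γ) (Ω : ℝ) (Ψ : Pt → ℂ) {x : Pt} (hx : x ∈ B1) :
    -((16 * Γ ^ 2 * agG Γ (s - ‖x - 0‖ ^ 2) + 16 * Real.exp 2) * ‖Ψ x‖ ^ 2) ≤
    agG Γ (s - ‖x - 0‖ ^ 2) * kin Ω Ψ x
        + (fderiv ℝ (fun y : Pt => agG Γ (s - ‖y - 0‖ ^ 2)) x e0 * Xa Ω Ψ x
          + fderiv ℝ (fun y : Pt => agG Γ (s - ‖y - 0‖ ^ 2)) x e1 * Xb Ω Ψ x) := by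
  rw [(rad (agG_deriv Γ) s 0 x).2.1, (rad (agG_deriv Γ) s 0 x).2.2]
  set t := s - ‖x - 0‖ ^ 2
  set E := Real.exp (Γ * t) with hE
  have hE2 : Real.exp (2 * Γ * t) = E ^ 2 := by
    rw [hE, ← Real.exp_nat_mul]; congr 1; push_cast; ring
  set p := max t 0 with hp
  have hp0 : 0 ≤ p := le_max_right _ _
  have hE0 : 0 < E := Real.exp_pos _
  have n0 := normsq_lin_nonneg (p * E) ((1 + Γ * p) * E * (-2 * x 0)) (Da Ω Ψ x) (Ψ x)
  have n1 := normsq_lin_nonneg (p * E) ((1 + Γ * p) * E * (-2 * x 1)) (Db Ω Ψ x) (Ψ x)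
  have hb : ((1 + Γ * p) * E) ^ 2 ≤ 4 * Γ ^ 2 * (p * E) ^ 2 + 4 * Real.exp 2 := by
    rcases le_total 1 (Γ * p) with h | h
    · have h1 : ((1 + Γ * p) * E) ^ 2 ≤ (2 * (Γ * p) * E) ^ 2 := by
        gcongr; linarith
      have := Real.exp_pos 2
      nlinarith
    · have h1 : E ^ 2 ≤ Real.exp 2 := by
        rw [← hE2, Real.exp_le_exp]
        have : Γ * t ≤ Γ * p := mul_le_mul_of_nonneg_left (le_max_left _ _) hΓ
        nlinarith
      have h2 : ((1 + Γ * p) * E) ^ 2 ≤ (2 * E) ^ 2 := by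
        have : 0 ≤ Γ * p := by positivity
        gcongr; linarith
      nlinarith [sq_nonneg (Γ * (p * E))]
  have hr : x 0 ^ 2 + x 1 ^ 2 ≤ 1 := by
    rw [← norm_sq_pt]; have := mem_B1.1 hx; nlinarith [norm_nonneg x]
  have hU : 0 ≤ ‖Ψ x‖ ^ 2 := by positivity
  have h4 : 4 * ((1 + Γ * p) * E) ^ 2 * (x 0 ^ 2 + x 1 ^ 2) * ‖Ψ x‖ ^ 2
      ≤ (16 * Γ ^ 2 * (p * E) ^ 2 + 16 * Real.exp 2) * ‖Ψ x‖ ^ 2 := by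
    refine mul_le_mul_of_nonneg_right ?_ hU
    have : 4 * ((1 + Γ * p) * E) ^ 2 * (x 0 ^ 2 + x 1 ^ 2) ≤ 4 * ((1 + Γ * p) * E) ^ 2 * 1 := by
      gcongr
    linarith
  have e1 : agG Γ t = (p * E) ^ 2 := by unfold agG; rw [hE2]; ring
  have e2 : agG' Γ t = 2 * (p * E) * ((1 + Γ * p) * E) := by unfold agG'; rw [hE2]; ring
  rw [e1, e2]
  unfold kin Xa Xb
  simp only [PiLp.zero_apply, sub_zero]
  linarith

lemma agmon {ε Ω₀ : ℝ} (hε : 0 < ε) (h : 4 / Real.sqrt π < Ω₀) {Ψ : Pt → ℂ}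
    (hΨ : IsGPMinimizer ε (Ω₀ / ε) Ψ) {s β Γ : ℝ} (hΓ : 0 ≤ Γ) (hβ : 0 < β)
    (hs : ∀ x ∈ B1, ‖x‖ ^ 2 < s → β ≤ -(2 * VV Ω₀ x) - tau ε Ω₀ Ψ)
    (hG : 16 * ε ^ 2 * Γ ^ 2 ≤ β / 2) :
    ∫ x in B1, agG Γ (s - ‖x - 0‖ ^ 2) * ‖Ψ x‖ ^ 2 ≤ 32 * Real.exp 2 * ε ^ 2 / β := by
  obtain ⟨hp, hm⟩ := gpAdm_iff.1 hΨ.1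
  have hT := radTest (agG_deriv Γ) (agG'_cont Γ) s 0
  have el := EL hε h hΨ hT
  have iA := hT.mul hp.i2
  have iY := ((hT.mul (hp.ikin (Ω₀ / ε))).add ((hT.mul0 (hp.iXa (Ω₀ / ε))).add (hT.mul1 (hp.iXb (Ω₀ / ε)))))
  have h1 : ∫ x in B1, -((16 * Γ ^ 2 * agG Γ (s - ‖x - 0‖ ^ 2) + 16 * Real.exp 2) * ‖Ψ x‖ ^ 2) ≤ _ :=
    setIntegral_mono_on (g := fun x => agG Γ (s - ‖x - 0‖ ^ 2) * kin (Ω₀ / ε) Ψ x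
        + (fderiv ℝ (fun y : Pt => agG Γ (s - ‖y - 0‖ ^ 2)) x e0 * Xa (Ω₀ / ε) Ψ x
          + fderiv ℝ (fun y : Pt => agG Γ (s - ‖y - 0‖ ^ 2)) x e1 * Xb (Ω₀ / ε) Ψ x)) (by
      have : IntegrableOn (fun x => -(16 * Γ ^ 2 * (agG Γ (s - ‖x - 0‖ ^ 2) * ‖Ψ x‖ ^ 2) +  16 * Real.exp 2 * ‖Ψ x‖ ^ 2)) B1 :=
        ((iA.const_mul (16 * Γ ^ 2)).add (hp.i2.const_mul (16 * Real.exp 2))).neg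
      refine this.congr_fun (fun x _ => ?_) measB1
      simp only; ring) iY measB1 (fun x hx => ag_pointwise hΓ (Ω₀ / ε) Ψ hx)
  have h2 : ∫ x in B1, -((16 * Γ ^ 2 * agG Γ (s - ‖x - 0‖ ^ 2) + 16 * Real.exp 2) * ‖Ψ x‖ ^ 2)
      = - (16 * Γ ^ 2 * (∫ x in B1, agG Γ (s - ‖x - 0‖ ^ 2) * ‖Ψ x‖ ^ 2) + 16 * Real.exp 2) := by
    have : ∀ x, -((16 * Γ ^ 2 * agG Γ (s - ‖x - 0‖ ^ 2) + 16 * Real.exp 2) * ‖Ψ x‖ ^ 2)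
      = -(16 * Γ ^ 2 * (agG Γ (s - ‖x - 0‖ ^ 2) * ‖Ψ x‖ ^ 2) +  16 * Real.exp 2 * ‖Ψ x‖ ^ 2) := fun x => by ring
    simp_rw [this]
    rw [integral_neg, integral_add (iA.const_mul (16 * Γ ^ 2)) (hp.i2.const_mul (16 * Real.exp 2)),
      integral_const_mul, integral_const_mul, hm, mul_one]
  have h3 : β * (∫ x in B1, agG Γ (s - ‖x - 0‖ ^ 2) * ‖Ψ x‖ ^ 2) ≤
      2 * ((∫ x in B1, agG Γ (s - ‖x - 0‖ ^ 2) * ‖Ψ x‖ ^ 4)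
        - ∫ x in B1, agG Γ (s - ‖x - 0‖ ^ 2) * (VV Ω₀ x * ‖Ψ x‖ ^ 2))
      - tau ε Ω₀ Ψ * ∫ x in B1, agG Γ (s - ‖x - 0‖ ^ 2) * ‖Ψ x‖ ^ 2 := by
    have i4 := hT.mul hp.i4
    have iV := hT.mul (hp.iV h)
    have iD : IntegrableOn (fun x => 2 * (agG Γ (s - ‖x - 0‖ ^ 2) * ‖Ψ x‖ ^ 4
        - agG Γ (s - ‖x - 0‖ ^ 2) * (VV Ω₀ x * ‖Ψ x‖ ^ 2))) B1 := (i4.sub iV).const_mul 2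
    rw [← integral_sub i4 iV, ← integral_const_mul, ← integral_const_mul, ← integral_const_mul,
      ← integral_sub iD (iA.const_mul _)]
    refine setIntegral_mono_on (iA.const_mul _) (iD.sub (iA.const_mul _)) measB1 ?_
    intro x hx
    have hU : 0 ≤ ‖Ψ x‖ ^ 2 := by positivity
    have hU4 : 0 ≤ ‖Ψ x‖ ^ 4 := by positivity
    by_cases hxs : ‖x‖ ^ 2 < s
    · have hg : 0 ≤ agG Γ (s - ‖x - 0‖ ^ 2) := by unfold agG; positivity
      have := mul_le_mul_of_nonneg_right (hs x hx hxs) (mul_nonneg hg hU)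
      nlinarith [mul_nonneg hg hU4]
    · have hg : agG Γ (s - ‖x - 0‖ ^ 2) = 0 := by
        unfold agG; rw [sub_zero, max_eq_right (by linarith)]; simp
      rw [hg]; simp
  rw [h2] at h1
  unfold tau at h3
  set A := ∫ x in B1, agG Γ (s - ‖x - 0‖ ^ 2) * ‖Ψ x‖ ^ 2
  have hA : 0 ≤ A := by
    refine integral_nonneg fun x => ?_
    unfold agG; positivity
  have h5 := mul_le_mul_of_nonneg_left h1 (sq_nonneg ε)
  rw [le_div_iff₀ hβ]
  nlinarith [mul_le_mul_of_nonneg_right hG hA]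

lemma subharm {ε Ω₀ : ℝ} (hε : 0 < ε) (h : 4 / Real.sqrt π < Ω₀) {Ψ : Pt → ℂ}
    (hΨ : IsGPMinimizer ε (Ω₀ / ε) Ψ) {g : Pt → ℝ} (hT : TestFn g) (hg0 : ∀ x, 0 ≤ g x)
    (hs : ∀ x ∈ B1, g x ≠ 0 → 0 ≤ -(2 * VV Ω₀ x) - tau ε Ω₀ Ψ) :
    ∫ x in B1, (fderiv ℝ g x e0 * Xa (Ω₀ / ε) Ψ x + fderiv ℝ g x e1 * Xb (Ω₀ / ε) Ψ x) ≤ 0 := by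
  obtain ⟨hp, hm⟩ := gpAdm_iff.1 hΨ.1
  have el := EL hε h hΨ hT
  have iA := hT.mul hp.i2
  have i4 := hT.mul hp.i4
  have iV := hT.mul (hp.iV h)
  have iK := hT.mul (hp.ikin (Ω₀ / ε))
  have iY : IntegrableOn (fun x => fderiv ℝ g x e0 * Xa (Ω₀ / ε) Ψ x + fderiv ℝ g x e1 * Xb (Ω₀ / ε) Ψ x) B1 :=
    (hT.mul0 (hp.iXa (Ω₀ / ε))).add (hT.mul1 (hp.iXb (Ω₀ / ε)))
  rw [integral_add iK iY] at el
  have hK : 0 ≤ ∫ x in B1, g x * kin (Ω₀ / ε) Ψ x :=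
    integral_nonneg fun x => mul_nonneg (hg0 x) (kin_nonneg _ _ _)
  have h3 : 0 ≤
      2 * ((∫ x in B1, g x * ‖Ψ x‖ ^ 4) - ∫ x in B1, g x * (VV Ω₀ x * ‖Ψ x‖ ^ 2))
      - tau ε Ω₀ Ψ * ∫ x in B1, g x * ‖Ψ x‖ ^ 2 := by
    have iD : IntegrableOn (fun x => 2 * (g x * ‖Ψ x‖ ^ 4
        - g x * (VV Ω₀ x * ‖Ψ x‖ ^ 2))) B1 := (i4.sub iV).const_mul 2
    rw [← integral_sub i4 iV, ← integral_const_mul, ← integral_const_mul,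
      ← integral_sub iD (iA.const_mul _)]
    refine setIntegral_nonneg measB1 ?_
    intro x hx
    have hU : 0 ≤ ‖Ψ x‖ ^ 2 := by positivity
    have hU4 : 0 ≤ ‖Ψ x‖ ^ 4 := by positivity
    by_cases hxs : g x = 0
    · rw [hxs]; simp
    · have := mul_nonneg (hs x hx hxs) (mul_nonneg (hg0 x) hU)
      nlinarith [mul_nonneg (hg0 x) hU4]
  unfold tau at h3
  have h4 : 0 ≤ ε ^ 2 * ∫ x in B1, g x * kin (Ω₀ / ε) Ψ x := by positivity
  have h6 : 0 < ε ^ 2 := by positivity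
  by_contra hcon
  push Not at hcon
  have := mul_pos h6 hcon
  linarith

/-! ### Mean value inequality -/

def pp (a : ℝ) (x y : Pt) : ℝ := max (a - ‖y - x‖ ^ 2) 0

lemma pp_nonneg (a : ℝ) (x y : Pt) : 0 ≤ pp a x y := le_max_right _ _

lemma pp_le {a : ℝ} (ha : 0 ≤ a) (x y : Pt) : pp a x y ≤ a := by
  unfold pp
  exact max_le (by nlinarith [sq_nonneg ‖y - x‖]) ha

lemma pp_mul (a : ℝ) (x y : Pt) : ‖y - x‖ ^ 2 * pp a x y = (a - pp a x y) * pp a x y := by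
  have := mul_pos_part (a - ‖y - x‖ ^ 2)
  unfold pp
  linear_combination -this

lemma pp_cont (a : ℝ) (x : Pt) : Continuous (pp a x) := by unfold pp; fun_prop

lemma pp_zero {a : ℝ} {x y : Pt} (hy : y ∉ Metric.closedBall x (Real.sqrt a)) : pp a x y = 0 := by
  rw [mem_closedBall_iff_norm, not_le] at hy
  unfold pp
  refine max_eq_right ?_
  have h1 := Real.lt_sq_of_sqrt_lt hy
  linarith

lemma U_deriv (Ω : ℝ) {Ψ : Pt → ℂ} {x : Pt} (hd : DifferentiableAt ℝ Ψ x) :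
    DifferentiableAt ℝ (fun y => ‖Ψ y‖ ^ 2) x ∧
    fderiv ℝ (fun y => ‖Ψ y‖ ^ 2) x e0 = 2 * Xa Ω Ψ x ∧
    fderiv ℝ (fun y => ‖Ψ y‖ ^ 2) x e1 = 2 * Xb Ω Ψ x := by
  have h := hd.hasFDerivAt.norm_sq
  refine ⟨h.differentiableAt, ?_, ?_⟩
  · rw [h.fderiv]
    unfold Xa Da pd1
    simp [Complex.inner]
    ring
  · rw [h.fderiv]
    unfold Xb Db pd2
    simp [Complex.inner]
    ring

lemma ibp_one {u k X kd : Pt → ℝ} {v : Pt} {S : Set Pt} (hS : IsClosed S) (hSB : S ⊆ B1)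
    (hu : ∀ y ∈ B1, DifferentiableAt ℝ u y) (hX : ∀ y ∈ B1, fderiv ℝ u y v = X y)
    (hk : Differentiable ℝ k) (hkd : ∀ y, fderiv ℝ k y v = kd y)
    (k0 : ∀ y, y ∉ S → k y = 0) (kd0 : ∀ y, y ∉ S → kd y = 0)
    (i1 : IntegrableOn (fun y => k y * X y) B1) (i2 : IntegrableOn (fun y => kd y * u y) B1)
    (i3 : IntegrableOn (fun y => k y * u y) B1) :
    ∫ y in B1, kd y * u y = - ∫ y in B1, k y * X y := by
  have z1 : ∀ y, y ∉ B1 → k y = 0 := fun y hy => k0 y fun h => hy (hSB h)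
  have z2 : ∀ y, y ∉ B1 → kd y = 0 := fun y hy => kd0 y fun h => hy (hSB h)
  have full : ∀ {f : Pt → ℝ}, (∀ y, y ∉ B1 → f y = 0) → IntegrableOn f B1 → Integrable f := by
    intro f hf hi
    rwa [integrableOn_iff_integrable_of_support_subset] at hi
    intro y hy
    by_contra hc
    exact hy (hf y hc)
  have eX : (fun y => k y * X y) = fun y => fderiv ℝ u y v * k y := by
    funext y
    by_cases hy : y ∈ B1
    · rw [hX y hy, mul_comm]
    · rw [z1 y hy]; simp
  have eK : (fun y => kd y * u y) = fun y => u y * fderiv ℝ k y v := by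
    funext y; rw [hkd, mul_comm]
  have j1 := full (fun y hy => by simp [z1 y hy]) i1
  have j2 := full (fun y hy => by simp [z2 y hy]) i2
  have j3 := full (fun y hy => by simp [z1 y hy]) i3
  rw [setIntegral_eq_integral_of_forall_compl_eq_zero (fun y hy => by simp [z2 y hy]),
    setIntegral_eq_integral_of_forall_compl_eq_zero (fun y hy => by simp [z1 y hy])]
  rw [eX] at j1
  rw [eK] at j2
  rw [eX, eK]
  refine integral_mul_fderiv_eq_neg_fderiv_mul_of_integrable j1 j2 ?_ ?_ (fun y _ => hk y)
  · simpa [mul_comm] using j3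
  · intro y hy
    refine hu y (hSB ?_)
    have : tsupport k ⊆ S := by
      refine closure_minimal ?_ hS
      intro z hz
      by_contra hc
      exact hz (k0 z hc)
    exact this hy

lemma kk_deriv (a : ℝ) (x y : Pt) (i : Fin 2) :
    DifferentiableAt ℝ (fun y : Pt => -6 * (y i - x i) * pp a x y ^ 2) y ∧
    fderiv ℝ (fun y : Pt => -6 * (y i - x i) * pp a x y ^ 2) y (EuclideanSpace.single i 1)
      = -6 * pp a x y ^ 2 + 24 * (y i - x i) ^ 2 * pp a x y := by
  have h1 : HasFDerivAt (fun y : Pt => -6 * (y i - x i)) ((-6 : ℝ) • (EuclideanSpace.proj i : Pt →L[ℝ] ℝ)) y := by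
    have : HasFDerivAt (fun y : Pt => y i - x i) (EuclideanSpace.proj i : Pt →L[ℝ] ℝ) y :=
      ((EuclideanSpace.proj i : Pt →L[ℝ] ℝ).hasFDerivAt).sub_const _
    exact this.const_mul (-6)
  have h2' := (hasDerivAt_pos2 (a - ‖y - x‖ ^ 2)).comp_hasFDerivAt y (hasFDerivAt_q a x y)
  have h2 : HasFDerivAt (fun y : Pt => pp a x y ^ 2) _ y := h2'
  have h3 : HasFDerivAt (fun y : Pt => -6 * (y i - x i) * pp a x y ^ 2) _ y := h1.mul h2
  refine ⟨h3.differentiableAt, ?_⟩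
  rw [h3.fderiv]
  simp [EuclideanSpace.inner_single_right]
  unfold pp
  ring

lemma ibp {ε Ω₀ : ℝ} {Ψ : Pt → ℂ} (hp : Pre Ψ) {a : ℝ} {x : Pt}
    (hB : Metric.closedBall x (Real.sqrt a) ⊆ B1) :
    ∫ y in B1, (12 * pp a x y * (2 * a - 3 * pp a x y)) * ‖Ψ y‖ ^ 2 =
      -(2 * ∫ y in B1, (fderiv ℝ (fun y : Pt => (max (a - ‖y - x‖ ^ 2) 0) ^ 3) y e0 * Xa (Ω₀ / ε) Ψ y
        + fderiv ℝ (fun y : Pt => (max (a - ‖y - x‖ ^ 2) 0) ^ 3) y e1 * Xb (Ω₀ / ε) Ψ y)) := by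
  have bd : ∀ {w f : Pt → ℝ}, Continuous w → IntegrableOn f B1 → IntegrableOn (fun y => w y * f y) B1 := by
    intro w f hw hf
    obtain ⟨M, hM⟩ := cont_bdd hw
    exact int_mul_bdd hf hw.aestronglyMeasurable hM
  have cp := pp_cont a x
  have key : ∀ (i : Fin 2) (X : Pt → ℝ), IntegrableOn X B1 →
      (∀ y ∈ B1, fderiv ℝ (fun y => ‖Ψ y‖ ^ 2) y (EuclideanSpace.single i 1) = 2 * X y) →
      ∫ y in B1, (-6 * pp a x y ^ 2 + 24 * (y i - x i) ^ 2 * pp a x y) * ‖Ψ y‖ ^ 2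
        = - ∫ y in B1, (-6 * (y i - x i) * pp a x y ^ 2) * (2 * X y) := by
    intro i X iX hX
    refine ibp_one (v := EuclideanSpace.single i 1) Metric.isClosed_closedBall hB
      (fun y hy => (U_deriv 0 (diffAt hp.diff hy)).1) hX (fun y => (kk_deriv a x y i).1)
      (fun y => (kk_deriv a x y i).2) (fun y hy => by rw [pp_zero hy]; ring)
      (fun y hy => by rw [pp_zero hy]; ring) ?_ ?_ ?_
    · exact bd (by fun_prop) (iX.const_mul 2)
    · exact bd (by fun_prop) hp.i2
    · exact bd (by fun_prop) hp.i2
  have k0 := key 0 _ (hp.iXa (Ω₀ / ε)) (fun y hy => (U_deriv (Ω₀ / ε) (diffAt hp.diff hy)).2.1)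
  have k1 := key 1 _ (hp.iXb (Ω₀ / ε)) (fun y hy => (U_deriv (Ω₀ / ε) (diffAt hp.diff hy)).2.2)
  have c0 : IntegrableOn (fun y => (-6 * pp a x y ^ 2 + 24 * (y 0 - x 0) ^ 2 * pp a x y) * ‖Ψ y‖ ^ 2) B1 :=
    bd (by fun_prop) hp.i2
  have c1 : IntegrableOn (fun y => (-6 * pp a x y ^ 2 + 24 * (y 1 - x 1) ^ 2 * pp a x y) * ‖Ψ y‖ ^ 2) B1 :=
    bd (by fun_prop) hp.i2
  have d0 : IntegrableOn (fun y => (-6 * (y 0 - x 0) * pp a x y ^ 2) * (2 * Xa (Ω₀ / ε) Ψ y)) B1 :=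
    bd (by fun_prop) ((hp.iXa (Ω₀ / ε)).const_mul 2)
  have d1 : IntegrableOn (fun y => (-6 * (y 1 - x 1) * pp a x y ^ 2) * (2 * Xb (Ω₀ / ε) Ψ y)) B1 :=
    bd (by fun_prop) ((hp.iXb (Ω₀ / ε)).const_mul 2)
  have l : ∫ y in B1, (12 * pp a x y * (2 * a - 3 * pp a x y)) * ‖Ψ y‖ ^ 2
      = (∫ y in B1, (-6 * pp a x y ^ 2 + 24 * (y 0 - x 0) ^ 2 * pp a x y) * ‖Ψ y‖ ^ 2)
       + ∫ y in B1, (-6 * pp a x y ^ 2 + 24 * (y 1 - x 1) ^ 2 * pp a x y) * ‖Ψ y‖ ^ 2 := by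
    rw [← integral_add c0 c1]
    congr 1
    funext y
    have h1 := pp_mul a x y
    have h2 := norm_sq_pt (y - x)
    simp only [PiLp.sub_apply] at h2
    rw [h2] at h1
    linear_combination (-24 * ‖Ψ y‖ ^ 2) * h1
  rw [l, k0, k1, ← integral_const_mul, ← neg_add, ← integral_add d0 d1]
  congr 2
  funext y
  rw [(rad hasDerivAt_pos3 a x y).2.1, (rad hasDerivAt_pos3 a x y).2.2]
  unfold pp
  ring

lemma scale_int {a : ℝ} (ha : 0 < a) (x : Pt) :
    ∫ y : Pt, (a ^ 3)⁻¹ * pp a x y ^ 2 = ∫ z : Pt, (max (1 - ‖z‖ ^ 2) 0) ^ 2 := by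
  have h1 : ∫ y : Pt, (a ^ 3)⁻¹ * pp a x y ^ 2 = ∫ y : Pt, (a ^ 3)⁻¹ * pp a 0 y ^ 2 := by
    rw [← integral_sub_right_eq_self (fun y : Pt => (a ^ 3)⁻¹ * pp a 0 y ^ 2) x]
    simp [pp]
  have h2 := Measure.integral_comp_smul (volume : Measure Pt) (fun y : Pt => (a ^ 3)⁻¹ * pp a 0 y ^ 2) (Real.sqrt a)
  have hs : Real.sqrt a ^ 2 = a := Real.sq_sqrt ha.le
  rw [finrank_euclideanSpace_fin, hs, abs_of_pos (by positivity), smul_eq_mul] at h2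
  rw [h1]
  have h3 : ∀ y : Pt, (a ^ 3)⁻¹ * pp a 0 (Real.sqrt a • y) ^ 2 = a⁻¹ * (max (1 - ‖y‖ ^ 2) 0) ^ 2 := by
    intro y
    have : pp a 0 (Real.sqrt a • y) = a * max (1 - ‖y‖ ^ 2) 0 := by
      unfold pp
      rw [sub_zero, norm_smul, Real.norm_eq_abs, abs_of_nonneg (Real.sqrt_nonneg a), mul_pow, hs,
        mul_max_of_nonneg _ _ ha.le]
      ring_nf
    rw [this]; field_simp
  simp_rw [h3] at h2
  rw [integral_const_mul] at h2
  have ha' : a⁻¹ ≠ 0 := by positivity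
  exact (mul_left_cancel₀ ha' h2).symm

def c00 : ℝ := ∫ z : Pt, (max (1 - ‖z‖ ^ 2) 0) ^ 2

lemma c00_pos : 0 < c00 := by
  unfold c00
  refine Continuous.integral_pos_of_hasCompactSupport_nonneg_nonzero (x := 0) (by fun_prop) ?_ ?_ ?_
  · refine HasCompactSupport.intro (isCompact_closedBall (0:Pt) 1) ?_
    intro z hz
    rw [mem_closedBall_zero_iff, not_le] at hz
    rw [max_eq_right (by nlinarith)]; simp
  · intro z; positivity
  · simp

lemma M_deriv {Ψ : Pt → ℂ} (hp : Pre Ψ) {a : ℝ} (ha : 0 < a) (x : Pt) :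
    HasDerivAt (fun a => ∫ y in B1, ‖Ψ y‖ ^ 2 * ((a ^ 3)⁻¹ * pp a x y ^ 2))
      (∫ y in B1, ‖Ψ y‖ ^ 2 * ((a ^ 4)⁻¹ * (pp a x y * (2 * a - 3 * pp a x y)))) a := by
  have bd : ∀ {w : Pt → ℝ}, Continuous w → IntegrableOn (fun y => ‖Ψ y‖ ^ 2 * w y) B1 := by
    intro w hw
    obtain ⟨M, hM⟩ := cont_bdd hw
    have := int_mul_bdd hp.i2 hw.aestronglyMeasurable hM
    simpa [mul_comm] using this
  refine (hasDerivAt_integral_of_dominated_loc_of_deriv_le (s := Set.Ioi (a / 2))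
    (F := fun a y => ‖Ψ y‖ ^ 2 * ((a ^ 3)⁻¹ * pp a x y ^ 2))
    (F' := fun a y => ‖Ψ y‖ ^ 2 * ((a ^ 4)⁻¹ * (pp a x y * (2 * a - 3 * pp a x y))))
    (bound := fun y => ‖Ψ y‖ ^ 2 * (20 / a ^ 2))
    (Ioi_mem_nhds (by linarith)) ?_ ?_ ?_ ?_ ?_ ?_).2
  · refine Eventually.of_forall fun b => ?_
    have := pp_cont b x
    exact (bd (by fun_prop)).aestronglyMeasurable
  · have := pp_cont a x
    exact bd (by fun_prop)
  · have := pp_cont a x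
    exact (bd (by fun_prop)).aestronglyMeasurable
  · refine Eventually.of_forall fun y b hb => ?_
    have hb' : a / 2 < b := hb
    have hb0 : 0 < b := by linarith
    have h1 := pp_nonneg b x y
    have h2 := pp_le hb0.le x y
    rw [norm_mul, Real.norm_of_nonneg (by positivity : 0 ≤ ‖Ψ y‖ ^ 2)]
    refine mul_le_mul_of_nonneg_left ?_ (by positivity)
    rw [norm_mul, Real.norm_of_nonneg (by positivity : 0 ≤ (b ^ 4)⁻¹), Real.norm_eq_abs]
    have h3 : |pp b x y * (2 * b - 3 * pp b x y)| ≤ 5 * b ^ 2 := by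
      rw [abs_le]; constructor <;> nlinarith
    calc (b ^ 4)⁻¹ * |pp b x y * (2 * b - 3 * pp b x y)| ≤ (b ^ 4)⁻¹ * (5 * b ^ 2) := by gcongr
      _ = 5 / b ^ 2 := by field_simp
      _ ≤ 20 / a ^ 2 := by
        rw [div_le_div_iff₀ (by positivity) (by positivity)]
        nlinarith
  · exact hp.i2.mul_const _
  · refine Eventually.of_forall fun y b hb => ?_
    have hb' : a / 2 < b := hb
    have hb0 : 0 < b := by linarith
    have h1 : HasDerivAt (fun b => pp b x y ^ 2) (2 * pp b x y * 1) b := by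
      have h0 : HasDerivAt (fun b : ℝ => b - ‖y - x‖ ^ 2) 1 b := (hasDerivAt_id b).sub_const _
      exact HasDerivAt.comp b (hasDerivAt_pos2 (b - ‖y - x‖ ^ 2)) h0
    have h2 : HasDerivAt (fun b : ℝ => (b ^ 3)⁻¹) (-(3 * b ^ 2) / (b ^ 3) ^ 2) b := by
      have : HasDerivAt (fun b : ℝ => b ^ 3) (3 * b ^ 2) b := by simpa using hasDerivAt_pow 3 b
      exact this.inv (by positivity)
    have h3 : HasDerivAt (fun b => ‖Ψ y‖ ^ 2 * ((b ^ 3)⁻¹ * pp b x y ^ 2)) _ b :=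
      (h2.mul h1).const_mul (‖Ψ y‖ ^ 2)
    have h4 : ‖Ψ y‖ ^ 2 * ((b ^ 4)⁻¹ * (pp b x y * (2 * b - 3 * pp b x y))) =
        ‖Ψ y‖ ^ 2 * (-(3 * b ^ 2) / (b ^ 3) ^ 2 * pp b x y ^ 2 + (b ^ 3)⁻¹ * (2 * pp b x y * 1)) := by
      field_simp
      ring
    rw [h4]
    exact h3

lemma meanval {ε Ω₀ : ℝ} (hε : 0 < ε) (h : 4 / Real.sqrt π < Ω₀) {Ψ : Pt → ℂ}
    (hΨ : IsGPMinimizer ε (Ω₀ / ε) Ψ) {a₁ : ℝ} (ha : 0 < a₁) {x : Pt}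
    (hB : Metric.closedBall x (Real.sqrt a₁) ⊆ B1)
    (hs : ∀ y ∈ Metric.closedBall x (Real.sqrt a₁), 0 ≤ -(2 * VV Ω₀ y) - tau ε Ω₀ Ψ) :
    c00 * ‖Ψ x‖ ^ 2 ≤ ∫ y in B1, ‖Ψ y‖ ^ 2 * ((a₁ ^ 3)⁻¹ * pp a₁ x y ^ 2) := by
  obtain ⟨hp, hm⟩ := gpAdm_iff.1 hΨ.1
  set M : ℝ → ℝ := fun a => ∫ y in B1, ‖Ψ y‖ ^ 2 * ((a ^ 3)⁻¹ * pp a x y ^ 2) with hM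
  have sub : ∀ a, a ≤ a₁ → Metric.closedBall x (Real.sqrt a) ⊆ Metric.closedBall x (Real.sqrt a₁) :=
    fun a ha => Metric.closedBall_subset_closedBall (Real.sqrt_le_sqrt ha)
  have mono : MonotoneOn M (Set.Ioc 0 a₁) := by
    refine monotoneOn_of_deriv_nonneg (convex_Ioc 0 a₁)
      (fun a ha' => (M_deriv hp ha'.1 x).continuousAt.continuousWithinAt) ?_ ?_
    · rw [interior_Ioc]
      exact fun a ha' => (M_deriv hp ha'.1 x).differentiableAt.differentiableWithinAt
    · rw [interior_Ioc]
      intro a ha'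
      rw [(M_deriv hp ha'.1 x).deriv]
      have s1 := subharm hε h hΨ (radTest hasDerivAt_pos3 (by fun_prop) a x)
        (fun y => by positivity) (by
          intro y hy hne
          refine hs y (sub a ha'.2.le ?_)
          by_contra hc
          have := pp_zero hc
          unfold pp at this
          rw [this] at hne
          simp at hne)
      have s2 := ibp (ε := ε) (Ω₀ := Ω₀) hp ((sub a ha'.2.le).trans hB)
      have s3 : ∫ y in B1, ‖Ψ y‖ ^ 2 * ((a ^ 4)⁻¹ * (pp a x y * (2 * a - 3 * pp a x y)))
          = ((a ^ 4)⁻¹ / 12) * ∫ y in B1, (12 * pp a x y * (2 * a - 3 * pp a x y)) * ‖Ψ y‖ ^ 2 := by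
        rw [← integral_const_mul]
        congr 1; funext y; ring
      rw [s3]
      have := ha'.1
      refine mul_nonneg (by positivity) ?_
      rw [s2]; linarith
  have hxB : x ∈ B1 := hB (Metric.mem_closedBall_self (Real.sqrt_nonneg _))
  have hcont : ContinuousAt (fun y => ‖Ψ y‖ ^ 2) x :=
    ((diffAt hp.diff hxB).continuousAt.norm).pow 2
  refine le_of_forall_pos_le_add fun η hη => ?_
  obtain ⟨r, hr, hr'⟩ := Metric.continuousAt_iff.1 hcont (η / c00) (div_pos hη c00_pos)
  set a := min a₁ ((r / 2) ^ 2) with hadef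
  have ha0 : 0 < a := lt_min ha (by positivity)
  have haa : a ≤ a₁ := min_le_left _ _
  have hsa : Real.sqrt a < r := by
    have : Real.sqrt a ≤ r / 2 := by
      rw [Real.sqrt_le_left (by positivity)]
      exact min_le_right _ _
    linarith
  have h1 : M a ≤ M a₁ := mono ⟨ha0, haa⟩ ⟨ha, le_rfl⟩ haa
  have cp := pp_cont a x
  have z : ∀ y, y ∉ B1 → (a ^ 3)⁻¹ * pp a x y ^ 2 = 0 := by
    intro y hy
    rw [pp_zero (fun hh => hy (((sub a haa).trans hB) hh))]; simp
  have e1 : ∫ y in B1, (a ^ 3)⁻¹ * pp a x y ^ 2 = c00 := by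
    rw [setIntegral_eq_integral_of_forall_compl_eq_zero z, scale_int ha0]
    rfl
  obtain ⟨K, hK⟩ := cont_bdd (f := fun y => (a ^ 3)⁻¹ * pp a x y ^ 2) (by fun_prop)
  have h2 : (‖Ψ x‖ ^ 2 - η / c00) * c00 ≤ M a := by
    have e2 : (‖Ψ x‖ ^ 2 - η / c00) * c00 = ∫ y in B1, (‖Ψ x‖ ^ 2 - η / c00) * ((a ^ 3)⁻¹ * pp a x y ^ 2) := by
      rw [integral_const_mul, e1]
    rw [e2]
    refine setIntegral_mono_on ?_ ?_ measB1 ?_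
    · have : IntegrableOn (fun _ : Pt => (‖Ψ x‖ ^ 2 - η / c00)) B1 := integrableOn_const (by rw [volB1]; simp)
      have := int_mul_bdd this (w := fun y => (a ^ 3)⁻¹ * pp a x y ^ 2) (by
        apply Continuous.aestronglyMeasurable; fun_prop) hK
      simpa [mul_comm] using this
    · have := int_mul_bdd hp.i2 (w := fun y => (a ^ 3)⁻¹ * pp a x y ^ 2) (by
        apply Continuous.aestronglyMeasurable; fun_prop) hK
      simpa [mul_comm] using this
    · intro y hy
      by_cases hyb : y ∈ Metric.closedBall x (Real.sqrt a)
      · have h3 := hr' (lt_of_le_of_lt hyb hsa)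
        rw [Real.dist_eq, abs_lt] at h3
        refine mul_le_mul_of_nonneg_right ?_ (by positivity)
        linarith [h3.1]
      · rw [pp_zero hyb]; simp
  have h4 : (‖Ψ x‖ ^ 2 - η / c00) * c00 = c00 * ‖Ψ x‖ ^ 2 - η := by
    have := c00_pos.ne'
    field_simp
  linarith

/-! ### The reduced functional -/

def rho (Ω₀ : ℝ) (x : Pt) : ℝ := max (VV Ω₀ x) 0
def Vm (Ω₀ : ℝ) (x : Pt) : ℝ := max (-VV Ω₀ x) 0

lemma rho_cont (Ω₀ : ℝ) : Continuous (rho Ω₀) := by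
  have := VV_cont Ω₀
  unfold rho; fun_prop

lemma Vm_cont (Ω₀ : ℝ) : Continuous (Vm Ω₀) := by
  have := VV_cont Ω₀
  unfold Vm; fun_prop

lemma rho_Vm (Ω₀ : ℝ) (x : Pt) : VV Ω₀ x = rho Ω₀ x - Vm Ω₀ x ∧ rho Ω₀ x * Vm Ω₀ x = 0 ∧
    0 ≤ rho Ω₀ x ∧ 0 ≤ Vm Ω₀ x := by
  unfold rho Vm
  rcases le_total (VV Ω₀ x) 0 with h | h
  · rw [max_eq_right h, max_eq_left (by linarith)]; simp [h]
  · rw [max_eq_left h, max_eq_right (by linarith)]; simp [h]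

lemma cont_int {f : Pt → ℝ} (hf : Continuous f) : IntegrableOn f B1 := by
  have : IntegrableOn f (Metric.closedBall 0 1) :=
    hf.continuousOn.integrableOn_compact (isCompact_closedBall _ _)
  exact this.mono_set Metric.ball_subset_closedBall

lemma mul_cont_int {w f : Pt → ℝ} (hw : Continuous w) (hf : IntegrableOn f B1) :
    IntegrableOn (fun y => w y * f y) B1 := by
  obtain ⟨M, hM⟩ := cont_bdd hw
  exact int_mul_bdd hf hw.aestronglyMeasurable hM

def Gf (ε Ω₀ : ℝ) (ψ : Pt → ℂ) : ℝ :=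
  ε ^ 2 * (∫ x in B1, kin (Ω₀ / ε) ψ x)
    + ∫ x in B1, ((‖ψ x‖ ^ 2 - rho Ω₀ x) ^ 2 + 2 * (Vm Ω₀ x * ‖ψ x‖ ^ 2))

def Tf (Ω₀ : ℝ) : ℝ := ∫ x in B1, rho Ω₀ x ^ 2

lemma rho_sq_int (Ω₀ : ℝ) : IntegrableOn (fun x => rho Ω₀ x ^ 2) B1 :=
  cont_int ((rho_cont Ω₀).pow 2)

lemma Pre.ir {ψ : Pt → ℂ} (hp : Pre ψ) (Ω₀ : ℝ) :
    IntegrableOn (fun x => (‖ψ x‖ ^ 2 - rho Ω₀ x) ^ 2) B1 := by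
  have h1 := mul_cont_int (rho_cont Ω₀) hp.i2
  have : IntegrableOn (fun x => ‖ψ x‖ ^ 4 - 2 * (rho Ω₀ x * ‖ψ x‖ ^ 2) + rho Ω₀ x ^ 2) B1 :=
    (hp.i4.sub (h1.const_mul 2)).add (rho_sq_int Ω₀)
  refine this.congr_fun (fun x _ => ?_) measB1
  simp only; ring

lemma Gf_eq {ε Ω₀ : ℝ} (h : 4 / Real.sqrt π < Ω₀) {ψ : Pt → ℂ} (hp : Pre ψ) :
    Qf ε Ω₀ ψ + If ψ = Gf ε Ω₀ ψ - Tf Ω₀ := by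
  unfold Qf If Gf Tf
  have i1 : IntegrableOn (fun x => (‖ψ x‖ ^ 2 - rho Ω₀ x) ^ 2 + 2 * (Vm Ω₀ x * ‖ψ x‖ ^ 2)) B1 :=
    (hp.ir Ω₀).add ((mul_cont_int (Vm_cont Ω₀) hp.i2).const_mul 2)
  have : (∫ x in B1, ‖ψ x‖ ^ 4) - 2 * ∫ x in B1, VV Ω₀ x * ‖ψ x‖ ^ 2 =
      (∫ x in B1, ((‖ψ x‖ ^ 2 - rho Ω₀ x) ^ 2 + 2 * (Vm Ω₀ x * ‖ψ x‖ ^ 2)))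
        - ∫ x in B1, rho Ω₀ x ^ 2 := by
    rw [← integral_const_mul, ← integral_sub hp.i4 ((hp.iV h).const_mul 2),
      ← integral_sub i1 (rho_sq_int Ω₀)]
    congr 1
    funext x
    obtain ⟨h1, h2, _⟩ := rho_Vm Ω₀ x
    rw [h1]; ring
  linarith

lemma Gf_min {ε Ω₀ : ℝ} (hε : 0 < ε) (h : 4 / Real.sqrt π < Ω₀) {Ψ ψ : Pt → ℂ}
    (hΨ : IsGPMinimizer ε (Ω₀ / ε) Ψ) (hp : gpAdm ψ) : Gf ε Ω₀ Ψ ≤ Gf ε Ω₀ ψ := by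
  have h1 := min_le hε h hΨ hp
  rw [Gf_eq h (gpAdm_iff.1 hΨ.1).1, Gf_eq h (gpAdm_iff.1 hp).1] at h1
  linarith

lemma tau_le {ε Ω₀ : ℝ} (h : 4 / Real.sqrt π < Ω₀) {ψ : Pt → ℂ} (hp : Pre ψ) {r : ℝ}
    (hl : 0 < r) : tau ε Ω₀ ψ ≤ (2 + 1 / r) * Gf ε Ω₀ ψ + r * Tf Ω₀ := by
  have i1 : IntegrableOn (fun x => (‖ψ x‖ ^ 2 - rho Ω₀ x) ^ 2 + 2 * (Vm Ω₀ x * ‖ψ x‖ ^ 2)) B1 :=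
    (hp.ir Ω₀).add ((mul_cont_int (Vm_cont Ω₀) hp.i2).const_mul 2)
  have hK : 0 ≤ ε ^ 2 * ∫ x in B1, kin (Ω₀ / ε) ψ x :=
    mul_nonneg (sq_nonneg _) (integral_nonneg fun x => kin_nonneg _ _ _)
  have key : 2 * (∫ x in B1, ‖ψ x‖ ^ 4) - 2 * ∫ x in B1, VV Ω₀ x * ‖ψ x‖ ^ 2 ≤
      (2 + 1 / r) * (∫ x in B1, ((‖ψ x‖ ^ 2 - rho Ω₀ x) ^ 2 + 2 * (Vm Ω₀ x * ‖ψ x‖ ^ 2)))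
        + r * ∫ x in B1, rho Ω₀ x ^ 2 := by
    rw [← integral_const_mul, ← integral_const_mul, ← integral_const_mul, ← integral_const_mul,
      ← integral_sub (hp.i4.const_mul 2) ((hp.iV h).const_mul 2),
      ← integral_add (i1.const_mul _) ((rho_sq_int Ω₀).const_mul _)]
    refine setIntegral_mono_on ((hp.i4.const_mul 2).sub ((hp.iV h).const_mul 2))
      ((i1.const_mul _).add ((rho_sq_int Ω₀).const_mul _)) measB1 ?_
    intro x _
    obtain ⟨h1, h2, h3, h4⟩ := rho_Vm Ω₀ x
    rw [h1]
    set ρ := rho Ω₀ x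
    set u := ‖ψ x‖ ^ 2 with hu
    have hu0 : 0 ≤ u := by positivity
    have hu4 : ‖ψ x‖ ^ 4 = u ^ 2 := by rw [hu]; ring
    rw [hu4]
    have hr : r * (1 / r) = 1 := by field_simp
    have hr0 : 0 < 1 / r := by positivity
    set k := 1 / r
    have q : 0 ≤ k * ((u - ρ) - r * ρ) ^ 2 := by positivity
    have q2 : k * ((u - ρ) - r * ρ) ^ 2 = k * (u - ρ) ^ 2 - 2 * (r * k) * (u - ρ) * ρ + r * (r * k) * ρ ^ 2 := by ring
    rw [q2, hr] at q
    have hv : 0 ≤ Vm Ω₀ x * u := by positivity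
    have hv2 : 0 ≤ k * (Vm Ω₀ x * u) := by positivity
    nlinarith
  unfold tau Qf If Gf Tf
  have : 0 ≤ (1 + 1 / r) * (ε ^ 2 * ∫ x in B1, kin (Ω₀ / ε) ψ x) := by positivity
  linarith

/-! ### The smoothed Thomas-Fermi profile -/

def sW (ε t : ℝ) : ℝ := (t + Real.sqrt (t ^ 2 + ε)) / 2

lemma sW_facts {ε : ℝ} (hε : 0 < ε) (t : ℝ) :
    0 < sW ε t ∧ max t 0 ≤ sW ε t ∧ sW ε t - max t 0 ≤ Real.sqrt ε / 2 ∧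
    max (-t) 0 * sW ε t ≤ ε / 4 ∧ sW ε t ≤ Real.sqrt (t ^ 2 + ε) ∧ sW ε t ≤ |t| + Real.sqrt ε := by
  have hr := Real.sq_sqrt (by positivity : 0 ≤ t ^ 2 + ε)
  have hr0 : 0 < Real.sqrt (t ^ 2 + ε) := Real.sqrt_pos.2 (by positivity)
  have he := Real.sq_sqrt hε.le
  have he0 : 0 < Real.sqrt ε := Real.sqrt_pos.2 hε
  unfold sW
  set r := Real.sqrt (t ^ 2 + ε)
  set e := Real.sqrt ε
  have h1 : |t| < r := abs_lt_of_sq_lt_sq (by nlinarith) hr0.le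
  have h2 : r ≤ |t| + e := by
    refine abs_le_of_sq_le_sq' ?_ (by positivity) |>.2
    nlinarith [sq_abs t, abs_nonneg t]
  rcases le_total t 0 with h | h
  · rw [abs_of_nonpos h] at *
    rw [max_eq_right h, max_eq_left (by linarith : (0:ℝ) ≤ -t)]
    refine ⟨by linarith, by linarith, by linarith, by nlinarith [sq_nonneg (r + t)], by linarith, by linarith⟩
  · rw [abs_of_nonneg h] at *
    rw [max_eq_left h, max_eq_right (by linarith : -t ≤ 0)]
    refine ⟨by linarith, by linarith, by linarith, by nlinarith, by linarith, by linarith⟩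

lemma sW_deriv {ε : ℝ} (hε : 0 < ε) (t : ℝ) :
    HasDerivAt (fun t => Real.sqrt (sW ε t)) (Real.sqrt (sW ε t) / (2 * Real.sqrt (t ^ 2 + ε))) t := by
  have hW := (sW_facts hε t).1
  have hr := Real.sq_sqrt (by positivity : 0 ≤ t ^ 2 + ε)
  have hr0 : 0 < Real.sqrt (t ^ 2 + ε) := Real.sqrt_pos.2 (by positivity)
  have h1 : HasDerivAt (fun t : ℝ => t ^ 2 + ε) (2 * t) t := by
    simpa using (hasDerivAt_pow 2 t).add_const ε
  have h2 := h1.sqrt (by positivity)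
  have h3 : HasDerivAt (fun t => sW ε t) _ t := ((hasDerivAt_id t).add h2).div_const 2
  have h4 : HasDerivAt (fun t => Real.sqrt (sW ε t)) _ t := h3.sqrt hW.ne'
  have hs := Real.sq_sqrt hW.le
  have hs0 := Real.sqrt_pos.2 hW
  have h5 : Real.sqrt (sW ε t) / (2 * Real.sqrt (t ^ 2 + ε)) =
    (1 + 2 * t / (2 * Real.sqrt (t ^ 2 + ε))) / 2 / (2 * Real.sqrt (sW ε t)) := by
    have : sW ε t = (t + Real.sqrt (t ^ 2 + ε)) / 2 := rfl
    field_simp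
    rw [hs, this]; ring
  rw [h5]; exact h4

lemma sW_deriv_sq {ε : ℝ} (hε : 0 < ε) (t : ℝ) :
    (Real.sqrt (sW ε t) / (2 * Real.sqrt (t ^ 2 + ε))) ^ 2 ≤ 1 / (4 * Real.sqrt ε) := by
  obtain ⟨h1, _, _, _, h2, _⟩ := sW_facts hε t
  have he0 : 0 < Real.sqrt ε := Real.sqrt_pos.2 hε
  have hr0 : 0 < Real.sqrt (t ^ 2 + ε) := Real.sqrt_pos.2 (by positivity)
  have h3 : Real.sqrt ε ≤ Real.sqrt (t ^ 2 + ε) := Real.sqrt_le_sqrt (by nlinarith)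
  rw [div_pow, Real.sq_sqrt h1.le, div_le_div_iff₀ (by positivity) (by positivity)]
  nlinarith [mul_le_mul h2 h3 he0.le hr0.le]

def fW (ε Ω₀ : ℝ) (x : Pt) : ℝ := Real.sqrt (sW ε (VV Ω₀ x))

lemma fW_deriv {ε : ℝ} (hε : 0 < ε) (Ω₀ : ℝ) (x : Pt) :
    DifferentiableAt ℝ (fW ε Ω₀) x ∧
    (fderiv ℝ (fW ε Ω₀) x e0) ^ 2 + (fderiv ℝ (fW ε Ω₀) x e1) ^ 2 ≤ Ω₀ ^ 4 / (64 * Real.sqrt ε) * ‖x‖ ^ 2 := by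
  have hG : ∀ t : ℝ, HasDerivAt (fun t => Real.sqrt (sW ε (-(Ω₀ ^ 2 / 8) * t)))
      (Real.sqrt (sW ε (-(Ω₀ ^ 2 / 8) * t)) / (2 * Real.sqrt ((-(Ω₀ ^ 2 / 8) * t) ^ 2 + ε)) * (-(Ω₀ ^ 2 / 8))) t := by
    intro t
    have h0 : HasDerivAt (fun t : ℝ => -(Ω₀ ^ 2 / 8) * t) (-(Ω₀ ^ 2 / 8)) t := by
      simpa using (hasDerivAt_id t).const_mul (-(Ω₀ ^ 2 / 8))
    have h1 := HasDerivAt.comp (h₂ := fun t => Real.sqrt (sW ε t)) t (sW_deriv hε (-(Ω₀ ^ 2 / 8) * t)) h0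
    exact h1
  have e : fW ε Ω₀ = fun y : Pt => Real.sqrt (sW ε (-(Ω₀ ^ 2 / 8) * (R0 Ω₀ ^ 2 - ‖y - 0‖ ^ 2))) := by
    funext y
    unfold fW VV
    rw [sub_zero]
    congr 2; ring
  obtain ⟨a, b, c⟩ := rad hG (R0 Ω₀ ^ 2) 0 x
  rw [e]
  refine ⟨a, ?_⟩
  rw [b, c]
  have h1 := sW_deriv_sq hε (-(Ω₀ ^ 2 / 8) * (R0 Ω₀ ^ 2 - ‖x - 0‖ ^ 2))
  set D := Real.sqrt (sW ε (-(Ω₀ ^ 2 / 8) * (R0 Ω₀ ^ 2 - ‖x - 0‖ ^ 2))) / (2 * Real.sqrt ((-(Ω₀ ^ 2 / 8) * (R0 Ω₀ ^ 2 - ‖x - 0‖ ^ 2)) ^ 2 + ε))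
  have he0 : 0 < Real.sqrt ε := Real.sqrt_pos.2 hε
  rw [norm_sq_pt]
  simp only [PiLp.zero_apply, sub_zero]
  calc (D * -(Ω₀ ^ 2 / 8) * (-2 * x 0)) ^ 2 + (D * -(Ω₀ ^ 2 / 8) * (-2 * x 1)) ^ 2
      = D ^ 2 * (Ω₀ ^ 4 / 16 * (x 0 ^ 2 + x 1 ^ 2)) := by ring
    _ ≤ 1 / (4 * Real.sqrt ε) * (Ω₀ ^ 4 / 16 * (x 0 ^ 2 + x 1 ^ 2)) := by gcongr
    _ = _ := by field_simp; ring

lemma rho_mass {Ω₀ : ℝ} (h : 4 / Real.sqrt π < Ω₀) : ∫ x in B1, rho Ω₀ x = 1 := by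
  obtain ⟨hR, hR0, hR1, hΩ⟩ := R0_sq_le h
  set R := R0 Ω₀ with hRd
  let f : ℝ → ℝ := (Set.Ioo R 1).indicator fun r => Ω₀ ^ 2 / 8 * (r ^ 2 - R ^ 2)
  have e1 : ∫ x in B1, rho Ω₀ x = ∫ x : Pt, f ‖x‖ := by
    rw [← integral_indicator measB1]
    congr 1
    funext x
    by_cases hx : x ∈ B1
    · rw [Set.indicator_of_mem hx]
      have hx1 := mem_B1.1 hx
      unfold rho VV
      by_cases hr : R < ‖x‖
      · have : ‖x‖ ∈ Set.Ioo R 1 := ⟨hr, hx1⟩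
        simp only [f]
        rw [Set.indicator_of_mem this, max_eq_left]
        have : 0 ≤ ‖x‖ ^ 2 - R ^ 2 := by nlinarith
        positivity
      · have h1 : ‖x‖ ∉ Set.Ioo R 1 := fun hh => hr hh.1
        simp only [f]
        rw [Set.indicator_of_notMem h1, max_eq_right]
        push Not at hr
        have : ‖x‖ ^ 2 - R ^ 2 ≤ 0 := by nlinarith [norm_nonneg x]
        have h8 : 0 ≤ Ω₀ ^ 2 / 8 := by positivity
        nlinarith
    · rw [Set.indicator_of_notMem hx]
      have h1 : ‖x‖ ∉ Set.Ioo R 1 := fun hh => hx (mem_B1.2 hh.2)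
      simp only [f]
      rw [Set.indicator_of_notMem h1]
  have e3 : ∫ y in Set.Ioi (0:ℝ), y ^ (2 - 1) • f y = ∫ y in R..1, y * (Ω₀ ^ 2 / 8 * (y ^ 2 - R ^ 2)) := by
    rw [intervalIntegral.integral_of_le hR1.le, integral_Ioc_eq_integral_Ioo,
      ← integral_indicator measurableSet_Ioo, ← integral_indicator measurableSet_Ioi]
    congr 1
    funext y
    by_cases hy : y ∈ Set.Ioo R 1
    · rw [Set.indicator_of_mem (show y ∈ Set.Ioi (0:ℝ) from hR0.trans hy.1), Set.indicator_of_mem hy]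
      simp only [f]
      rw [Set.indicator_of_mem hy]
      simp
    · rw [Set.indicator_of_notMem hy]
      simp only [f]
      by_cases hy0 : y ∈ Set.Ioi (0:ℝ)
      · rw [Set.indicator_of_mem hy0, Set.indicator_of_notMem hy]; simp
      · rw [Set.indicator_of_notMem hy0]
  have e4 : ∫ y in R..1, y * (Ω₀ ^ 2 / 8 * (y ^ 2 - R ^ 2)) = Ω₀ ^ 2 / 32 * (1 - R ^ 2) ^ 2 := by
    have hd : ∀ y ∈ Set.uIcc R 1, HasDerivAt (fun y => Ω₀ ^ 2 / 32 * (y ^ 2 - R ^ 2) ^ 2)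
        (y * (Ω₀ ^ 2 / 8 * (y ^ 2 - R ^ 2))) y := by
      intro y _
      have h1 : HasDerivAt (fun y : ℝ => y ^ 2 - R ^ 2) (2 * y) y := by
        simpa using (hasDerivAt_pow 2 y).sub_const (R ^ 2)
      have h2 : HasDerivAt (fun y => Ω₀ ^ 2 / 32 * (y ^ 2 - R ^ 2) ^ 2) _ y := (h1.pow 2).const_mul (Ω₀ ^ 2 / 32)
      convert h2 using 1
      push_cast; ring
    rw [intervalIntegral.integral_eq_sub_of_hasDerivAt hd (Continuous.intervalIntegrable (by fun_prop) _ _)]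
    ring
  rw [e1, integral_fun_norm_addHaar, finrank_euclideanSpace_fin, e3, e4, hR]
  have : volume.real (Metric.ball (0:Pt) 1) = π := volB1_real
  rw [this]
  have hp : Real.sqrt π ^ 2 = π := Real.sq_sqrt Real.pi_pos.le
  have hp0 : 0 < Real.sqrt π := Real.sqrt_pos.2 Real.pi_pos
  simp only [nsmul_eq_mul, smul_eq_mul]
  push_cast
  field_simp
  rw [hp]
  ring

/-! ### Trial functions -/

def sig (ε : ℝ) (v : Pt → ℂ) (x : Pt) : ℝ := (‖v x‖ ^ 2 + ε)⁻¹
def gg (ε Ω₀ : ℝ) (v : Pt → ℂ) (x : Pt) : ℝ := fW ε Ω₀ x * Real.sqrt (sig ε v x)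
def phi (ε Ω₀ : ℝ) (v : Pt → ℂ) (x : Pt) : ℂ := (gg ε Ω₀ v x : ℂ) * v x

lemma sig_facts {ε : ℝ} (hε : 0 < ε) (v : Pt → ℂ) (x : Pt) :
    0 < sig ε v x ∧ ε * sig ε v x ≤ 1 ∧ ‖v x‖ ^ 2 * sig ε v x = 1 - ε * sig ε v x := by
  unfold sig
  have h0 : 0 < ‖v x‖ ^ 2 + ε := by positivity
  refine ⟨by positivity, ?_, ?_⟩
  · rw [← div_eq_mul_inv, div_le_one h0]; nlinarith [sq_nonneg ‖v x‖]
  · field_simp; ring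

lemma sqrt_sig_deriv {ε : ℝ} (hε : 0 < ε) (Ω : ℝ) {v : Pt → ℂ} {x : Pt} (hd : DifferentiableAt ℝ v x) :
    DifferentiableAt ℝ (fun y => Real.sqrt (sig ε v y)) x ∧
    fderiv ℝ (fun y => Real.sqrt (sig ε v y)) x e0 = -(Real.sqrt (sig ε v x) * sig ε v x * Xa Ω v x) ∧
    fderiv ℝ (fun y => Real.sqrt (sig ε v y)) x e1 = -(Real.sqrt (sig ε v x) * sig ε v x * Xb Ω v x) := by
  have h0 : 0 < ‖v x‖ ^ 2 + ε := by positivity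
  obtain ⟨a, b, c⟩ := U_deriv Ω hd
  have hG : HasDerivAt (fun t : ℝ => Real.sqrt ((t + ε)⁻¹))
      (-(Real.sqrt (sig ε v x) * sig ε v x) / 2) (‖v x‖ ^ 2) := by
    have h1 : HasDerivAt (fun t : ℝ => t + ε) 1 (‖v x‖ ^ 2) := (hasDerivAt_id _).add_const ε
    have h2 := (h1.fun_inv h0.ne').sqrt (inv_pos.2 h0).ne'
    convert h2 using 1
    have hs := Real.sq_sqrt (inv_pos.2 h0).le
    have hs0 : 0 < Real.sqrt ((‖v x‖ ^ 2 + ε)⁻¹) := Real.sqrt_pos.2 (inv_pos.2 h0)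
    unfold sig
    set S := Real.sqrt ((‖v x‖ ^ 2 + ε)⁻¹)
    have hq : -1 / (‖v x‖ ^ 2 + ε) ^ 2 = -(S ^ 2 * S ^ 2) := by rw [hs]; field_simp
    rw [← hs, hq]
    field_simp
  have h' := hG.comp_hasFDerivAt x a.hasFDerivAt
  have h3 : HasFDerivAt (fun y => Real.sqrt (sig ε v y)) _ x := h'
  refine ⟨h3.differentiableAt, ?_, ?_⟩
  · rw [h3.fderiv, smul_apply, b, smul_eq_mul]; ring
  · rw [h3.fderiv, smul_apply, c, smul_eq_mul]; ring

lemma comp_bound {f s df X : ℝ} {D w : ℂ} (hX : |X| ≤ ‖w‖ * ‖D‖)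
    (hsw : ‖w‖ ^ 2 * s ^ 2 ≤ 1) :
    ‖((f * s : ℝ) : ℂ) * D + ((f * (-(s * s ^ 2 * X)) + s * df : ℝ) : ℂ) * w‖ ^ 2
      ≤ 8 * (f ^ 2 * s ^ 2 * ‖D‖ ^ 2) + 2 * df ^ 2 := by
  have e : ((f * s : ℝ) : ℂ) * D + ((f * (-(s * s ^ 2 * X)) + s * df : ℝ) : ℂ) * w
      = ((f * s : ℝ) : ℂ) * (D + ((-(s ^ 2 * X) : ℝ) : ℂ) * w) + ((s * df : ℝ) : ℂ) * w := by
    push_cast; ring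
  rw [e]
  refine (norm_add_sq_le_two _ _).trans ?_
  have h1 : ‖D + ((-(s ^ 2 * X) : ℝ) : ℂ) * w‖ ^ 2 ≤ 4 * ‖D‖ ^ 2 := by
    refine (norm_add_sq_le_two _ _).trans ?_
    have : ‖((-(s ^ 2 * X) : ℝ) : ℂ) * w‖ ≤ ‖D‖ := by
      rw [norm_mul, Complex.norm_real, Real.norm_eq_abs, abs_neg, abs_mul, abs_of_nonneg (sq_nonneg s)]
      calc s ^ 2 * |X| * ‖w‖ ≤ s ^ 2 * (‖w‖ * ‖D‖) * ‖w‖ := by gcongr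
        _ = (‖w‖ ^ 2 * s ^ 2) * ‖D‖ := by ring
        _ ≤ 1 * ‖D‖ := by gcongr
        _ = _ := one_mul _
    have := pow_le_pow_left₀ (norm_nonneg _) this 2
    linarith
  have h2 : ‖((s * df : ℝ) : ℂ) * w‖ ^ 2 ≤ df ^ 2 := by
    rw [norm_mul, Complex.norm_real, Real.norm_eq_abs, mul_pow, sq_abs]
    calc (s * df) ^ 2 * ‖w‖ ^ 2 = (‖w‖ ^ 2 * s ^ 2) * df ^ 2 := by ring
      _ ≤ 1 * df ^ 2 := by gcongr
      _ = _ := one_mul _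
  have h3 : ‖((f * s : ℝ) : ℂ) * (D + ((-(s ^ 2 * X) : ℝ) : ℂ) * w)‖ ^ 2 ≤ (f * s) ^ 2 * (4 * ‖D‖ ^ 2) := by
    rw [norm_mul, mul_pow, Complex.norm_real, Real.norm_eq_abs, sq_abs]
    gcongr
  nlinarith

lemma phi_kin {ε : ℝ} (hε : 0 < ε) (Ω Ω₀ : ℝ) {v : Pt → ℂ} {x : Pt} (hd : DifferentiableAt ℝ v x) :
    DifferentiableAt ℝ (phi ε Ω₀ v) x ∧
    kin Ω (phi ε Ω₀ v) x ≤ 8 * (sW ε (VV Ω₀ x) * sig ε v x * kin Ω v x)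
      + Ω₀ ^ 4 / (32 * Real.sqrt ε) * ‖x‖ ^ 2 := by
  obtain ⟨f1, f2⟩ := fW_deriv hε Ω₀ x
  obtain ⟨s1, s2, s3⟩ := sqrt_sig_deriv hε Ω hd
  obtain ⟨g1, g2, g3⟩ := sig_facts hε v x
  have hg : DifferentiableAt ℝ (gg ε Ω₀ v) x := f1.mul s1
  have hg' : HasFDerivAt (gg ε Ω₀ v) _ x := f1.hasFDerivAt.mul s1.hasFDerivAt
  have hW := (sW_facts hε (VV Ω₀ x)).1
  have hs := Real.sq_sqrt g1.le
  have hf : fW ε Ω₀ x ^ 2 = sW ε (VV Ω₀ x) := Real.sq_sqrt hW.le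
  refine ⟨?_, ?_⟩
  · have : DifferentiableAt ℝ (fun y => (gg ε Ω₀ v y : ℂ)) x :=
      Complex.ofRealCLM.differentiableAt.comp x hg
    exact this.mul hd
  unfold kin
  have ea : Da Ω (phi ε Ω₀ v) x = _ := Da_smul Ω hd hg
  have eb : Db Ω (phi ε Ω₀ v) x = _ := Db_smul Ω hd hg
  have da : fderiv ℝ (gg ε Ω₀ v) x e0 = fW ε Ω₀ x * (-(Real.sqrt (sig ε v x) * Real.sqrt (sig ε v x) ^ 2 * Xa Ω v x))
      + Real.sqrt (sig ε v x) * fderiv ℝ (fW ε Ω₀) x e0 := by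
    rw [hg'.fderiv]
    simp only [add_apply, smul_apply, smul_eq_mul]
    rw [s2, hs]
  have db : fderiv ℝ (gg ε Ω₀ v) x e1 = fW ε Ω₀ x * (-(Real.sqrt (sig ε v x) * Real.sqrt (sig ε v x) ^ 2 * Xb Ω v x))
      + Real.sqrt (sig ε v x) * fderiv ℝ (fW ε Ω₀) x e1 := by
    rw [hg'.fderiv]
    simp only [add_apply, smul_apply, smul_eq_mul]
    rw [s3, hs]
  rw [ea, eb, da, db, hs]
  have hsw : ‖v x‖ ^ 2 * Real.sqrt (sig ε v x) ^ 2 ≤ 1 := by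
    rw [hs, g3]; nlinarith
  have habs : ∀ D : ℂ, |(starRingEnd ℂ (v x) * D).re| ≤ ‖v x‖ * ‖D‖ := fun D => by
    refine (Complex.abs_re_le_norm _).trans ?_
    rw [norm_mul, RCLike.norm_conj]
  have ca := comp_bound (f := fW ε Ω₀ x) (df := fderiv ℝ (fW ε Ω₀) x e0) (X := Xa Ω v x)
    (s := Real.sqrt (sig ε v x)) (habs (Da Ω v x)) hsw
  have cb := comp_bound (f := fW ε Ω₀ x) (df := fderiv ℝ (fW ε Ω₀) x e1) (X := Xb Ω v x)
    (s := Real.sqrt (sig ε v x)) (habs (Db Ω v x)) hsw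
  rw [hf, hs] at ca cb
  refine (add_le_add ca cb).trans ?_
  have : Ω₀ ^ 4 / (32 * Real.sqrt ε) * ‖x‖ ^ 2 = 2 * (Ω₀ ^ 4 / (64 * Real.sqrt ε) * ‖x‖ ^ 2) := by
    have := Real.sqrt_pos.2 hε
    field_simp; ring
  rw [this]
  linarith

def Mw (Ω₀ : ℝ) : ℝ := Ω₀ ^ 2 / 8 + 1

lemma Mw_pos (Ω₀ : ℝ) : 0 < Mw Ω₀ := by unfold Mw; positivity

def Ctr (Ω₀ A B : ℝ) : ℝ := 2 * (8 * Mw Ω₀ * A * B + π * Ω₀ ^ 4 / 32)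
  + 8 * π * Mw Ω₀ ^ 2 * (π ^ 2 / 2 + 2 * Mw Ω₀ ^ 2 * B ^ 2) + 2 * π + 4 * Mw Ω₀ ^ 2 * B

lemma const_int (c : ℝ) : IntegrableOn (fun _ : Pt => c) B1 := cont_int continuous_const

lemma int_const (c : ℝ) : ∫ _ in B1, c = π * c := by
  rw [setIntegral_const, volB1_real, smul_eq_mul]

lemma pt_alg {u W M t r vm e ε : ℝ} (w1 : 0 ≤ W) (w7 : W ≤ M) (g0 : 0 ≤ t) (g2 : t ≤ 1)
    (w2 : r ≤ W) (w3 : W - r ≤ e / 2) (w4 : vm * W ≤ ε / 4) (r3 : 0 ≤ vm)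
    (hux : u = W * (1 - t)) (u0 : 0 ≤ u) (he2 : e ^ 2 = ε) :
    0 ≤ u ∧ u ≤ M ∧ |u - r| ≤ e / 2 + M * t ∧ (u - r) ^ 2 ≤ ε / 2 + 2 * M ^ 2 * t ∧ vm * u ≤ ε / 4 := by
  have hWt : W * t ≤ M * t := by gcongr
  have hWt0 : 0 ≤ W * t := by positivity
  have uW : u ≤ W := by rw [hux]; nlinarith
  refine ⟨u0, uW.trans w7, ?_, ?_, ?_⟩
  · rw [abs_le, hux]; constructor <;> nlinarith
  · have e1 : u - r = (W - r) + -(W * t) := by rw [hux]; ring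
    have e2 : (W - r) ^ 2 ≤ (e / 2) ^ 2 := pow_le_pow_left₀ (by linarith) w3 2
    have e3 : (W * t) ^ 2 ≤ M ^ 2 * t := by
      have h4 : (W * t) ^ 2 ≤ (M * t) ^ 2 := pow_le_pow_left₀ hWt0 hWt 2
      have h5 : t ^ 2 ≤ t := by nlinarith
      have h6 := mul_le_mul_of_nonneg_left h5 (sq_nonneg M)
      calc _ ≤ _ := h4
        _ = M ^ 2 * t ^ 2 := by ring
        _ ≤ _ := h6
    rw [e1]
    have := sq_nonneg ((W - r) + W * t)
    have e4 : (e / 2) ^ 2 = ε / 4 := by rw [← he2]; ring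
    linarith
  · exact (mul_le_mul_of_nonneg_left uW r3).trans w4

set_option maxHeartbeats 1000000 in
lemma trial {ε Ω₀ A B q : ℝ} (hε : 0 < ε) (hε1 : ε ≤ 1) (h : 4 / Real.sqrt π < Ω₀) {v : Pt → ℂ}
    (hv : ∀ x, DifferentiableAt ℝ v x) (hA : 0 ≤ A) (hB : 0 ≤ B)
    (hkin : ∀ x ∈ B1, kin (Ω₀ / ε) v x ≤ A / ε)
    (hS : ε * ∫ x in B1, sig ε v x ≤ B * q) (hq : ε ≤ q) (hq1 : q ≤ 1)
    (hν : π / 2 * Real.sqrt ε + Mw Ω₀ * (B * q) ≤ 1 / 2) :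
    ∃ ψ : Pt → ℂ, gpAdm ψ ∧ Gf ε Ω₀ ψ ≤ Ctr Ω₀ A B * q := by
  have hM := Mw_pos Ω₀
  have hπ := Real.pi_pos
  have he2 := Real.sq_sqrt hε.le
  have he0 : 0 < Real.sqrt ε := Real.sqrt_pos.2 hε
  have he1 : Real.sqrt ε ≤ 1 := Real.sqrt_le_one.2 hε1
  set e := Real.sqrt ε with hedef
  set M := Mw Ω₀ with hMdef
  set φ := phi ε Ω₀ v with hφ
  set u : Pt → ℝ := fun x => ‖φ x‖ ^ 2 with hu
  have sigc : Continuous (sig ε v) := by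
    have : Continuous v := continuous_iff_continuousAt.2 fun x => (hv x).continuousAt
    unfold sig
    refine Continuous.inv₀ (by fun_prop) fun x => ?_
    positivity
  have iS : IntegrableOn (sig ε v) B1 := cont_int sigc
  have hd : ∀ x, DifferentiableAt ℝ φ x := fun x => (phi_kin hε 0 Ω₀ (hv x)).1
  have φc : Continuous φ := continuous_iff_continuousAt.2 fun x => (hd x).continuousAt
  have uc : Continuous u := by rw [hu]; fun_prop
  have ueq : ∀ x, u x = sW ε (VV Ω₀ x) * (1 - ε * sig ε v x) := by
    intro x
    obtain ⟨g1, g2, g3⟩ := sig_facts hε v x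
    have hW := (sW_facts hε (VV Ω₀ x)).1
    simp only [hu, hφ]
    unfold phi gg fW
    rw [norm_mul, Complex.norm_real, Real.norm_eq_abs, mul_pow, sq_abs, mul_pow,
      Real.sq_sqrt hW.le, Real.sq_sqrt g1.le, ← g3]
    ring
  have Wle : ∀ x ∈ B1, sW ε (VV Ω₀ x) ≤ M := by
    intro x hx
    have h1 := (sW_facts hε (VV Ω₀ x)).2.2.2.2.2
    have h2 := VV_bdd h hx
    rw [hMdef]; unfold Mw; linarith
  -- pointwise facts
  have pt : ∀ x ∈ B1, 0 ≤ u x ∧ u x ≤ M ∧ |u x - rho Ω₀ x| ≤ e / 2 + M * (ε * sig ε v x) ∧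
      (u x - rho Ω₀ x) ^ 2 ≤ ε / 2 + 2 * M ^ 2 * (ε * sig ε v x) ∧ Vm Ω₀ x * u x ≤ ε / 4 := by
    intro x hx
    obtain ⟨g1, g2, g3⟩ := sig_facts hε v x
    obtain ⟨w1, w2, w3, w4, w5, w6⟩ := sW_facts hε (VV Ω₀ x)
    have w7 := Wle x hx
    have hux := ueq x
    have g0 : 0 ≤ ε * sig ε v x := by positivity
    have r1 : rho Ω₀ x = max (VV Ω₀ x) 0 := rfl
    have r2 : Vm Ω₀ x = max (-VV Ω₀ x) 0 := rfl
    have r3 : 0 ≤ Vm Ω₀ x := le_max_right _ _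
    rw [← r1] at w2 w3
    rw [← r2] at w4
    set W := sW ε (VV Ω₀ x)
    set t := ε * sig ε v x
    have u0 : 0 ≤ u x := by simp only [hu]; positivity
    exact pt_alg w1.le w7 g0 g2 w2 w3 w4 r3 hux u0 he2
  have iu : IntegrableOn u B1 := cont_int uc
  have iρ : IntegrableOn (rho Ω₀) B1 := cont_int (rho_cont Ω₀)
  have kinle : ∀ x ∈ B1, kin (Ω₀ / ε) φ x ≤ 8 * M * A / ε * sig ε v x + Ω₀ ^ 4 / (32 * e) := by
    intro x hx
    obtain ⟨g1, g2, g3⟩ := sig_facts hε v x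
    have h1 := (phi_kin hε (Ω₀ / ε) Ω₀ (hv x)).2
    have w1 := (sW_facts hε (VV Ω₀ x)).1
    have w7 := Wle x hx
    have h2 : sW ε (VV Ω₀ x) * sig ε v x * kin (Ω₀ / ε) v x ≤ M * sig ε v x * (A / ε) := by
      have := kin_nonneg (Ω₀ / ε) v x
      have := hkin x hx
      gcongr
    have h3 : Ω₀ ^ 4 / (32 * e) * ‖x‖ ^ 2 ≤ Ω₀ ^ 4 / (32 * e) := by
      refine mul_le_of_le_one_right (by positivity) ?_
      have := mem_B1.1 hx
      nlinarith [norm_nonneg x]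
    calc _ ≤ _ := h1
      _ ≤ 8 * (M * sig ε v x * (A / ε)) + Ω₀ ^ 4 / (32 * e) := by linarith
      _ = _ := by ring
  have ibound : IntegrableOn (fun x => 8 * M * A / ε * sig ε v x + Ω₀ ^ 4 / (32 * e)) B1 :=
    (iS.const_mul _).add (const_int _)
  have ik : IntegrableOn (kin (Ω₀ / ε) φ) B1 := by
    refine Integrable.mono' ibound (kin_meas _ φc.aestronglyMeasurable) (aeB1 fun x hx => ?_)
    rw [Real.norm_of_nonneg (kin_nonneg _ _ _)]
    exact kinle x hx
  have hp : Pre φ := Pre.of_kin (Ω₀ / ε) (fun x _ => (hd x).differentiableWithinAt) iu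
    (cont_int (by fun_prop)) ik
  set S := ∫ x in B1, sig ε v x with hSdef
  have S0 : 0 ≤ S := integral_nonneg fun x => (sig_facts hε v x).1.le
  have hK : ∫ x in B1, kin (Ω₀ / ε) φ x ≤ 8 * M * A / ε * S + π * (Ω₀ ^ 4 / (32 * e)) := by
    refine (setIntegral_mono_on ik ibound measB1 kinle).trans ?_
    rw [integral_add (iS.const_mul _) (const_int _), integral_const_mul, int_const]
  have hK2 : ε ^ 2 * ∫ x in B1, kin (Ω₀ / ε) φ x ≤ (8 * M * A * B + π * Ω₀ ^ 4 / 32) * q := by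
    calc _ ≤ ε ^ 2 * (8 * M * A / ε * S + π * (Ω₀ ^ 4 / (32 * e))) := by gcongr
      _ = 8 * M * A * (ε * S) + π * Ω₀ ^ 4 / 32 * (ε * e) := by
        have : ε ^ 2 * (π * (Ω₀ ^ 4 / (32 * e))) = π * Ω₀ ^ 4 / 32 * (ε * e) := by
          field_simp
          rw [he2]
          ring
        rw [mul_add, this]
        field_simp
      _ ≤ 8 * M * A * (B * q) + π * Ω₀ ^ 4 / 32 * q := by
        have : ε * e ≤ q := by nlinarith
        gcongr
      _ = _ := by ring
  set N := ∫ x in B1, u x with hN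
  have hNν : |N - 1| ≤ π / 2 * e + M * (B * q) := by
    have e1 : N - 1 = ∫ x in B1, (u x - rho Ω₀ x) := by
      rw [integral_sub iu iρ, rho_mass h]
    rw [e1]
    have ib : IntegrableOn (fun x => e / 2 + M * (ε * sig ε v x)) B1 :=
      (const_int _).add ((iS.const_mul _).const_mul _)
    calc |∫ x in B1, (u x - rho Ω₀ x)| ≤ ∫ x in B1, |u x - rho Ω₀ x| := abs_integral_le_integral_abs
      _ ≤ ∫ x in B1, (e / 2 + M * (ε * sig ε v x)) :=
        setIntegral_mono_on (iu.sub iρ).abs ib measB1 fun x hx => (pt x hx).2.2.1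
      _ = π * (e / 2) + M * (ε * S) := by
        rw [integral_add (const_int _) ((iS.const_mul _).const_mul _), int_const, integral_const_mul,
          integral_const_mul]
      _ ≤ _ := by
        have := mul_le_mul_of_nonneg_left hS hM.le
        linarith
  have hN1 : 1 / 2 ≤ N := by have := (abs_le.1 (hNν.trans hν)).1; linarith
  have hN0 : 0 < N := by linarith
  obtain ⟨s1, s2, s3, s4⟩ := scaled (ε := ε) (Ω₀ := Ω₀) hp (1 / Real.sqrt N)
  have hsN : (1 / Real.sqrt N) ^ 2 = 1 / N := by rw [div_pow, Real.sq_sqrt hN0.le, one_pow]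
  refine ⟨fun y => ((1 / Real.sqrt N : ℝ) : ℂ) * φ y, gpAdm_iff.2 ⟨s1, ?_⟩, ?_⟩
  · have : Nf φ = N := rfl
    rw [this, hsN] at s4
    unfold Nf at s4
    rw [s4]; field_simp
  have nsq : ∀ x, ‖((1 / Real.sqrt N : ℝ) : ℂ) * φ x‖ ^ 2 = u x / N := by
    intro x
    rw [norm_mul, mul_pow, Complex.norm_real, Real.norm_eq_abs, sq_abs, hsN]
    simp only [hu]; ring
  unfold Gf
  have k1 : ∫ x in B1, kin (Ω₀ / ε) (fun y => ((1 / Real.sqrt N : ℝ) : ℂ) * φ y) x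
      = 1 / N * ∫ x in B1, kin (Ω₀ / ε) φ x := by
    rw [← integral_const_mul]
    congr 1; funext x
    rw [kin_const _ _ (hd x), hsN]
  rw [k1]
  simp_rw [nsq]
  have hNi : 1 / N ≤ 2 := by rw [div_le_iff₀ hN0]; linarith
  have hNi0 : 0 < 1 / N := by positivity
  have hNd : (1 / N - 1) ^ 2 ≤ 4 * (π / 2 * e + M * (B * q)) ^ 2 := by
    have e1 : 1 / N - 1 = -((1 / N) * (N - 1)) := by field_simp; ring
    rw [e1, neg_sq, mul_pow]
    have e2 : (N - 1) ^ 2 ≤ (π / 2 * e + M * (B * q)) ^ 2 := by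
      rw [← sq_abs]; exact pow_le_pow_left₀ (abs_nonneg _) hNν 2
    have e3 : (1 / N) ^ 2 ≤ 4 := by nlinarith
    calc _ ≤ 4 * (N - 1) ^ 2 := by gcongr
      _ ≤ _ := by gcongr
  have hν2 : (π / 2 * e + M * (B * q)) ^ 2 ≤ (π ^ 2 / 2 + 2 * M ^ 2 * B ^ 2) * q := by
    have : q ^ 2 ≤ q := by nlinarith
    have h1 : (M * (B * q)) ^ 2 ≤ M ^ 2 * B ^ 2 * q := by
      calc (M * (B * q)) ^ 2 = M ^ 2 * B ^ 2 * q ^ 2 := by ring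
        _ ≤ _ := by gcongr
    have h2 : (π / 2 * e) ^ 2 ≤ π ^ 2 / 4 * q := by
      calc (π / 2 * e) ^ 2 = π ^ 2 / 4 * e ^ 2 := by ring
        _ ≤ _ := by rw [he2]; gcongr
    nlinarith [sq_nonneg (π / 2 * e - M * (B * q))]
  have ib2 : IntegrableOn (fun x => (2 * (1 / N - 1) ^ 2 * M ^ 2 + 2 * ε) + 4 * M ^ 2 * (ε * sig ε v x)) B1 :=
    (const_int _).add ((iS.const_mul _).const_mul _)
  have last : ∫ x in B1, ((u x / N - rho Ω₀ x) ^ 2 + 2 * (Vm Ω₀ x * (u x / N)))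
      ≤ π * (2 * (1 / N - 1) ^ 2 * M ^ 2 + 2 * ε) + 4 * M ^ 2 * (ε * S) := by
    calc _ ≤ ∫ x in B1, ((2 * (1 / N - 1) ^ 2 * M ^ 2 + 2 * ε) + 4 * M ^ 2 * (ε * sig ε v x)) := by
          have rc := rho_cont Ω₀
          have vc := Vm_cont Ω₀
          refine setIntegral_mono_on (cont_int (by fun_prop)) ib2 measB1 ?_
          intro x hx
          obtain ⟨p1, p2, p3, p4, p5⟩ := pt x hx
          have q0 : 0 ≤ Vm Ω₀ x * u x := mul_nonneg (rho_Vm Ω₀ x).2.2.2 p1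
          have q1 : Vm Ω₀ x * (u x / N) ≤ ε / 2 := by
            calc Vm Ω₀ x * (u x / N) = (1 / N) * (Vm Ω₀ x * u x) := by ring
              _ ≤ 2 * (ε / 4) := by gcongr
              _ = _ := by ring
          have q2 : u x / N - rho Ω₀ x = (1 / N - 1) * u x + (u x - rho Ω₀ x) := by ring
          have q3 : ((1 / N - 1) * u x) ^ 2 ≤ (1 / N - 1) ^ 2 * M ^ 2 := by
            rw [mul_pow]; gcongr
          rw [q2]
          nlinarith [sq_nonneg ((1 / N - 1) * u x - (u x - rho Ω₀ x))]
      _ = _ := by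
        rw [integral_add (const_int _) ((iS.const_mul _).const_mul _), int_const, integral_const_mul,
          integral_const_mul]
  have f1 : ε ^ 2 * (1 / N * ∫ x in B1, kin (Ω₀ / ε) φ x) ≤ 2 * ((8 * M * A * B + π * Ω₀ ^ 4 / 32) * q) := by
    have k0 : 0 ≤ ∫ x in B1, kin (Ω₀ / ε) φ x := integral_nonneg fun x => kin_nonneg _ _ _
    calc _ = (1 / N) * (ε ^ 2 * ∫ x in B1, kin (Ω₀ / ε) φ x) := by ring
      _ ≤ 2 * (ε ^ 2 * ∫ x in B1, kin (Ω₀ / ε) φ x) := by gcongr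
      _ ≤ _ := by gcongr
  have f2 : π * (2 * (1 / N - 1) ^ 2 * M ^ 2 + 2 * ε) + 4 * M ^ 2 * (ε * S) ≤
      8 * π * M ^ 2 * ((π ^ 2 / 2 + 2 * M ^ 2 * B ^ 2) * q) + 2 * π * q + 4 * M ^ 2 * (B * q) := by
    have g1 : 2 * π * M ^ 2 * (1 / N - 1) ^ 2 ≤ 2 * π * M ^ 2 * (4 * ((π ^ 2 / 2 + 2 * M ^ 2 * B ^ 2) * q)) := by
      gcongr
      linarith
    have g2 : 4 * M ^ 2 * (ε * S) ≤ 4 * M ^ 2 * (B * q) := by gcongr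
    have g3 : 2 * π * ε ≤ 2 * π * q := by gcongr
    linarith
  unfold Ctr
  rw [← hMdef]
  linarith

/-! ### Averaging -/

def Fe (ε t : ℝ) : ℝ := (ε + t ^ 2) ^ (-(3:ℝ)/8)

lemma Fe_cont {ε : ℝ} (hε : 0 < ε) : Continuous (Fe ε) := by
  unfold Fe
  refine Continuous.rpow_const (by fun_prop) fun t => Or.inl ?_
  positivity

lemma Fe_nonneg {ε : ℝ} (hε : 0 < ε) (t : ℝ) : 0 ≤ Fe ε t := by unfold Fe; positivity

lemma pow_int : IntegrableOn (fun t : ℝ => |t| ^ (-(3:ℝ)/4)) (Set.Ioc (-1) 1) := by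
  have h1 : IntervalIntegrable (fun t : ℝ => |t| ^ (-(3:ℝ)/4)) volume 0 1 := by
    have := intervalIntegral.intervalIntegrable_rpow' (a := 0) (b := 1) (r := -(3:ℝ)/4) (by norm_num)
    refine this.congr fun t ht => ?_
    rw [Set.uIoc_of_le zero_le_one] at ht
    simp only [abs_of_pos ht.1]
  have h2 : IntervalIntegrable (fun t : ℝ => |t| ^ (-(3:ℝ)/4)) volume (-1) 0 := by
    have := (IntervalIntegrable.iff_comp_neg (f := fun t : ℝ => |t| ^ (-(3:ℝ)/4)) (a := -1) (b := 0)).2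
    apply this
    simp only [abs_neg, neg_neg, neg_zero]
    exact h1.symm
  exact (intervalIntegrable_iff_integrableOn_Ioc_of_le (by norm_num)).1 (h2.trans h1)

lemma Fe_int : ∃ L : ℝ, 0 ≤ L ∧ ∀ ε : ℝ, 0 < ε → ∀ w : ℝ,
    ∫⁻ a in Set.Icc (0:ℝ) 1, ENNReal.ofReal (Fe ε (a + w)) ≤ ENNReal.ofReal L := by
  set K := ∫ t in Set.Ioc (-1:ℝ) 1, |t| ^ (-(3:ℝ)/4) with hK
  have K0 : 0 ≤ K := integral_nonneg fun t => by positivity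
  refine ⟨1 + K, by positivity, fun ε hε w => ?_⟩
  set G : ℝ → ENNReal := fun t => 1 + (Set.Ioc (-1:ℝ) 1).indicator (fun t => ENNReal.ofReal (|t| ^ (-(3:ℝ)/4))) t with hG
  have hGm : Measurable ((Set.Ioc (-1:ℝ) 1).indicator (fun t : ℝ => ENNReal.ofReal (|t| ^ (-(3:ℝ)/4)))) := by
    refine Measurable.indicator ?_ measurableSet_Ioc
    fun_prop
  have hpt : ∀ t : ℝ, t ≠ 0 → ENNReal.ofReal (Fe ε t) ≤ G t := by
    intro t ht
    have e1 : Fe ε t ≤ |t| ^ (-(3:ℝ)/4) := by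
      unfold Fe
      have : |t| ^ (-(3:ℝ)/4) = (t ^ 2) ^ (-(3:ℝ)/8) := by
        rw [← sq_abs, ← Real.rpow_natCast, ← Real.rpow_mul (abs_nonneg t)]
        norm_num
      rw [this]
      exact Real.rpow_le_rpow_of_nonpos (by positivity) (by linarith) (by norm_num)
    by_cases h1 : t ∈ Set.Ioc (-1:ℝ) 1
    · rw [hG]
      simp only [Set.indicator_of_mem h1]
      exact (ENNReal.ofReal_le_ofReal e1).trans le_add_self
    · rw [hG]
      refine le_trans ?_ le_self_add
      rw [← ENNReal.ofReal_one]
      apply ENNReal.ofReal_le_ofReal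
      refine e1.trans (Real.rpow_le_one_of_one_le_of_nonpos ?_ (by norm_num))
      rw [Set.mem_Ioc, not_and_or] at h1
      rw [le_abs]
      rcases h1 with h1 | h1
      · right; linarith
      · left; linarith
  calc _ ≤ ∫⁻ a in Set.Icc (0:ℝ) 1, G (a + w) := by
        refine lintegral_mono_ae (ae_restrict_of_ae ?_)
        have : ∀ᵐ a : ℝ, a ≠ -w := by simp [ae_iff]
        filter_upwards [this] with a ha
        exact hpt _ fun h => ha (by linarith)
    _ = (∫⁻ a in Set.Icc (0:ℝ) 1, 1) + ∫⁻ a in Set.Icc (0:ℝ) 1, (Set.Ioc (-1:ℝ) 1).indicator (fun t => ENNReal.ofReal (|t| ^ (-(3:ℝ)/4))) (a + w) := by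
        rw [hG]
        exact lintegral_add_left measurable_const _
    _ ≤ 1 + ∫⁻ a : ℝ, (Set.Ioc (-1:ℝ) 1).indicator (fun t => ENNReal.ofReal (|t| ^ (-(3:ℝ)/4))) (a + w) := by
        gcongr
        · simp
        · exact Measure.restrict_le_self
    _ = 1 + ENNReal.ofReal K := by
        rw [lintegral_add_right_eq_self (μ := volume) (fun t => (Set.Ioc (-1:ℝ) 1).indicator (fun t => ENNReal.ofReal (|t| ^ (-(3:ℝ)/4))) t) w,
          lintegral_indicator measurableSet_Ioc, hK, ofReal_integral_eq_lintegral_ofReal pow_int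
            (Eventually.of_forall fun t => by positivity)]
    _ = _ := by rw [ENNReal.ofReal_add zero_le_one K0, ENNReal.ofReal_one]

lemma Fe_mul {ε X Y : ℝ} (hε : 0 < ε) :
    (X ^ 2 + Y ^ 2 + ε)⁻¹ ≤ ε ^ (-(1:ℝ)/4) * (Fe ε X * Fe ε Y) := by
  set P := X ^ 2 + Y ^ 2 + ε with hP
  have P0 : 0 < P := by positivity
  have a1 : P ^ (-(3:ℝ)/8) ≤ Fe ε X :=
    Real.rpow_le_rpow_of_nonpos (by positivity) (by nlinarith [sq_nonneg Y]) (by norm_num)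
  have a2 : P ^ (-(3:ℝ)/8) ≤ Fe ε Y :=
    Real.rpow_le_rpow_of_nonpos (by positivity) (by nlinarith [sq_nonneg X]) (by norm_num)
  have a3 : P ^ (-(1:ℝ)/4) ≤ ε ^ (-(1:ℝ)/4) :=
    Real.rpow_le_rpow_of_nonpos hε (by nlinarith [sq_nonneg X, sq_nonneg Y]) (by norm_num)
  calc P⁻¹ = P ^ (-(1:ℝ)/4) * (P ^ (-(3:ℝ)/8) * P ^ (-(3:ℝ)/8)) := by
        rw [← Real.rpow_add P0, ← Real.rpow_add P0, ← Real.rpow_neg_one]; norm_num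
    _ ≤ _ := by
      have := Fe_nonneg hε X
      gcongr

/-- pointwise bound for the integrand of the average -/
lemma avg_pt {ε : ℝ} (hε : 0 < ε) (hε1 : ε ≤ 1) {α β : ℂ} (h : 9 / 16 ≤ ‖α‖ ∨ 9 / 16 ≤ ‖β‖) :
    ∃ w1 w2 : ℝ, ∀ a b : ℝ, a ∈ Set.Icc (0:ℝ) 1 → b ∈ Set.Icc (0:ℝ) 1 →
      (‖α + ((a:ℂ) + b * Complex.I) * β‖ ^ 2 + ε)⁻¹ ≤
        ε ^ (-(1:ℝ)/4) * 25 + 16 * (ε ^ (-(1:ℝ)/4)) * (Fe ε (a + w1) * Fe ε (b + w2)) := by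
  have p0 : 1 ≤ ε ^ (-(1:ℝ)/4) := Real.one_le_rpow_of_pos_of_le_one_of_nonpos hε hε1 (by norm_num)
  by_cases hb : 1 / 4 ≤ ‖β‖
  · refine ⟨(α / β).re, (α / β).im, fun a b _ _ => ?_⟩
    set w := α / β with hw
    have hβ : β ≠ 0 := by
      intro h0; rw [h0] at hb; norm_num at hb
    have e1 : α + ((a:ℂ) + b * Complex.I) * β = (((a + w.re : ℝ) : ℂ) + (b + w.im : ℝ) * Complex.I) * β := by
      have : α = w * β := by rw [hw]; field_simp
      rw [this]
      nth_rewrite 1 [← Complex.re_add_im w]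
      push_cast
      ring
    have e2 : ‖α + ((a:ℂ) + b * Complex.I) * β‖ ^ 2 = ((a + w.re) ^ 2 + (b + w.im) ^ 2) * ‖β‖ ^ 2 := by
      rw [e1, norm_mul, mul_pow, ← Complex.normSq_eq_norm_sq, Complex.normSq_add_mul_I]
    set X := a + w.re
    set Y := b + w.im
    have e3 : (1:ℝ) / 16 ≤ ‖β‖ ^ 2 := by nlinarith
    have e4 : 1 / 16 * (X ^ 2 + Y ^ 2 + ε) ≤ (X ^ 2 + Y ^ 2) * ‖β‖ ^ 2 + ε := by
      have := mul_le_mul_of_nonneg_left e3 (add_nonneg (sq_nonneg X) (sq_nonneg Y))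
      linarith
    rw [e2]
    calc _ ≤ (1 / 16 * (X ^ 2 + Y ^ 2 + ε))⁻¹ := inv_anti₀ (by positivity) e4
      _ = 16 * (X ^ 2 + Y ^ 2 + ε)⁻¹ := by rw [mul_inv]; norm_num
      _ ≤ 16 * (ε ^ (-(1:ℝ)/4) * (Fe ε X * Fe ε Y)) := by gcongr; exact Fe_mul hε
      _ = 16 * (ε ^ (-(1:ℝ)/4)) * (Fe ε X * Fe ε Y) := by ring
      _ ≤ _ := by linarith
  · push Not at hb
    refine ⟨0, 0, fun a b ha hb' => ?_⟩
    have hα : 9 / 16 ≤ ‖α‖ := by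
      rcases h with h | h
      · exact h
      · linarith
    have z1 : ‖(a:ℂ) + b * Complex.I‖ ^ 2 ≤ 2 := by
      rw [← Complex.normSq_eq_norm_sq, Complex.normSq_add_mul_I]
      have h1 := ha.1; have h2 := ha.2; have h3 := hb'.1; have h4 := hb'.2
      nlinarith
    set ζ := (a:ℂ) + b * Complex.I
    have z2 : ‖ζ‖ ≤ 1.42 := by nlinarith [norm_nonneg ζ]
    have z3 : ‖ζ * β‖ ≤ 0.3551 := by
      rw [norm_mul]
      nlinarith [norm_nonneg ζ, norm_nonneg β]
    have z4 : ‖α‖ ≤ ‖α + ζ * β‖ + ‖ζ * β‖ := by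
      have := norm_sub_le (α + ζ * β) (ζ * β)
      simpa using this
    have z5 : (1:ℝ) / 5 ≤ ‖α + ζ * β‖ := by
      have z3' : ‖ζ * β‖ ≤ 3551 / 10000 := z3.trans (by norm_num)
      linarith
    have z6 : (1:ℝ) / 25 ≤ ‖α + ζ * β‖ ^ 2 + ε := by nlinarith
    calc _ ≤ (1 / 25 : ℝ)⁻¹ := inv_anti₀ (by norm_num) z6
      _ = 25 := by norm_num
      _ ≤ ε ^ (-(1:ℝ)/4) * 25 := by linarith
      _ ≤ _ := by
        have := Fe_nonneg hε (a + 0)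
        have := Fe_nonneg hε (b + 0)
        have : 0 ≤ 16 * ε ^ (-(1:ℝ)/4) * (Fe ε (a + 0) * Fe ε (b + 0)) := by positivity
        linarith

lemma avg : ∃ K : ℝ, 0 ≤ K ∧ ∀ ε : ℝ, 0 < ε → ε ≤ 1 → ∀ A B : Pt → ℂ, Continuous A → Continuous B →
    (∀ x ∈ B1, 9 / 16 ≤ ‖A x‖ ∨ 9 / 16 ≤ ‖B x‖) →
    ∃ ζ : ℂ, ‖ζ‖ ≤ 2 ∧ ∫ x in B1, sig ε (fun y => A y + ζ * B y) x ≤ K * ε ^ (-(1:ℝ)/4) := by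
  obtain ⟨L, L0, hL⟩ := Fe_int
  refine ⟨π * (25 + 16 * L ^ 2), by positivity, fun ε hε hε1 A B hA hB hAB => ?_⟩
  set p := ε ^ (-(1:ℝ)/4) with hp
  have p0 : 0 < p := by positivity
  set I := volume.restrict (Set.Icc (0:ℝ) 1) with hI
  have : IsProbabilityMeasure I := ⟨by simp [hI]⟩
  set μ := I.prod I with hμ
  set f : ℝ × ℝ → Pt → ℝ := fun z x => sig ε (fun y => A y + ((z.1 : ℂ) + z.2 * Complex.I) * B y) x with hf
  have fc : Continuous (Function.uncurry f) := by
    simp only [hf, Function.uncurry_def]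
    unfold sig
    refine Continuous.inv₀ (by fun_prop) fun x => ?_
    positivity
  have fm : Measurable (fun q : (ℝ × ℝ) × Pt => ENNReal.ofReal (Function.uncurry f q)) := fc.measurable.ennreal_ofReal
  have hIx : ∀ x ∈ B1, ∫⁻ z, ENNReal.ofReal (f z x) ∂μ ≤ ENNReal.ofReal (p * (25 + 16 * L ^ 2)) := by
    intro x hx
    obtain ⟨w1, w2, hw⟩ := avg_pt hε hε1 (hAB x hx)
    have hae : ∀ᵐ z ∂μ, z ∈ Set.Icc (0:ℝ) 1 ×ˢ Set.Icc (0:ℝ) 1 := by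
      rw [hμ, hI, Measure.prod_restrict]
      exact ae_restrict_mem (measurableSet_Icc.prod measurableSet_Icc)
    have m1 : Measurable fun a : ℝ => ENNReal.ofReal (Fe ε (a + w1)) :=
      ((Fe_cont hε).comp (by fun_prop : Continuous fun a : ℝ => a + w1)).measurable.ennreal_ofReal
    have m2 : Measurable fun a : ℝ => ENNReal.ofReal (Fe ε (a + w2)) :=
      ((Fe_cont hε).comp (by fun_prop : Continuous fun a : ℝ => a + w2)).measurable.ennreal_ofReal
    calc ∫⁻ z, ENNReal.ofReal (f z x) ∂μ
        ≤ ∫⁻ z, (ENNReal.ofReal (p * 25) + ENNReal.ofReal (16 * p) * (ENNReal.ofReal (Fe ε (z.1 + w1)) * ENNReal.ofReal (Fe ε (z.2 + w2)))) ∂μ := by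
          refine lintegral_mono_ae ?_
          filter_upwards [hae] with z hz
          have := hw z.1 z.2 hz.1 hz.2
          have n1 := Fe_nonneg hε (z.1 + w1)
          have n2 := Fe_nonneg hε (z.2 + w2)
          rw [← ENNReal.ofReal_mul n1, ← ENNReal.ofReal_mul (by positivity), ← ENNReal.ofReal_add (by positivity) (by positivity)]
          exact ENNReal.ofReal_le_ofReal this
      _ = ENNReal.ofReal (p * 25) + ENNReal.ofReal (16 * p) * ((∫⁻ a, ENNReal.ofReal (Fe ε (a + w1)) ∂I) * ∫⁻ a, ENNReal.ofReal (Fe ε (a + w2)) ∂I) := by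
          rw [lintegral_add_left measurable_const, lintegral_const, lintegral_const_mul' _ _ ENNReal.ofReal_ne_top,
            hμ, lintegral_prod_mul m1.aemeasurable m2.aemeasurable]
          simp
      _ ≤ ENNReal.ofReal (p * 25) + ENNReal.ofReal (16 * p) * (ENNReal.ofReal L * ENNReal.ofReal L) := by
          gcongr
          · exact hL ε hε w1
          · exact hL ε hε w2
      _ = _ := by
          rw [← ENNReal.ofReal_mul L0, ← ENNReal.ofReal_mul (by positivity), ← ENNReal.ofReal_add (by positivity) (by positivity)]
          congr 1; ring
  have hav : ∫⁻ z, (∫⁻ x in B1, ENNReal.ofReal (f z x)) ∂μ ≤ ENNReal.ofReal (π * (25 + 16 * L ^ 2) * p) := by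
    rw [lintegral_lintegral_swap (f := fun z x => ENNReal.ofReal (f z x)) fm.aemeasurable]
    calc _ ≤ ∫⁻ x in B1, ENNReal.ofReal (p * (25 + 16 * L ^ 2)) := lintegral_mono_ae (aeB1 hIx)
      _ = _ := by
        rw [setLIntegral_const, volB1, ← ENNReal.ofReal_mul (by positivity)]
        congr 1; ring
  have hnull : μ (Set.Icc (0:ℝ) 1 ×ˢ Set.Icc (0:ℝ) 1)ᶜ = 0 := by
    have hae : ∀ᵐ z ∂μ, z ∈ Set.Icc (0:ℝ) 1 ×ˢ Set.Icc (0:ℝ) 1 := by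
      rw [hμ, hI, Measure.prod_restrict]
      exact ae_restrict_mem (measurableSet_Icc.prod measurableSet_Icc)
    exact hae
  obtain ⟨z, hz, hz2⟩ := exists_notMem_null_le_lintegral (μ := μ) (f := fun z => ∫⁻ x in B1, ENNReal.ofReal (f z x))
    (Measurable.lintegral_prod_right' fm).aemeasurable hnull
  rw [Set.notMem_compl_iff] at hz
  refine ⟨(z.1 : ℂ) + z.2 * Complex.I, ?_, ?_⟩
  · refine (norm_add_le _ _).trans ?_
    rw [norm_mul, Complex.norm_I, mul_one, Complex.norm_real, Complex.norm_real, Real.norm_of_nonneg hz.1.1, Real.norm_of_nonneg hz.2.1]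
    linarith [hz.1.2, hz.2.2]
  · have fz : Continuous (f z) := by
      have := fc.comp (Continuous.prodMk_right z)
      exact this
    have h3 := hz2.trans hav
    rw [← ofReal_integral_eq_lintegral_ofReal (cont_int fz) (Eventually.of_forall fun x => (sig_facts hε _ x).1.le)] at h3
    exact (ENNReal.ofReal_le_ofReal_iff (by positivity)).1 h3

/-! ### The trial vortex configuration -/

def chi (z : ℝ) : ℝ := (max (1 - z ^ 2) 0) ^ 2

lemma chi_deriv (z : ℝ) : HasDerivAt chi (-4 * z * max (1 - z ^ 2) 0) z := by
  have h1 : HasDerivAt (fun z : ℝ => 1 - z ^ 2) (-(2 * z)) z := by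
    have := (hasDerivAt_pow 2 z).const_sub 1
    simpa using this
  have h2' := HasDerivAt.comp z (hasDerivAt_pos2 (1 - z ^ 2)) h1
  have h2 : HasDerivAt chi _ z := h2'
  have h4 : -4 * z * max (1 - z ^ 2) 0 = 2 * max (1 - z ^ 2) 0 * -(2 * z) := by ring
  rw [h4]; exact h2

lemma chi_zero {z : ℝ} (hz : 1 ≤ |z|) : max (1 - z ^ 2) 0 = 0 := by
  apply max_eq_right
  have : 1 ≤ |z| ^ 2 := by nlinarith
  rw [sq_abs] at this
  linarith

lemma chi_bd (z : ℝ) : |z| * chi z ≤ 1 ∧ |(-4) * z * max (1 - z ^ 2) 0| ≤ 4 ∧ 0 ≤ chi z := by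
  by_cases hz : 1 ≤ |z|
  · unfold chi; rw [chi_zero hz]; norm_num
  · push Not at hz
    have h0 := abs_nonneg z
    have h1 : max (1 - z ^ 2) 0 ≤ 1 := max_le (by nlinarith [sq_nonneg z]) zero_le_one
    have h2 : 0 ≤ max (1 - z ^ 2) 0 := le_max_right _ _
    refine ⟨?_, ?_, by unfold chi; positivity⟩
    · unfold chi; nlinarith
    · rw [abs_mul, abs_mul, abs_of_nonneg h2]; norm_num; nlinarith

lemma chi_half {z : ℝ} (hz : |z| ≤ 1 / 2) : 9 / 16 ≤ chi z := by
  unfold chi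
  have h0 := abs_nonneg z
  have : z ^ 2 ≤ 1 / 4 := by rw [← sq_abs]; nlinarith
  have h1 : 3 / 4 ≤ max (1 - z ^ 2) 0 := le_max_of_le_left (by linarith)
  nlinarith

def th (Ω l : ℝ) (j : ℤ) (x : Pt) : ℝ := Ω / 2 * (x 0 * x 1) - Ω * l * j * x 0
def ph (Ω l : ℝ) (j : ℤ) (x : Pt) : ℂ := Complex.exp ((th Ω l j x : ℝ) * Complex.I)
def ee (Ω l : ℝ) (j : ℤ) (x : Pt) : ℂ := (chi (x 1 / l - j) : ℂ) * ph Ω l j x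

lemma coordD (i : Fin 2) (x : Pt) : HasFDerivAt (fun y : Pt => y i) (EuclideanSpace.proj i : Pt →L[ℝ] ℝ) x :=
  (EuclideanSpace.proj i : Pt →L[ℝ] ℝ).hasFDerivAt

lemma th_deriv (Ω l : ℝ) (j : ℤ) (x : Pt) : DifferentiableAt ℝ (th Ω l j) x ∧
    fderiv ℝ (th Ω l j) x e0 = Ω / 2 * x 1 - Ω * l * j ∧ fderiv ℝ (th Ω l j) x e1 = Ω / 2 * x 0 := by
  have h : HasFDerivAt (th Ω l j) _ x :=
    (((coordD 0 x).mul (coordD 1 x)).const_mul (Ω / 2)).sub ((coordD 0 x).const_mul (Ω * l * j))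
  refine ⟨h.differentiableAt, ?_, ?_⟩ <;> rw [h.fderiv] <;> simp

lemma ph_deriv (Ω l : ℝ) (j : ℤ) (x : Pt) : DifferentiableAt ℝ (ph Ω l j) x ∧
    Da Ω (ph Ω l j) x = Complex.I * ((Ω * (x 1 - l * j) : ℝ) : ℂ) * ph Ω l j x ∧ Db Ω (ph Ω l j) x = 0 := by
  obtain ⟨t1, t2, t3⟩ := th_deriv Ω l j x
  have h1' := (Complex.ofRealCLM.hasFDerivAt.comp x t1.hasFDerivAt).mul_const Complex.I
  have h1 : HasFDerivAt (fun y => (th Ω l j y : ℂ) * Complex.I) _ x := h1'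
  have h2 : HasFDerivAt (ph Ω l j) _ x := h1.cexp
  refine ⟨h2.differentiableAt, ?_, ?_⟩
  · unfold Da pd1
    rw [h2.fderiv]
    simp [t2]
    unfold ph
    ring
  · unfold Db pd2
    rw [h2.fderiv]
    simp [t3]
    unfold ph
    ring

lemma chiD (l : ℝ) (j : ℤ) (x : Pt) : DifferentiableAt ℝ (fun y : Pt => chi (y 1 / l - j)) x ∧
    fderiv ℝ (fun y : Pt => chi (y 1 / l - j)) x e0 = 0 ∧
    fderiv ℝ (fun y : Pt => chi (y 1 / l - j)) x e1 = -4 * (x 1 / l - j) * max (1 - (x 1 / l - j) ^ 2) 0 * l⁻¹ := by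
  have h1' := (((coordD 1 x).mul_const l⁻¹).sub_const (j:ℝ))
  have h1 : HasFDerivAt (fun y : Pt => y 1 * l⁻¹ - j) _ x := h1'
  have h2' := (chi_deriv (x 1 * l⁻¹ - j)).comp_hasFDerivAt x h1
  have h2 : HasFDerivAt (fun y : Pt => chi (y 1 / l - j)) _ x := h2'
  refine ⟨h2.differentiableAt, ?_, ?_⟩ <;> rw [h2.fderiv] <;> simp [div_eq_mul_inv]

lemma norm_ph (Ω l : ℝ) (j : ℤ) (x : Pt) : ‖ph Ω l j x‖ = 1 := by
  unfold ph; exact Complex.norm_exp_ofReal_mul_I _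

lemma norm_ee (Ω l : ℝ) (j : ℤ) (x : Pt) : ‖ee Ω l j x‖ = chi (x 1 / l - j) := by
  unfold ee
  rw [norm_mul, norm_ph, mul_one, Complex.norm_real, Real.norm_of_nonneg (chi_bd _).2.2]

lemma ee_deriv {Ω l : ℝ} (hΩ : 0 ≤ Ω) (hl : 0 < l) (j : ℤ) (x : Pt) : DifferentiableAt ℝ (ee Ω l j) x ∧
    ‖Da Ω (ee Ω l j) x‖ ≤ Ω * l ∧ ‖Db Ω (ee Ω l j) x‖ ≤ 4 / l ∧
    (1 ≤ |x 1 / l - j| → ee Ω l j x = 0 ∧ Da Ω (ee Ω l j) x = 0 ∧ Db Ω (ee Ω l j) x = 0) := by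
  obtain ⟨p1, p2, p3⟩ := ph_deriv Ω l j x
  obtain ⟨c1, c2, c3⟩ := chiD l j x
  obtain ⟨b1, b2, b3⟩ := chi_bd (x 1 / l - j)
  have hDa := Da_smul Ω p1 c1
  have hDb := Db_smul Ω p1 c1
  have hDa' : Da Ω (ee Ω l j) x = (chi (x 1 / l - j) : ℂ) * (Complex.I * ((Ω * (x 1 - l * j) : ℝ) : ℂ) * ph Ω l j x) := by
    have := hDa
    rw [c2, p2, Complex.ofReal_zero, zero_mul, add_zero] at this
    exact this
  have hDb' : Db Ω (ee Ω l j) x = ((-4 * (x 1 / l - j) * max (1 - (x 1 / l - j) ^ 2) 0 * l⁻¹ : ℝ) : ℂ) * ph Ω l j x := by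
    have := hDb
    rw [c3, p3, mul_zero, zero_add] at this
    exact this
  refine ⟨?_, ?_, ?_, fun hz => ?_⟩
  · have : DifferentiableAt ℝ (fun y : Pt => ((chi (y 1 / l - j) : ℝ) : ℂ)) x := by
      have := (Complex.ofRealCLM.hasFDerivAt.comp x c1.hasFDerivAt).differentiableAt
      exact this
    exact this.mul p1
  · rw [hDa', norm_mul, norm_mul, norm_mul, norm_ph, Complex.norm_I, Complex.norm_real, Complex.norm_real,
      Real.norm_of_nonneg b3, Real.norm_eq_abs]
    have : x 1 - l * j = l * (x 1 / l - j) := by field_simp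
    rw [this, abs_mul, abs_mul, abs_of_nonneg hΩ, abs_of_pos hl]
    have := mul_le_mul_of_nonneg_left b1 (by positivity : 0 ≤ Ω * l)
    linarith
  · rw [hDb', norm_mul, norm_ph, Complex.norm_real, Real.norm_eq_abs, abs_mul, mul_one, abs_of_pos (inv_pos.2 hl), div_eq_mul_inv 4]
    exact mul_le_mul_of_nonneg_right b2 (inv_pos.2 hl).le
  · have h0 := chi_zero hz
    have hc : chi (x 1 / l - j) = 0 := by unfold chi; rw [h0]; norm_num
    refine ⟨?_, ?_, ?_⟩
    · unfold ee; rw [hc]; simp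
    · rw [hDa', hc]; simp
    · rw [hDb', h0]; simp

lemma Da_sum (Ω : ℝ) (s : Finset ℤ) (f : ℤ → Pt → ℂ) (x : Pt) (hf : ∀ k, DifferentiableAt ℝ (f k) x) :
    Da Ω (fun y => ∑ k ∈ s, f k y) x = ∑ k ∈ s, Da Ω (f k) x ∧
    Db Ω (fun y => ∑ k ∈ s, f k y) x = ∑ k ∈ s, Db Ω (f k) x := by
  unfold Da Db pd1 pd2
  rw [fderiv_fun_sum fun k _ => hf k, Finset.sum_add_distrib, Finset.sum_sub_distrib, Finset.mul_sum, Finset.mul_sum]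
  simp

lemma Da_comb (Ω : ℝ) {f g : Pt → ℂ} {x : Pt} (hf : DifferentiableAt ℝ f x) (hg : DifferentiableAt ℝ g x) (c : ℂ) :
    Da Ω (fun y => f y + c * g y) x = Da Ω f x + c * Da Ω g x ∧
    Db Ω (fun y => f y + c * g y) x = Db Ω f x + c * Db Ω g x := by
  unfold Da Db pd1 pd2
  rw [fderiv_fun_add hf (hg.const_mul c), fderiv_const_mul hg]
  simp
  constructor <;> ring

/-- sum over one parity class: `j = 2 k + i` -/
def Sm (Ω l : ℝ) (N : ℕ) (i : ℤ) (x : Pt) : ℂ := ∑ k ∈ Finset.Icc (-(N:ℤ)) N, ee Ω l (2 * k + i) x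

lemma Sm_single {Ω l : ℝ} (hΩ : 0 ≤ Ω) (hl : 0 < l) {N : ℕ} {i k0 : ℤ} {x : Pt}
    (hk : k0 ∈ Finset.Icc (-(N:ℤ)) N) (hd : |x 1 / l - (2 * k0 + i : ℤ)| ≤ 1) :
    Sm Ω l N i x = ee Ω l (2 * k0 + i) x ∧ ‖Da Ω (Sm Ω l N i) x‖ ≤ Ω * l ∧ ‖Db Ω (Sm Ω l N i) x‖ ≤ 4 / l := by
  have key : ∀ k : ℤ, k ≠ k0 → 1 ≤ |x 1 / l - (2 * k + i : ℤ)| := by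
    intro k hkk
    have h1 : (2:ℝ) ≤ |((2 * k0 + i : ℤ) : ℝ) - (2 * k + i : ℤ)| := by
      have : (1:ℤ) ≤ |k0 - k| := Int.one_le_abs (sub_ne_zero.2 hkk.symm)
      have h2 : (1:ℝ) ≤ |(k0:ℝ) - k| := by exact_mod_cast this
      have h3 : ((2 * k0 + i : ℤ) : ℝ) - (2 * k + i : ℤ) = 2 * ((k0:ℝ) - k) := by push_cast; ring
      rw [h3, abs_mul, abs_of_pos two_pos]
      linarith
    have h2 := abs_sub_le ((2 * k0 + i : ℤ) : ℝ) (x 1 / l) (2 * k + i : ℤ)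
    rw [abs_sub_comm] at hd
    linarith
  obtain ⟨s1, s2⟩ := Da_sum Ω (Finset.Icc (-(N:ℤ)) N) (fun k => ee Ω l (2 * k + i)) x fun k => (ee_deriv hΩ hl _ x).1
  obtain ⟨_, t1, t2, _⟩ := ee_deriv hΩ hl (2 * k0 + i) x
  refine ⟨?_, ?_, ?_⟩
  · exact Finset.sum_eq_single_of_mem k0 hk fun k _ hkk => ((ee_deriv hΩ hl _ x).2.2.2 (key k hkk)).1
  · have e : Da Ω (Sm Ω l N i) x = Da Ω (ee Ω l (2 * k0 + i)) x :=
      s1.trans (Finset.sum_eq_single_of_mem k0 hk fun k _ hkk => ((ee_deriv hΩ hl _ x).2.2.2 (key k hkk)).2.1)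
    rw [e]; exact t1
  · have e : Db Ω (Sm Ω l N i) x = Db Ω (ee Ω l (2 * k0 + i)) x :=
      s2.trans (Finset.sum_eq_single_of_mem k0 hk fun k _ hkk => ((ee_deriv hΩ hl _ x).2.2.2 (key k hkk)).2.2)
    rw [e]; exact t2

lemma Sm_diff {Ω l : ℝ} (hΩ : 0 ≤ Ω) (hl : 0 < l) (N : ℕ) (i : ℤ) (x : Pt) : DifferentiableAt ℝ (Sm Ω l N i) x := by
  have : DifferentiableAt ℝ (fun y => ∑ k ∈ Finset.Icc (-(N:ℤ)) N, ee Ω l (2 * k + i) y) x :=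
    DifferentiableAt.fun_sum fun k _ => (ee_deriv hΩ hl _ x).1
  exact this

lemma vortex {Ω l : ℝ} (hΩ : 0 ≤ Ω) (hl : 0 < l) : ∃ A B : Pt → ℂ,
    (∀ x, DifferentiableAt ℝ A x) ∧ (∀ x, DifferentiableAt ℝ B x) ∧
    (∀ x ∈ B1, 9 / 16 ≤ ‖A x‖ ∨ 9 / 16 ≤ ‖B x‖) ∧
    ∀ x ∈ B1, ‖Da Ω A x‖ ≤ Ω * l ∧ ‖Db Ω A x‖ ≤ 4 / l ∧ ‖Da Ω B x‖ ≤ Ω * l ∧ ‖Db Ω B x‖ ≤ 4 / l := by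
  obtain ⟨N, hN⟩ := exists_nat_ge (1 / l + 2)
  have main : ∀ x ∈ B1, ∃ k m : ℤ, k ∈ Finset.Icc (-(N:ℤ)) N ∧ m ∈ Finset.Icc (-(N:ℤ)) N ∧
      |x 1 / l - (2 * k + 0 : ℤ)| ≤ 1 ∧ |x 1 / l - (2 * m + 1 : ℤ)| ≤ 1 ∧
      (|x 1 / l - (2 * k + 0 : ℤ)| ≤ 1 / 2 ∨ |x 1 / l - (2 * m + 1 : ℤ)| ≤ 1 / 2) := by
    intro x hx
    set z := x 1 / l with hz
    have hzb : |z| ≤ 1 / l := by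
      rw [hz, abs_div, abs_of_pos hl]
      gcongr
      exact (sq_le_one_iff_abs_le_one _).1 (coord_le hx 1)
    obtain ⟨z1, z2⟩ := abs_le.1 hzb
    set k := round (z / 2) with hk
    set m := ⌊z / 2⌋ with hm
    have k1 : |z / 2 - k| ≤ 1 / 2 := abs_sub_round _
    obtain ⟨k2, k3⟩ := abs_le.1 k1
    have m1 : (m:ℝ) ≤ z / 2 := Int.floor_le _
    have m2 : z / 2 < m + 1 := Int.lt_floor_add_one _
    have ll : 0 < 1 / l := by positivity
    refine ⟨k, m, ?_, ?_, ?_, ?_, ?_⟩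
    · rw [Finset.mem_Icc]
      constructor
      · have : (-(N:ℝ)) ≤ k := by linarith
        exact_mod_cast this
      · have : (k:ℝ) ≤ N := by linarith
        exact_mod_cast this
    · rw [Finset.mem_Icc]
      constructor
      · have : (-(N:ℝ)) ≤ m := by linarith
        exact_mod_cast this
      · have : (m:ℝ) ≤ N := by linarith
        exact_mod_cast this
    · push_cast; rw [abs_le]; constructor <;> linarith
    · push_cast; rw [abs_le]; constructor <;> linarith
    · by_cases c1 : z / 2 - m < 1 / 4
      · left
        have := round_le (z / 2) m
        rw [← hk, abs_of_nonneg (by linarith : 0 ≤ z / 2 - m)] at this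
        obtain ⟨a1, a2⟩ := abs_le.1 this
        push_cast; rw [abs_le]; constructor <;> linarith
      · by_cases c2 : 3 / 4 < z / 2 - m
        · left
          have := round_le (z / 2) (m + 1)
          push_cast at this
          rw [← hk, abs_of_nonpos (by linarith : z / 2 - (m + 1) ≤ 0)] at this
          obtain ⟨a1, a2⟩ := abs_le.1 this
          push_cast; rw [abs_le]; constructor <;> linarith
        · right
          push_cast; rw [abs_le]; constructor <;> linarith
  refine ⟨Sm Ω l N 0, Sm Ω l N 1, Sm_diff hΩ hl N 0, Sm_diff hΩ hl N 1, fun x hx => ?_, fun x hx => ?_⟩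
  · obtain ⟨k, m, a1, a2, a3, a4, a5⟩ := main x hx
    rw [(Sm_single hΩ hl a1 a3).1, (Sm_single hΩ hl a2 a4).1, norm_ee, norm_ee]
    exact a5.imp chi_half chi_half
  · obtain ⟨k, m, a1, a2, a3, a4, a5⟩ := main x hx
    obtain ⟨_, b1, b2⟩ := Sm_single hΩ hl a1 a3
    obtain ⟨_, b3, b4⟩ := Sm_single hΩ hl a2 a4
    exact ⟨b1, b2, b3, b4⟩

lemma Gf_bd {Ω₀ : ℝ} (h : 4 / Real.sqrt π < Ω₀) : ∃ C : ℝ, 0 ≤ C ∧ ∀ᶠ ε in nhdsWithin (0:ℝ) (Set.Ioi 0),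
    ∃ ψ : Pt → ℂ, gpAdm ψ ∧ Gf ε Ω₀ ψ ≤ C * ε ^ ((3:ℝ)/4) := by
  obtain ⟨K, K0, hK⟩ := avg
  have hΩ0 := (R0_sq_le h).2.2.2
  have hM := Mw_pos Ω₀
  refine ⟨Ctr Ω₀ (9 * Ω₀ ^ 2 + 144) K, by unfold Ctr; positivity, ?_⟩
  have t1 : Tendsto (fun ε : ℝ => π / 2 * Real.sqrt ε + Mw Ω₀ * (K * ε ^ ((3:ℝ)/4))) (nhdsWithin (0:ℝ) (Set.Ioi 0)) (nhds 0) := by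
    have c : Continuous (fun ε : ℝ => π / 2 * Real.sqrt ε + Mw Ω₀ * (K * ε ^ ((3:ℝ)/4))) := by
      have : Continuous fun ε : ℝ => ε ^ ((3:ℝ)/4) := Real.continuous_rpow_const (by norm_num)
      fun_prop
    have := c.tendsto 0
    rw [Real.sqrt_zero, Real.zero_rpow (by norm_num)] at this
    simp only [mul_zero, add_zero] at this
    exact this.mono_left nhdsWithin_le_nhds
  have t2 := t1.eventually (gt_mem_nhds (by norm_num : (0:ℝ) < 1 / 2))
  have t3 : ∀ᶠ ε in nhdsWithin (0:ℝ) (Set.Ioi 0), ε < 1 :=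
    nhdsWithin_le_nhds (gt_mem_nhds zero_lt_one)
  filter_upwards [t2, t3, self_mem_nhdsWithin] with ε h2 h3 hε
  have hε : 0 < ε := hε
  have hl : 0 < Real.sqrt ε := Real.sqrt_pos.2 hε
  have hl2 := Real.sq_sqrt hε.le
  obtain ⟨A, B, dA, dB, hAB, hk⟩ := vortex (Ω := Ω₀ / ε) (by positivity) hl
  obtain ⟨ζ, z1, z2⟩ := hK ε hε h3.le A B (continuous_iff_continuousAt.2 fun x => (dA x).continuousAt)
    (continuous_iff_continuousAt.2 fun x => (dB x).continuousAt) hAB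
  refine trial (v := fun y => A y + ζ * B y) hε h3.le h (fun x => (dA x).add ((dB x).const_mul ζ)) (by positivity) K0 ?_ ?_ ?_ ?_ h2.le
  · intro x hx
    obtain ⟨a1, a2, a3, a4⟩ := hk x hx
    obtain ⟨b1, b2⟩ := Da_comb (Ω₀ / ε) (dA x) (dB x) ζ
    have f : ∀ (α β : ℂ) (c : ℝ), ‖α‖ ≤ c → ‖β‖ ≤ c → ‖α + ζ * β‖ ^ 2 ≤ 9 * c ^ 2 := by
      intro α β c hα hβ
      have h1 : ‖α + ζ * β‖ ≤ 3 * c := by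
        have := norm_add_le α (ζ * β)
        rw [norm_mul] at this
        have := mul_le_mul z1 hβ (norm_nonneg _) (by norm_num)
        linarith
      calc _ ≤ (3 * c) ^ 2 := pow_le_pow_left₀ (norm_nonneg _) h1 2
        _ = _ := by ring
    unfold kin
    rw [b1, b2]
    have c1 := f _ _ _ a1 a3
    have c2 := f _ _ _ a2 a4
    refine (add_le_add c1 c2).trans (le_of_eq ?_)
    rw [mul_pow, div_pow, div_pow, hl2]
    field_simp
    ring
  · calc _ ≤ ε * (K * ε ^ (-(1:ℝ)/4)) := by gcongr
      _ = K * (ε ^ (1:ℝ) * ε ^ (-(1:ℝ)/4)) := by rw [Real.rpow_one]; ring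
      _ = _ := by rw [← Real.rpow_add hε]; norm_num
  · have := Real.rpow_le_rpow_of_exponent_ge hε h3.le (by norm_num : (3:ℝ)/4 ≤ 1)
    rwa [Real.rpow_one] at this
  · exact Real.rpow_le_one hε.le h3.le (by norm_num)

lemma tau_bd {Ω₀ : ℝ} (h : 4 / Real.sqrt π < Ω₀) : ∃ C : ℝ, ∀ᶠ ε in nhdsWithin (0:ℝ) (Set.Ioi 0),
    ∀ Ψ : Pt → ℂ, IsGPMinimizer ε (Ω₀ / ε) Ψ → tau ε Ω₀ Ψ ≤ C * ε ^ ((3:ℝ)/8) := by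
  obtain ⟨C, C0, hC⟩ := Gf_bd h
  refine ⟨3 * C + Tf Ω₀, ?_⟩
  have t3 : ∀ᶠ ε in nhdsWithin (0:ℝ) (Set.Ioi 0), ε < 1 :=
    nhdsWithin_le_nhds (gt_mem_nhds zero_lt_one)
  filter_upwards [hC, t3, self_mem_nhdsWithin] with ε h2 h3 hε Ψ hΨ
  have hε : 0 < ε := hε
  obtain ⟨ψ, p1, p2⟩ := h2
  have hG := (Gf_min hε h hΨ p1).trans p2
  set r := ε ^ ((3:ℝ)/8) with hr
  have r0 : 0 < r := by positivity
  have r1 : r ≤ 1 := Real.rpow_le_one hε.le h3.le (by norm_num)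
  have r2 : ε ^ ((3:ℝ)/4) = r ^ 2 := by
    rw [hr, ← Real.rpow_natCast, ← Real.rpow_mul hε.le]; norm_num
  rw [r2] at hG
  have hT := tau_le (ε := ε) h (gpAdm_iff.1 hΨ.1).1 r0
  calc _ ≤ _ := hT
    _ ≤ (2 + 1 / r) * (C * r ^ 2) + r * Tf Ω₀ := by gcongr
    _ = 2 * C * (r * r) + C * r + r * Tf Ω₀ := by field_simp
    _ ≤ 2 * C * (r * 1) + C * r + r * Tf Ω₀ := by gcongr
    _ = _ := by ring

/-! ### Conclusion -/

set_option maxHeartbeats 2000000 in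
lemma core {ε Ω₀ e : ℝ} (he : 0 < e) (he1 : e ≤ 1) (heε : e ^ 3 = ε) (h : 4 / Real.sqrt π < Ω₀) {Ψ : Pt → ℂ}
    (hΨ : IsGPMinimizer ε (Ω₀ / ε) Ψ) (hτ : tau ε Ω₀ Ψ ≤ Ω₀ ^ 2 * R0 Ω₀ * e / 16) {x : Pt}
    (hx : ‖x‖ ≤ R0 Ω₀ - e) :
    ‖Ψ x‖ ^ 2 ≤ (131072 * Real.exp 2 / (R0 Ω₀ ^ 3 * Ω₀ ^ 2) / c00) * e *
      Real.exp (-(2 * Real.sqrt (Ω₀ ^ 2 * R0 Ω₀ / 512) * R0 Ω₀ * (R0 Ω₀ - e - ‖x‖) ^ 2 / e ^ 2)) := by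
  have hε : 0 < ε := by rw [← heε]; positivity
  obtain ⟨_, hR, hR1, hΩ⟩ := R0_sq_le h
  set R := R0 Ω₀ with hRdef
  have hc := c00_pos
  obtain ⟨hp, hm⟩ := gpAdm_iff.1 hΨ.1
  set d := R - e - ‖x‖ with hd
  have d0 : 0 ≤ d := by rw [hd]; linarith
  have d1 : d ≤ 1 := by have := norm_nonneg x; rw [hd]; linarith
  set s := R ^ 2 - R * e / 2 with hs
  set β := Ω₀ ^ 2 * R * e / 16 with hβ
  have β0 : 0 < β := by positivity
  set Γ := Real.sqrt (β / 32) / ε with hΓ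
  have Γ0 : 0 ≤ Γ := by positivity
  have hV : ∀ y : Pt, ‖y‖ ^ 2 < s → β ≤ -(2 * VV Ω₀ y) - tau ε Ω₀ Ψ := by
    intro y hy
    have h1 : R * e / 2 ≤ R ^ 2 - ‖y‖ ^ 2 := by rw [hs] at hy; linarith
    have h2 := mul_le_mul_of_nonneg_left h1 (by positivity : 0 ≤ Ω₀ ^ 2 / 4)
    have h3 : -(2 * VV Ω₀ y) = Ω₀ ^ 2 / 4 * (R ^ 2 - ‖y‖ ^ 2) := by
      unfold VV; rw [← hRdef]; ring
    rw [h3]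
    have h4 : Ω₀ ^ 2 / 4 * (R * e / 2) = 2 * β := by rw [hβ]; ring
    linarith
  have hag := agmon hε h hΨ (s := s) Γ0 β0 (fun y _ => hV y) (by
    rw [hΓ, div_pow, Real.sq_sqrt (by positivity)]
    apply le_of_eq
    field_simp
    norm_num)
  set a := (e / 4) ^ 2 with ha
  have a0 : 0 < a := by positivity
  have hsa : Real.sqrt a = e / 4 := Real.sqrt_sq (by positivity)
  have hball : ∀ y ∈ Metric.closedBall x (Real.sqrt a), ‖y‖ < 1 ∧ R * (d + e / 4) ≤ s - ‖y‖ ^ 2 := by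
    intro y hy
    rw [hsa, mem_closedBall_iff_norm] at hy
    have h1 : ‖y‖ ≤ ‖x‖ + ‖y - x‖ := by
      have := norm_add_le x (y - x)
      simpa using this
    have h2 : ‖y‖ ≤ R - d - 3 / 4 * e := by rw [hd]; linarith
    have h0 := norm_nonneg y
    refine ⟨by linarith, ?_⟩
    have h3 : ‖y‖ ^ 2 ≤ R * (R - d - 3 / 4 * e) := by nlinarith
    rw [hs]; linarith
  have hpos : 0 < R * (d + e / 4) := by positivity
  have hmv := meanval hε h hΨ a0 (x := x) (fun y hy => mem_B1.2 (hball y hy).1)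
    (fun y hy => β0.le.trans (hV y (by have := (hball y hy).2; linarith)))
  set D := Real.exp (-(2 * Γ * (R * d))) with hD
  have agc : Continuous (agG Γ) := continuous_iff_continuousAt.2 fun t => (agG_deriv Γ t).continuousAt
  have i1 : IntegrableOn (fun y => ‖Ψ y‖ ^ 2 * ((a ^ 3)⁻¹ * pp a x y ^ 2)) B1 := by
    have := mul_cont_int (w := fun y => (a ^ 3)⁻¹ * pp a x y ^ 2) (by have := pp_cont a x; fun_prop) hp.i2
    refine this.congr (Eventually.of_forall fun y => ?_)
    simp only; ring
  have i2 : IntegrableOn (fun y => agG Γ (s - ‖y - 0‖ ^ 2) * ‖Ψ y‖ ^ 2) B1 :=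
    mul_cont_int (w := fun y => agG Γ (s - ‖y - 0‖ ^ 2)) (by fun_prop) hp.i2
  have ag0 : ∀ t, 0 ≤ agG Γ t := fun t => by unfold agG; positivity
  have hcmp : ∀ y ∈ B1, ‖Ψ y‖ ^ 2 * ((a ^ 3)⁻¹ * pp a x y ^ 2) ≤
      (a⁻¹ * (16 / (R ^ 2 * e ^ 2)) * D) * (agG Γ (s - ‖y - 0‖ ^ 2) * ‖Ψ y‖ ^ 2) := by
    intro y _
    have rhs0 : 0 ≤ (a⁻¹ * (16 / (R ^ 2 * e ^ 2)) * D) * (agG Γ (s - ‖y - 0‖ ^ 2) * ‖Ψ y‖ ^ 2) := by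
      have := ag0 (s - ‖y - 0‖ ^ 2)
      positivity
    by_cases hy : y ∈ Metric.closedBall x (Real.sqrt a)
    · have hq := (hball y hy).2
      rw [sub_zero]
      set q := s - ‖y‖ ^ 2 with hqd
      have q0 : 0 < q := by linarith
      have g1 : (R * e / 4) ^ 2 * Real.exp (2 * Γ * (R * d)) ≤ agG Γ q := by
        unfold agG
        rw [max_eq_left q0.le]
        have : R * e / 4 ≤ q := by nlinarith [mul_nonneg hR.le d0]
        have : R * d ≤ q := by nlinarith [mul_pos hR he]
        gcongr
      have g2 : (1:ℝ) ≤ (16 / (R ^ 2 * e ^ 2)) * D * agG Γ q := by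
        calc (1:ℝ) = (16 / (R ^ 2 * e ^ 2)) * D * ((R * e / 4) ^ 2 * Real.exp (2 * Γ * (R * d))) := by
              rw [hD, Real.exp_neg]
              field_simp
              norm_num
          _ ≤ _ := by gcongr
      have g3 : (a ^ 3)⁻¹ * pp a x y ^ 2 ≤ a⁻¹ := by
        calc _ ≤ (a ^ 3)⁻¹ * a ^ 2 := by
              gcongr
              · exact pp_nonneg _ _ _
              · exact pp_le a0.le _ _
          _ = _ := by field_simp
      calc _ ≤ ‖Ψ y‖ ^ 2 * a⁻¹ := by gcongr
        _ = (‖Ψ y‖ ^ 2 * a⁻¹) * 1 := by ring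
        _ ≤ (‖Ψ y‖ ^ 2 * a⁻¹) * ((16 / (R ^ 2 * e ^ 2)) * D * agG Γ q) := by gcongr
        _ = _ := by ring
    · rw [pp_zero hy]
      simpa using rhs0
  have hU : c00 * ‖Ψ x‖ ^ 2 ≤ (a⁻¹ * (16 / (R ^ 2 * e ^ 2)) * D) * (32 * Real.exp 2 * ε ^ 2 / β) := by
    refine hmv.trans ((setIntegral_mono_on i1 (i2.const_mul _) measB1 hcmp).trans ?_)
    rw [integral_const_mul]
    gcongr
  have hDle : D ≤ Real.exp (-(2 * Real.sqrt (Ω₀ ^ 2 * R / 512) * R * d ^ 2 / e ^ 2)) := by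
    rw [hD]
    apply Real.exp_le_exp.2
    apply neg_le_neg
    have k1 : Real.sqrt (Ω₀ ^ 2 * R / 512) * e ≤ Real.sqrt (β / 32) := by
      apply Real.le_sqrt_of_sq_le
      rw [mul_pow, Real.sq_sqrt (by positivity), hβ]
      have : e ^ 2 ≤ e := by nlinarith
      have := mul_le_mul_of_nonneg_left this (by positivity : 0 ≤ Ω₀ ^ 2 * R / 512)
      linarith
    have k2 : Real.sqrt (Ω₀ ^ 2 * R / 512) / e ^ 2 ≤ Γ := by
      rw [hΓ, ← heε, div_le_div_iff₀ (by positivity) (by positivity)]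
      have := mul_le_mul_of_nonneg_right k1 (sq_nonneg e)
      linarith
    set c := Real.sqrt (Ω₀ ^ 2 * R / 512)
    have c0 : 0 ≤ c := Real.sqrt_nonneg _
    calc 2 * c * R * d ^ 2 / e ^ 2 = 2 * R * (c / e ^ 2) * (d * d) := by ring
      _ ≤ 2 * R * Γ * (d * 1) := by gcongr
      _ = _ := by ring
  have hfin : ‖Ψ x‖ ^ 2 ≤ (131072 * Real.exp 2 / (R ^ 3 * Ω₀ ^ 2) / c00) * e * D := by
    have e1 : (a⁻¹ * (16 / (R ^ 2 * e ^ 2)) * D) * (32 * Real.exp 2 * ε ^ 2 / β) =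
        c00 * ((131072 * Real.exp 2 / (R ^ 3 * Ω₀ ^ 2) / c00) * e * D) := by
      rw [ha, hβ, ← heε]
      field_simp
      ring
    rw [e1] at hU
    exact le_of_mul_le_mul_left hU hc
  refine hfin.trans ?_
  gcongr

theorem stmt11 (Ω₀ : ℝ) (h : 4 / Real.sqrt π < Ω₀) :
    ∃ (C C' ε₀ : ℝ), 0 < C ∧ 0 < C' ∧ 0 < ε₀ ∧ ∀ ε : ℝ, 0 < ε → ε < ε₀ →
      ∀ Ψ : Pt → ℂ, IsGPMinimizer ε (Ω₀ / ε) Ψ →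
        ∀ x : Pt, ‖x‖ ≤ R0 Ω₀ - ε ^ ((1:ℝ)/3) →
          ‖Ψ x‖ ^ 2 ≤ C * ε ^ ((1:ℝ)/6) * Real.sqrt |Real.log ε| *
            Real.exp (-(C' * ((R0 Ω₀ - ε ^ ((1:ℝ)/3)) - ‖x‖) ^ 2 / ε ^ ((2:ℝ)/3))) := by
  obtain ⟨_, hR, hR1, hΩ⟩ := R0_sq_le h
  have hc := c00_pos
  obtain ⟨C, hC⟩ := tau_bd h
  have t1 : Tendsto (fun ε : ℝ => C * ε ^ ((1:ℝ)/24)) (nhdsWithin (0:ℝ) (Set.Ioi 0)) (nhds 0) := by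
    have c : Continuous (fun ε : ℝ => C * ε ^ ((1:ℝ)/24)) := by
      have : Continuous fun ε : ℝ => ε ^ ((1:ℝ)/24) := Real.continuous_rpow_const (by norm_num)
      fun_prop
    have := c.tendsto 0
    rw [Real.zero_rpow (by norm_num)] at this
    simp only [mul_zero] at this
    exact this.mono_left nhdsWithin_le_nhds
  have t2 := t1.eventually (gt_mem_nhds (by positivity : (0:ℝ) < Ω₀ ^ 2 * R0 Ω₀ / 16))
  have t3 : ∀ᶠ ε in nhdsWithin (0:ℝ) (Set.Ioi 0), ε < Real.exp (-1) :=
    nhdsWithin_le_nhds (gt_mem_nhds (Real.exp_pos _))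
  obtain ⟨ε₀, hε₀, hall⟩ := (mem_nhdsGT_iff_exists_Ioo_subset).1 (hC.and (t2.and t3))
  refine ⟨131072 * Real.exp 2 / (R0 Ω₀ ^ 3 * Ω₀ ^ 2) / c00, 2 * Real.sqrt (Ω₀ ^ 2 * R0 Ω₀ / 512) * R0 Ω₀, ε₀,
    by positivity, by positivity, hε₀, fun ε hε hlt Ψ hΨ x hx => ?_⟩
  obtain ⟨a1, a2, a3⟩ := hall ⟨hε, hlt⟩
  have hε1 : ε ≤ 1 := a3.le.trans (Real.exp_le_one_iff.2 (by norm_num))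
  have e0 : 0 < ε ^ ((1:ℝ)/3) := by positivity
  have e1 : ε ^ ((1:ℝ)/3) ≤ 1 := Real.rpow_le_one hε.le hε1 (by norm_num)
  have e3 : (ε ^ ((1:ℝ)/3)) ^ 3 = ε := by
    rw [← Real.rpow_natCast, ← Real.rpow_mul hε.le]; norm_num
  have e2 : ε ^ ((2:ℝ)/3) = (ε ^ ((1:ℝ)/3)) ^ 2 := by
    rw [← Real.rpow_natCast, ← Real.rpow_mul hε.le]; norm_num
  have e6 : ε ^ ((1:ℝ)/3) ≤ ε ^ ((1:ℝ)/6) := Real.rpow_le_rpow_of_exponent_ge hε hε1 (by norm_num)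
  have hlog : 1 ≤ Real.sqrt |Real.log ε| := by
    rw [Real.one_le_sqrt, le_abs]
    right
    have := (Real.log_lt_iff_lt_exp hε).2 a3
    linarith
  have hτ : tau ε Ω₀ Ψ ≤ Ω₀ ^ 2 * R0 Ω₀ * ε ^ ((1:ℝ)/3) / 16 := by
    refine (a1 Ψ hΨ).trans ?_
    have : ε ^ ((3:ℝ)/8) = ε ^ ((1:ℝ)/24) * ε ^ ((1:ℝ)/3) := by
      rw [← Real.rpow_add hε]; norm_num
    rw [this]
    have := mul_le_mul_of_nonneg_right a2.le e0.le
    linarith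
  have key := core e0 e1 e3 h hΨ hτ hx
  rw [e2]
  refine key.trans ?_
  rw [mul_assoc (131072 * Real.exp 2 / (R0 Ω₀ ^ 3 * Ω₀ ^ 2) / c00) (ε ^ ((1:ℝ)/6))]
  gcongr
  calc _ ≤ ε ^ ((1:ℝ)/6) := e6
    _ = ε ^ ((1:ℝ)/6) * 1 := by ring
    _ ≤ _ := by gcongr
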